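/- arXiv:2403.09992 — 2 statements merged into one kernel-verified Lean document; each statement's English description precedes it below -/
import Mathlib

section
/- Let X be a geodesic metric space with basepoint o, let G be a countable group acting on X by isometries containing two independent contracting isometries, and let μ be a non-elementary probability measure on G with L(μ) < ∞. Let η be a signed measure on G that is absolutely continuous with respect to μ (η(g) = 0 whenever μ(g) = 0) with ‖η‖_{0,1} < ∞, and let (μ_t)_{t∈[−1,1]} be a family of probability measures on G with ‖μ_t − μ − tη‖_{0,1} = o(t) as t → 0. Then: (a) the limit D := lim_{n→∞} (1/n) ∑_{i=1}^{n} ∑_{g∈G} (μ^{*(i−1)} * η * μ^{*(n−i)})(g) · d(o, g·o) exists, and (b) the function t ↦ l(μ_t) is differentiable at t = 0 with derivative equal to D. -/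
open Filter Topology Pointwise

/-- `f` parametrizes a geodesic from `x` to `y` by arclength on `[0, dist x y]`. -/
def IsGeodesicSegment {X : Type*} [MetricSpace X] (f : ℝ → X) (x y : X) : Prop :=
  f 0 = x ∧ f (dist x y) = y ∧
    ∀ s ∈ Set.Icc (0 : ℝ) (dist x y), ∀ t ∈ Set.Icc (0 : ℝ) (dist x y),
      dist (f s) (f t) = |s - t|

/-- `X` is a geodesic metric space: any two points are joined by a geodesic. -/
def IsGeodesicSpace (X : Type*) [MetricSpace X] : Prop :=
  ∀ x y : X, ∃ f : ℝ → X, IsGeodesicSegment f x y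

/-- Nearest-point projection of `x` to the set `A`. -/
def projSet {X : Type*} [MetricSpace X] (A : Set X) (x : X) : Set X :=
  {a ∈ A | dist x a = Metric.infDist x A}

/-- Nearest-point projection of the set `B` to the set `A`. -/
def projSetOf {X : Type*} [MetricSpace X] (A B : Set X) : Set X :=
  ⋃ x ∈ B, projSet A x

/-- A `K`-quasigeodesic indexed by `ℤ`. -/
def IsQuasigeodesicZ {X : Type*} [MetricSpace X] (K : ℝ) (γ : ℤ → X) : Prop :=
  ∀ s t : ℤ, |(s : ℝ) - (t : ℝ)| / K - K ≤ dist (γ s) (γ t) ∧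
    dist (γ s) (γ t) ≤ K * |(s : ℝ) - (t : ℝ)| + K

/-- A `K`-contracting axis indexed by `ℤ`: a `K`-quasigeodesic such that every geodesic
staying `K`-far from it has nearest-point projection of diameter `< K`. -/
def IsContractingAxisZ {X : Type*} [MetricSpace X] (K : ℝ) (γ : ℤ → X) : Prop :=
  IsQuasigeodesicZ K γ ∧
    ∀ (f : ℝ → X) (x y : X), IsGeodesicSegment f x y →
      (∀ t ∈ Set.Icc (0 : ℝ) (dist x y), K ≤ Metric.infDist (f t) (Set.range γ)) →
      EMetric.diam (projSetOf (Set.range γ) (f '' Set.Icc (0 : ℝ) (dist x y)))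
        < ENNReal.ofReal K

/-- The `ℤ`-orbit of the basepoint `o` under powers of `g`. -/
def zorbit {G X : Type*} [Group G] [MetricSpace X] [MulAction G X] (o : X) (g : G) : Set X :=
  Set.range fun i : ℤ => g ^ i • o

/-- `g` is a contracting isometry: its orbit map `i ↦ g^i • o` is a `K`-contracting axis
for some `K > 1`. -/
def IsContractingIsom {G X : Type*} [Group G] [MetricSpace X] [MulAction G X]
    (o : X) (g : G) : Prop :=
  ∃ K : ℝ, 1 < K ∧ IsContractingAxisZ K fun i : ℤ => g ^ i • o

/-- `g` and `h` are independent contracting isometries: both are contracting, and the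
nearest-point projections of each orbit to the other are bounded. -/
def IndependentPair {G X : Type*} [Group G] [MetricSpace X] [MulAction G X]
    (o : X) (g h : G) : Prop :=
  IsContractingIsom o g ∧ IsContractingIsom o h ∧
    Bornology.IsBounded (projSetOf (zorbit o g) (zorbit o h)) ∧
    Bornology.IsBounded (projSetOf (zorbit o h) (zorbit o g))

/-- `G` contains two independent contracting isometries of `X`. -/
def HasIndepContracting (G : Type*) {X : Type*} [Group G] [MetricSpace X] [MulAction G X]
    (o : X) : Prop :=
  ∃ g h : G, IndependentPair o g h

/-- `μ` is a probability measure on the countable group `G`. -/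
def IsProbMeasure {G : Type*} (μ : G → ℝ) : Prop :=
  (∀ g, 0 ≤ μ g) ∧ Summable μ ∧ ∑' g, μ g = 1

/-- Convolution of two (signed) measures on `G`. -/
noncomputable def conv {G : Type*} [Group G] (μ ν : G → ℝ) : G → ℝ :=
  fun g => ∑' h : G, μ h * ν (h⁻¹ * g)

/-- `n`-fold convolution power of `μ`, with `convPow μ 0` the point mass at the identity. -/
noncomputable def convPow {G : Type*} [Group G] (μ : G → ℝ) : ℕ → G → ℝ
  | 0 => ({1} : Set G).indicator fun _ => (1 : ℝ)
  | n + 1 => conv μ (convPow μ n)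

/-- First moment `L(μ) = ∑_g μ(g) d(o, g o)`. -/
noncomputable def firstMoment {G X : Type*} [Group G] [MetricSpace X] [MulAction G X]
    (o : X) (μ : G → ℝ) : ℝ :=
  ∑' g : G, μ g * dist o (g • o)

/-- `μ` has finite first moment. -/
def HasFiniteFirstMoment {G X : Type*} [Group G] [MetricSpace X] [MulAction G X]
    (o : X) (μ : G → ℝ) : Prop :=
  Summable fun g : G => μ g * dist o (g • o)

/-- The escape rate `l(μ) = lim_n L(μ^{*n})/n`; by subadditivity of `n ↦ L(μ^{*n})`
(Fekete), the limit equals the infimum. -/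
noncomputable def escapeRate {G X : Type*} [Group G] [MetricSpace X] [MulAction G X]
    (o : X) (μ : G → ℝ) : ℝ :=
  ⨅ n : ℕ, firstMoment o (convPow μ (n + 1)) / (n + 1 : ℝ)

/-- `μ` is non-elementary: the sub-semigroup generated by its support contains
two independent contracting isometries. -/
def NonElementary {G X : Type*} [Group G] [MetricSpace X] [MulAction G X]
    (o : X) (μ : G → ℝ) : Prop :=
  ∃ g h : G, g ∈ Subsemigroup.closure {x : G | 0 < μ x} ∧
    h ∈ Subsemigroup.closure {x : G | 0 < μ x} ∧ IndependentPair o g h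

/-- The norm `‖η‖₀ + ‖η‖₁ = ∑_g (1 + d(o, g o))|η(g)|`, valued in `ℝ≥0∞` so that
finiteness is recorded. -/
noncomputable def enorm01 {G X : Type*} [Group G] [MetricSpace X] [MulAction G X]
    (o : X) (η : G → ℝ) : ENNReal :=
  ∑' g : G, ENNReal.ofReal ((1 + dist o (g • o)) * |η g|)

/-- `‖F t‖_{0,1} = o(t)` as `t → 0`. -/
def IsLittleO01 {G X : Type*} [Group G] [MetricSpace X] [MulAction G X]
    (o : X) (F : ℝ → G → ℝ) : Prop :=
  ∀ ε : ℝ, 0 < ε → ∃ δ : ℝ, 0 < δ ∧ ∀ t : ℝ, |t| < δ →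
    enorm01 o (F t) ≤ ENNReal.ofReal (ε * |t|)



/-- Gromov product based at `o`. -/
noncomputable def gpr {X : Type*} [MetricSpace X] (o p q : X) : ℝ :=
  (dist o p + dist o q - dist p q) / 2

lemma gpr_comm {X : Type*} [MetricSpace X] (o p q : X) : gpr o p q = gpr o q p := by
  unfold gpr; rw [dist_comm p q]; ring

lemma gpr_base {X : Type*} [MetricSpace X] (o o' p q : X) :
    gpr o p q ≤ gpr o' p q + dist o o' := by
  unfold gpr
  have h1 := dist_triangle o o' p
  have h2 := dist_triangle o o' q
  linarith

/-- `γ i` is a nearest point to `x`. -/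
def IsNr {X : Type*} [MetricSpace X] (γ : ℤ → X) (x : X) (i : ℤ) : Prop :=
  ∀ j, dist x (γ i) ≤ dist x (γ j)

lemma isNr_exists {X : Type*} [MetricSpace X] {K : ℝ} (hK : 1 < K) {γ : ℤ → X}
    (hq : IsQuasigeodesicZ K γ) (x : X) : ∃ i, IsNr γ x i := by
  have hK0 : 0 < K := by linarith
  set T : Set ℤ := {i | dist x (γ i) ≤ dist x (γ 0)} with hT
  have hfin : T.Finite := by
    set B : ℝ := K * (2 * dist x (γ 0) + K) with hB
    apply Set.Finite.subset (Set.finite_Icc (-⌈B⌉) (⌈B⌉))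
    intro i hi
    have h1 := (hq i 0).1
    have h2 : dist (γ i) (γ 0) ≤ 2 * dist x (γ 0) := by
      have := dist_triangle_left (γ i) (γ 0) x
      have hi' : dist x (γ i) ≤ dist x (γ 0) := hi
      linarith
    simp only [Int.cast_zero, sub_zero] at h1
    have h3 : |(i : ℝ)| / K ≤ 2 * dist x (γ 0) + K := by linarith
    have h4 : |(i : ℝ)| ≤ B := by
      rw [div_le_iff₀ hK0] at h3; rw [hB]; linarith
    have h5 : |(i : ℝ)| ≤ (⌈B⌉ : ℝ) := h4.trans (Int.le_ceil B)
    have h6 : |i| ≤ ⌈B⌉ := by exact_mod_cast h5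
    exact abs_le.mp h6
  have h0T : (0:ℤ) ∈ T := le_refl (dist x (γ 0))
  have hne : T.Nonempty := ⟨0, h0T⟩
  obtain ⟨i, hi, hmin⟩ := Set.exists_min_image T (fun i => dist x (γ i)) hfin hne
  refine ⟨i, fun j => ?_⟩
  by_cases hj : j ∈ T
  · exact hmin j hj
  · have : ¬ dist x (γ j) ≤ dist x (γ 0) := hj
    have h0 := hmin 0 h0T
    push Not at this
    exact h0.trans this.le

lemma IsNr.infDist {X : Type*} [MetricSpace X] {γ : ℤ → X} {x : X} {i : ℤ} (h : IsNr γ x i) :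
    dist x (γ i) = Metric.infDist x (Set.range γ) := by
  apply le_antisymm
  · rw [Metric.le_infDist (Set.range_nonempty γ)]
    rintro _ ⟨j, rfl⟩
    exact h j
  · exact Metric.infDist_le_dist_of_mem ⟨i, rfl⟩

lemma IsNr.mem {X : Type*} [MetricSpace X] {γ : ℤ → X} {x : X} {i : ℤ} (h : IsNr γ x i) :
    γ i ∈ projSet (Set.range γ) x := ⟨⟨i, rfl⟩, h.infDist⟩

lemma contr_close {X : Type*} [MetricSpace X] {K : ℝ} {γ : ℤ → X}
    (hc : IsContractingAxisZ K γ) (f : ℝ → X) (x y : X) (hf : IsGeodesicSegment f x y)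
    (hfar : ∀ t ∈ Set.Icc (0 : ℝ) (dist x y), K ≤ Metric.infDist (f t) (Set.range γ))
    {i j : ℤ} (hi : IsNr γ x i) (hj : IsNr γ y j) : dist (γ i) (γ j) < K := by
  have h := hc.2 f x y hf hfar
  have hx : x ∈ f '' Set.Icc (0 : ℝ) (dist x y) :=
    ⟨0, ⟨le_refl _, dist_nonneg⟩, hf.1⟩
  have hy : y ∈ f '' Set.Icc (0 : ℝ) (dist x y) :=
    ⟨dist x y, ⟨dist_nonneg, le_refl _⟩, hf.2.1⟩
  have m1 : γ i ∈ projSetOf (Set.range γ) (f '' Set.Icc (0 : ℝ) (dist x y)) :=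
    Set.mem_biUnion hx hi.mem
  have m2 : γ j ∈ projSetOf (Set.range γ) (f '' Set.Icc (0 : ℝ) (dist x y)) :=
    Set.mem_biUnion hy hj.mem
  have h2 : edist (γ i) (γ j) < ENNReal.ofReal K :=
    lt_of_le_of_lt (Metric.edist_le_ediam_of_mem m1 m2) h
  rw [edist_dist] at h2
  exact (ENNReal.ofReal_lt_ofReal_iff_of_nonneg dist_nonneg).1 h2

lemma nr_close {X : Type*} [MetricSpace X] {K : ℝ} (hK : 1 < K) {γ : ℤ → X}
    (hc : IsContractingAxisZ K γ) {x : X}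
    {i j : ℤ} (hi : IsNr γ x i) (hj : IsNr γ x j) : dist (γ i) (γ j) ≤ 2 * K := by
  by_cases h : K ≤ Metric.infDist x (Set.range γ)
  · have := contr_close hc (fun _ => x) x x ⟨rfl, rfl, by
      intro s hs t ht
      simp only [dist_self, Set.Icc_self, Set.mem_singleton_iff] at hs ht
      subst hs; subst ht; simp⟩ (fun _ _ => h) hi hj
    linarith
  · push Not at h
    have h1 := hi.infDist
    have h2 := hj.infDist
    have := dist_triangle_left (γ i) (γ j) x
    linarith

lemma idx_le {X : Type*} [MetricSpace X] {K : ℝ} (hK : 1 < K) {γ : ℤ → X}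
    (hq : IsQuasigeodesicZ K γ) {i j : ℤ} {r : ℝ} (h : dist (γ i) (γ j) ≤ r) :
    |(i : ℝ) - j| ≤ K * (r + K) := by
  have h1 := (hq i j).1
  have h3 : |(i : ℝ) - j| / K ≤ r + K := by linarith
  rw [div_le_iff₀ (by linarith)] at h3; linarith

lemma passes {X : Type*} [MetricSpace X] (hgeo : IsGeodesicSpace X) {K : ℝ} (hK : 1 < K)
    {γ : ℤ → X} (hc : IsContractingAxisZ K γ) {y z : X} {i j : ℤ}
    (hi : IsNr γ y i) (hj : IsNr γ z j) (hij : 2 * K ^ 2 < |(i : ℝ) - j|) :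
    ∃ m : X, dist y z = dist y m + dist m z ∧ dist m (γ i) ≤ 2 * K := by
  obtain ⟨f, hf⟩ := hgeo y z
  set φ : ℝ → ℝ := fun t => Metric.infDist (f t) (Set.range γ) with hφ
  set T := dist y z with hTdef
  have hfc : ContinuousOn f (Set.Icc 0 T) := by
    apply LipschitzOnWith.continuousOn (K := 1)
    apply LipschitzOnWith.of_dist_le_mul
    intro s hs t ht
    rw [hf.2.2 s hs t ht, Real.dist_eq]; simp
  have hφc : ContinuousOn φ (Set.Icc 0 T) :=
    (Metric.continuous_infDist_pt _).comp_continuousOn hfc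
  by_cases h0 : φ 0 ≤ K
  · refine ⟨y, by simp [hTdef], ?_⟩
    rw [hi.infDist]
    have : φ 0 = Metric.infDist y (Set.range γ) := by simp [hφ, hf.1]
    linarith
  push Not at h0
  by_cases hall : ∀ t ∈ Set.Icc (0 : ℝ) T, K ≤ φ t
  · exfalso
    have h1 := contr_close hc f y z hf hall hi hj
    have h2 := idx_le hK hc.1 h1.le
    nlinarith
  push Not at hall
  obtain ⟨t0, ht0, ht0'⟩ := hall
  have hcomp : IsCompact (Set.Icc (0 : ℝ) T ∩ φ ⁻¹' Set.Iic K) := by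
    apply isCompact_Icc.of_isClosed_subset _ Set.inter_subset_left
    exact hφc.preimage_isClosed_of_isClosed isClosed_Icc isClosed_Iic
  obtain ⟨t1, ⟨ht1, ht1K⟩, hmin⟩ := hcomp.exists_isLeast ⟨t0, ht0, ht0'.le⟩
  have ht1K' : φ t1 ≤ K := ht1K
  have hbefore : ∀ t ∈ Set.Icc (0 : ℝ) T, t < t1 → K < φ t := by
    intro t ht htlt
    by_contra hcon
    push Not at hcon
    have := hmin ⟨ht, hcon⟩
    linarith
  have ht1pos : 0 < t1 := by
    rcases eq_or_lt_of_le ht1.1 with h | h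
    · exfalso; rw [← h] at ht1K'; linarith
    · exact h
  have hat : K ≤ φ t1 := by
    by_contra hcon
    push Not at hcon
    have hIVT := intermediate_value_Icc' ht1.1 (f := φ)
      (hφc.mono (Set.Icc_subset_Icc_right ht1.2))
    obtain ⟨s, hs, hsK⟩ := hIVT ⟨hcon.le, h0.le⟩
    rcases eq_or_lt_of_le hs.2 with h | h
    · rw [h] at hsK; linarith
    · have := hbefore s ⟨hs.1, hs.2.trans ht1.2⟩ h
      linarith
  have hz : (0:ℝ) ∈ Set.Icc (0 : ℝ) T := ⟨le_refl _, dist_nonneg⟩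
  have hTT : T ∈ Set.Icc (0 : ℝ) T := ⟨dist_nonneg, le_refl _⟩
  have hd1 : dist y (f t1) = t1 := by
    have := hf.2.2 0 hz t1 ht1
    rw [hf.1] at this
    rw [this]; simp [abs_of_pos ht1pos]
  have hd2 : dist (f t1) z = T - t1 := by
    have := hf.2.2 t1 ht1 T hTT
    rw [hf.2.1] at this
    rw [this, abs_sub_comm, abs_of_nonneg (by linarith [ht1.2])]
  obtain ⟨p1, hp1⟩ := isNr_exists hK hc.1 (f t1)
  have hseg : IsGeodesicSegment f y (f t1) := by
    refine ⟨hf.1, by rw [hd1], ?_⟩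
    rw [hd1]
    intro s hs t ht
    exact hf.2.2 s ⟨hs.1, hs.2.trans ht1.2⟩ t ⟨ht.1, ht.2.trans ht1.2⟩
  have h1 := contr_close hc f y (f t1) hseg (by
    rw [hd1]; intro t ht
    rcases eq_or_lt_of_le ht.2 with h | h
    · rw [h]; exact hat
    · exact (hbefore t ⟨ht.1, ht.2.trans ht1.2⟩ h).le) hi hp1
  refine ⟨f t1, by rw [hd1, hd2]; ring, ?_⟩
  have h2 : dist (f t1) (γ p1) ≤ K := by rw [hp1.infDist]; exact ht1K'
  have h3 := dist_triangle_right (f t1) (γ i) (γ p1)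
  linarith

lemma gpr_bound {X : Type*} [MetricSpace X] (hgeo : IsGeodesicSpace X) {K : ℝ} (hK : 1 < K)
    {γ : ℤ → X} (hc : IsContractingAxisZ K γ) (W : ℝ) {y z : X} {i j : ℤ}
    (hi : IsNr γ y i) (hj : IsNr γ z j) (hW : |(i : ℝ)| ≤ W)
    (hij : 2 * K ^ 2 < |(i : ℝ) - j|) : gpr (γ 0) y z ≤ 2 * K + (K * W + K) := by
  obtain ⟨m, hm1, hm2⟩ := passes hgeo hK hc hi hj hij
  have h1 := gpr_base (γ 0) m y z
  have h2 : gpr m y z = 0 := by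
    unfold gpr; rw [hm1, dist_comm m y]; ring
  have h3 := dist_triangle_right (γ 0) m (γ i)
  have h4 := (hc.1 0 i).2
  simp only [Int.cast_zero, zero_sub, abs_neg] at h4
  have h5 : K * |(i : ℝ)| ≤ K * W := by gcongr
  linarith

lemma isNr_smul {G X : Type*} [Group G] [MetricSpace X] [MulAction G X] (o : X)
    (hiso : ∀ g : G, Isometry fun x : X => g • x) (b : G) (n : ℤ) (x : X) (i : ℤ)
    (h : IsNr (fun i : ℤ => b ^ i • o) x i) :
    IsNr (fun i : ℤ => b ^ i • o) (b ^ n • x) (n + i) := by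
  intro j
  have h1 : ∀ k : ℤ, dist (b ^ n • x) (b ^ (n + k) • o) = dist x (b ^ k • o) := by
    intro k
    rw [zpow_add, mul_smul]
    exact (hiso (b ^ n)).dist_eq _ _
  have h2 := h (j - n)
  have h3 := h1 (j - n)
  rw [add_sub_cancel] at h3
  simp only at h2 ⊢
  rw [h1, h3]; exact h2

/-- Half of the independence estimate. -/
lemma indep_half {G X : Type*} [Group G] [MetricSpace X] [MulAction G X] (o : X)
    (hgeo : IsGeodesicSpace X) (a b : G) (Ka Kb : ℝ) (hKa : 1 < Ka) (hKb : 1 < Kb)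
    (ha : IsContractingAxisZ Ka fun i : ℤ => a ^ i • o)
    (hb : IsContractingAxisZ Kb fun i : ℤ => b ^ i • o)
    (hbd : Bornology.IsBounded (projSetOf (zorbit o b) (zorbit o a))) :
    ∃ c c' : ℝ, 0 ≤ c ∧ 0 ≤ c' ∧ ∀ (x : X) (i j : ℤ), IsNr (fun i : ℤ => b ^ i • o) x i →
      IsNr (fun i : ℤ => a ^ i • o) x j → c < |(i : ℝ)| → |(j : ℝ)| ≤ c' := by
  obtain ⟨r, hr⟩ := hbd.subset_closedBall o
  have hr' : ∀ (i j : ℤ), IsNr (fun i : ℤ => b ^ i • o) (a ^ j • o) i →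
      |(i : ℝ)| ≤ Kb * (r + Kb) := by
    intro i j h
    have hm : (b ^ i • o) ∈ projSetOf (zorbit o b) (zorbit o a) :=
      Set.mem_biUnion (x := a ^ j • o) ⟨j, rfl⟩ h.mem
    have h1 : dist (b ^ i • o) o ≤ r := hr hm
    have := idx_le (i := i) (j := 0) hKb hb.1 (r := r) (by simpa using h1)
    simpa using this
  set c1 := Kb * (r + Kb)
  set A := 2 * Kb + (Kb * c1 + Kb)
  refine ⟨max 0 (c1 + 2 * Kb ^ 2), max 0 (Ka * (2 * A + Ka)), le_max_left _ _, le_max_left _ _, ?_⟩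
  intro x i j hi hj hlt
  obtain ⟨k, hk⟩ := isNr_exists hKb hb.1 (a ^ j • o)
  have hk1 := hr' k j hk
  have hlt' : c1 + 2 * Kb ^ 2 < |(i : ℝ)| := lt_of_le_of_lt (le_max_right _ _) hlt
  have hsep : 2 * Kb ^ 2 < |(k : ℝ) - i| := by
    have := abs_sub_abs_le_abs_sub (i : ℝ) k
    rw [abs_sub_comm] at this
    linarith
  have hg := gpr_bound hgeo hKb hb c1 hk hi hk1 hsep
  have h0 : dist x (a ^ j • o) ≤ dist x (a ^ (0 : ℤ) • o) := hj 0
  simp only [zpow_zero, one_smul] at h0 hg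
  have hd : dist (a ^ j • o) o ≤ 2 * A := by
    unfold gpr at hg
    rw [dist_comm (a ^ j • o) x, dist_comm o x, dist_comm o] at hg
    linarith
  have := idx_le (i := j) (j := 0) hKa ha.1 (r := 2 * A) (by simpa using hd)
  exact le_max_of_le_right (by simpa using this)

/-- Summary of the geometric input. -/
theorem geometry {G X : Type*} [Group G] [MetricSpace X] [MulAction G X] (o : X)
    (hgeo : IsGeodesicSpace X) (hiso : ∀ g : G, Isometry fun x : X => g • x)
    (a b : G) (hab : IndependentPair o a b) :
    ∃ (β : X → ℤ) (e E c : ℝ) (L : ℕ), 0 ≤ e ∧ 0 ≤ E ∧ 0 ≤ c ∧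
      (∀ (n : ℤ) (x : X), |(β (b ^ n • x) : ℝ) - β x - n| ≤ e) ∧
      (∀ W : ℝ, ∃ A : ℝ, ∀ y z : X, A < gpr o y z → |(β y : ℝ)| ≤ W →
        |(β y : ℝ) - β z| ≤ E) ∧
      (∀ x : X, c < |(β x : ℝ)| → |(β ((a ^ L)⁻¹ • x) : ℝ)| ≤ c) := by
  obtain ⟨⟨Ka, hKa, ha⟩, ⟨Kb, hKb, hb⟩, hp1, hp2⟩ := hab
  choose β hβ using isNr_exists hKb hb.1
  choose α hα using isNr_exists hKa ha.1
  obtain ⟨c1, c1', hc1, hc1', h1⟩ := indep_half o hgeo a b Ka Kb hKa hKb ha hb hp2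
  obtain ⟨c2, c2', hc2, hc2', h2⟩ := indep_half o hgeo b a Kb Ka hKb hKa hb ha hp1
  obtain ⟨L, hL⟩ := exists_nat_gt (c2 + c1' + Ka * (2 * Ka + Ka))
  refine ⟨β, Kb * (2 * Kb + Kb), 2 * Kb ^ 2, max c1 c2', L, by positivity, by positivity,
    le_max_of_le_left hc1, ?_, ?_, ?_⟩
  · intro n x
    have hn := isNr_smul o hiso b n x _ (hβ x)
    have := idx_le hKb hb.1 (nr_close hKb hb (hβ (b ^ n • x)) hn)
    push_cast at this
    convert this using 2; ring
  · intro W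
    refine ⟨2 * Kb + (Kb * W + Kb), fun y z hlt hW => ?_⟩
    by_contra hcon
    push Not at hcon
    have := gpr_bound hgeo hKb hb W (hβ y) (hβ z) hW hcon
    simp only [zpow_zero, one_smul] at this
    linarith
  · intro x hx
    have hax := h1 x _ _ (hβ x) (hα x) (lt_of_le_of_lt (le_max_left _ _) hx)
    have hinv : (a ^ L)⁻¹ = a ^ (-(L : ℤ)) := by simp
    rw [hinv]
    have hn := isNr_smul o hiso a (-(L : ℤ)) x _ (hα x)
    have h3 := idx_le hKa ha.1 (nr_close hKa ha (hα (a ^ (-(L : ℤ)) • x)) hn)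
    push_cast at h3
    apply le_max_of_le_right
    apply h2 _ _ _ (hα _) (hβ _)
    have h4 := abs_le.1 h3
    have h5 := abs_le.1 hax
    rw [lt_abs]; right
    linarith [h4.2, h5.2]


section words

/-- Iterated expectation over words of length `n`; the head of the list is the last step. -/
noncomputable def EE {G : Type*} (κ : G → ENNReal) : ℕ → (List G → ENNReal) → ENNReal
  | 0, F => F []
  | n + 1, F => ∑' g, κ g * EE κ n (fun l => F (g :: l))

lemma EE_mono {G : Type*} (κ : G → ENNReal) (n : ℕ) : ∀ {F F' : List G → ENNReal},
    (∀ l, F l ≤ F' l) → EE κ n F ≤ EE κ n F' := by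
  induction n with
  | zero => intro F F' h; exact h []
  | succ n ih =>
    intro F F' h
    exact ENNReal.tsum_le_tsum fun g => mul_le_mul_right (ih fun l => h _) _

lemma EE_add {G : Type*} (κ : G → ENNReal) (n : ℕ) : ∀ (F F' : List G → ENNReal),
    EE κ n (fun l => F l + F' l) = EE κ n F + EE κ n F' := by
  induction n with
  | zero => intro F F'; rfl
  | succ n ih =>
    intro F F'
    simp only [EE, ih, mul_add, ENNReal.tsum_add]

lemma EE_zero {G : Type*} (κ : G → ENNReal) (n : ℕ) : EE κ n (fun _ => 0) = 0 := by
  induction n with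
  | zero => rfl
  | succ n ih => simp [EE, ih]

lemma EE_sum {G : Type*} (κ : G → ENNReal) (n : ℕ) {ι : Type*} (s : Finset ι)
    (F : ι → List G → ENNReal) :
    EE κ n (fun l => ∑ i ∈ s, F i l) = ∑ i ∈ s, EE κ n (F i) := by
  classical
  induction s using Finset.induction_on with
  | empty => simp [EE_zero]
  | insert a s ha ih =>
    simp only [Finset.sum_insert ha, EE_add, ih]

lemma EE_smul {G : Type*} (κ : G → ENNReal) (n : ℕ) (c : ENNReal) :
    ∀ (F : List G → ENNReal), EE κ n (fun l => c * F l) = c * EE κ n F := by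
  induction n with
  | zero => intro F; rfl
  | succ n ih =>
    intro F
    simp only [EE, ih, ← ENNReal.tsum_mul_left]
    congr 1; ext g; ring

variable {G X : Type*} [Group G] [MetricSpace X] [MulAction G X]

/-- Product of a word (head = last step). -/
def uw : List G → G
  | [] => 1
  | g :: l => uw l * g

/-- Total length of a word. -/
noncomputable def Rw (o : X) : List G → ℝ
  | [] => 0
  | g :: l => Rw o l + dist o (g • o)

lemma nn_mul (o : X) (hiso : ∀ g : G, Isometry fun x : X => g • x) (g h : G) :
    dist o ((g * h) • o) ≤ dist o (g • o) + dist o (h • o) := by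
  have h1 := dist_triangle o (g • o) ((g * h) • o)
  rw [mul_smul] at h1 ⊢
  have h2 : dist (g • o) (g • h • o) = dist o (h • o) := (hiso g).dist_eq _ _
  linarith

lemma nn_inv (o : X) (hiso : ∀ g : G, Isometry fun x : X => g • x) (g : G) :
    dist o (g⁻¹ • o) = dist o (g • o) := by
  have h2 : dist (g • o) (g • g⁻¹ • o) = dist o (g⁻¹ • o) := (hiso g).dist_eq _ _
  rw [← h2, smul_inv_smul, dist_comm]

lemma Rw_nonneg (o : X) (l : List G) : 0 ≤ Rw o l := by
  induction l with
  | nil => exact le_refl _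
  | cons g l ih => exact add_nonneg ih dist_nonneg

lemma uw_le_Rw (o : X) (hiso : ∀ g : G, Isometry fun x : X => g • x) (l : List G) :
    dist o (uw l • o) ≤ Rw o l := by
  induction l with
  | nil => simp [uw, Rw]
  | cons g l ih =>
    have := nn_mul o hiso (uw l) g
    simp only [uw, Rw]; linarith

/-- The class of sets of words used in the L2 argument. -/
def Cls (o : X) (β : X → ℤ) (E W : ℝ) (y : X) (B : Set (List G)) : Prop :=
  ∀ l ∈ B, ∀ l' ∈ B, ∀ h : G, dist o (h • o) ≤ Rw o l → dist o (h • o) ≤ Rw o l' →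
    |(β (h⁻¹ • (uw l)⁻¹ • y) : ℝ)| ≤ W →
    |(β (h⁻¹ • (uw l)⁻¹ • y) : ℝ) - β (h⁻¹ • (uw l')⁻¹ • y)| ≤ 2 * E

lemma Cls.cons {o : X} {β : X → ℤ} {E W : ℝ} {y : X} {B : Set (List G)}
    (hiso : ∀ g : G, Isometry fun x : X => g • x) (hB : Cls o β E W y B) (g : G) :
    Cls o β E W y {l | g :: l ∈ B} := by
  intro l hl l' hl' h h1 h2 h3
  have key : ∀ l : List G, (g⁻¹ * h)⁻¹ • (uw (g :: l))⁻¹ • y = h⁻¹ • (uw l)⁻¹ • y := by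
    intro l
    simp only [uw, ← mul_smul]
    congr 1; group
  have hn := nn_mul o hiso g⁻¹ h
  rw [nn_inv o hiso] at hn
  have := hB _ hl _ hl' (g⁻¹ * h) (by simp only [Rw]; linarith) (by simp only [Rw]; linarith)
  rw [key, key] at this
  exact this h3

lemma Cls.empty {o : X} {β : X → ℤ} {E W : ℝ} {y : X} :
    Cls o β E W y (∅ : Set (List G)) := by
  intro l hl; exact absurd hl (by simp)

lemma Cls_gpr {o : X} {β : X → ℤ} {E W A : ℝ} (y z : X)
    (hiso : ∀ g : G, Isometry fun x : X => g • x) (hE : 0 ≤ E) 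
    (hA : ∀ y z : X, A < gpr o y z → |(β y : ℝ)| ≤ W + E → |(β y : ℝ) - β z| ≤ E) :
    Cls o β E W y {l : List G | A + 2 * Rw o l < gpr o y (uw l • z)} := by
  have key : ∀ l : List G, ∀ h : G, A + 2 * Rw o l < gpr o y (uw l • z) →
      dist o (h • o) ≤ Rw o l → A < gpr o (h⁻¹ • (uw l)⁻¹ • y) (h⁻¹ • z) := by
    intro l h hl hh
    have hi : ∀ (g : G) (p q r : X), gpr (g • p) (g • q) (g • r) = gpr p q r := by
      intro g p q r
      have := fun a b => (hiso g).dist_eq a b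
      simp only [gpr, this]
    have h1 := hi (uw l * h) ((uw l * h)⁻¹ • o) (h⁻¹ • (uw l)⁻¹ • y) (h⁻¹ • z)
    rw [smul_inv_smul] at h1
    simp only [mul_smul, smul_inv_smul] at h1
    have h2 := gpr_base ((uw l * h)⁻¹ • o) o (h⁻¹ • (uw l)⁻¹ • y) (h⁻¹ • z)
    rw [dist_comm, nn_inv o hiso] at h2
    have h3 := nn_mul o hiso (uw l) h
    have h4 := uw_le_Rw o hiso l
    linarith
  intro l hl l' hl' h h1 h2 h3
  have a1 := key l h hl h1
  have a2 := key l' h hl' h2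
  have b1 := hA _ _ a1 (by linarith)
  rw [gpr_comm] at a2
  have b3 : |(β (h⁻¹ • z) : ℝ)| ≤ W + E := by
    have := abs_sub_abs_le_abs_sub (β (h⁻¹ • z) : ℝ) (β (h⁻¹ • (uw l)⁻¹ • y))
    rw [abs_sub_comm] at this
    linarith
  have b2 := hA _ _ a2 b3
  calc _ ≤ _ := abs_sub_le _ (β (h⁻¹ • z) : ℝ) _
    _ ≤ 2 * E := by linarith

end words


section L2
set_option linter.unusedSectionVars false
variable {G X : Type*} [Group G] [MetricSpace X] [MulAction G X]

/-- The Schottky letters. -/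
def lett (a b : G) (L k : ℕ) (i : Fin 16) : G :=
  b ^ (k * (i : ℕ)) * a ^ L * b ^ (k * (16 - (i : ℕ)))

lemma pingpong (a b : G) (L k : ℕ) (β : X → ℤ) (e c : ℝ)
    (h1 : ∀ (n : ℤ) (x : X), |(β (b ^ n • x) : ℝ) - β x - n| ≤ e)
    (h3 : ∀ x : X, c < |(β x : ℝ)| → |(β ((a ^ L)⁻¹ • x) : ℝ)| ≤ c) (i : Fin 16) (x : X)
    (hx : ¬ |(β x : ℝ) - k * (i : ℕ)| ≤ c + e) :
    |(β ((lett a b L k i)⁻¹ • x) : ℝ) + k * (16 - (i : ℕ))| ≤ c + e := by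
  push Not at hx
  have e1 := h1 (-((k * (i : ℕ) : ℕ) : ℤ)) x
  set x1 := b ^ (-((k * (i : ℕ) : ℕ) : ℤ)) • x with hx1
  have e2 : c < |(β x1 : ℝ)| := by
    have := abs_sub_abs_le_abs_sub ((β x : ℝ) - k * (i : ℕ)) (β x1)
    rw [abs_sub_comm _ (β x1 : ℝ)] at this
    push_cast at e1
    have h5 : (β x1 : ℝ) - ((β x : ℝ) - k * (i : ℕ)) = β x1 - β x - -(k * (i : ℕ)) := by ring
    rw [h5] at this
    linarith
  have e3 := h3 x1 e2
  set x2 := (a ^ L)⁻¹ • x1 with hx2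
  have e4 := h1 (-((k * (16 - (i : ℕ)) : ℕ) : ℤ)) x2
  have e5 : (lett a b L k i)⁻¹ • x = b ^ (-((k * (16 - (i : ℕ)) : ℕ) : ℤ)) • x2 := by
    rw [hx2, hx1, ← mul_smul, ← mul_smul, lett, zpow_neg, zpow_neg, zpow_natCast, zpow_natCast]
    congr 1; group
  rw [e5]
  have hi : (i : ℕ) ≤ 16 := i.2.le
  push_cast [Nat.cast_sub hi] at e4
  have := abs_add_le (β x2 : ℝ)
    ((β (b ^ (-((k * (16 - (i : ℕ)) : ℕ) : ℤ)) • x2) : ℝ) - β x2 - -(k * (16 - (i : ℕ))))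
  push_cast [Nat.cast_sub hi] at this ⊢
  refine le_trans (le_of_eq ?_) (this.trans (by linarith))
  congr 1; ring

/-- Weighted sum of indicators. -/
noncomputable def wsum {ι : Type} [Fintype ι] (B : ι → Set (List G)) (h : ι → NNReal)
    (l : List G) : ENNReal := ∑ i, (B i).indicator (fun _ => (h i : ENNReal)) l

lemma idx_eq {k : ℕ} {r : ℝ} (hk : r < k) {i j : Fin 16}
    (h : |(k : ℝ) * (i : ℕ) - k * (j : ℕ)| ≤ r) : i = j := by
  have hk0 : (0:ℝ) < k := lt_of_le_of_lt ((abs_nonneg _).trans h) hk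
  rw [← mul_sub, abs_mul, abs_of_pos hk0] at h
  have h2 : |((i : ℕ) : ℝ) - (j : ℕ)| < 1 := by
    by_contra hc
    push Not at hc
    nlinarith
  have h3 : |((i : ℕ) : ℤ) - (j : ℕ)| < 1 := by exact_mod_cast h2
  rw [Int.abs_lt_one_iff] at h3
  ext; omega

set_option maxHeartbeats 1600000 in
theorem L2lemma (o : X) (hiso : ∀ g : G, Isometry fun x : X => g • x)
    (a b : G) (L k : ℕ) (β : X → ℤ) (e E c : ℝ) (he : 0 ≤ e) (hE : 0 ≤ E) (hc : 0 ≤ c)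
    (h1 : ∀ (n : ℤ) (x : X), |(β (b ^ n • x) : ℝ) - β x - n| ≤ e)
    (h3 : ∀ x : X, c < |(β x : ℝ)| → |(β ((a ^ L)⁻¹ • x) : ℝ)| ≤ c)
    (hk : 2 * (c + e) + 2 * E < k) (y : X)
    (κ κ' : G → ENNReal) (α ρ : ENNReal)
    (hκ : ∀ F : G → ENNReal,
      ∑' g, κ g * F g = ∑' g, κ' g * F g + α * ∑ i, F (lett a b L k i))
    (hρ : ∑' g, κ' g + 8 * α ≤ ρ) (hκ1 : ∑' g, κ' g + 16 * α ≤ 1) (j : ℕ) :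
    ∀ (ι : Type) [Fintype ι] (B : ι → Set (List G)) (h : ι → NNReal) (H : NNReal),
      (∀ i, Cls o β E (16 * k + c + e) y (B i)) → Pairwise (fun i i' => Disjoint (B i) (B i')) →
      ∑ i, h i ^ 2 ≤ H ^ 2 → EE κ j (wsum B h) ≤ ρ ^ j * H := by
  classical
  induction j with
  | zero =>
    intro ι _ B h H hB hd hH
    simp only [EE, pow_zero, one_mul, wsum]
    by_cases hex : ∃ i, [] ∈ B i
    · obtain ⟨i, hi⟩ := hex
      rw [Finset.sum_eq_single i]
      · rw [Set.indicator_of_mem hi]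
        have : h i ^ 2 ≤ H ^ 2 :=
          (Finset.single_le_sum (f := fun i => h i ^ 2) (fun _ _ => zero_le) (Finset.mem_univ i)).trans hH
        have := (pow_le_pow_iff_left₀ zero_le zero_le two_ne_zero).1 this
        exact_mod_cast this
      · intro i' _ hne
        rw [Set.indicator_of_notMem]
        exact fun hi' => Set.disjoint_left.1 (hd hne) hi' hi
      · simp
    · push Not at hex
      rw [Finset.sum_eq_zero]
      · exact zero_le
      · intro i _; exact Set.indicator_of_notMem (hex i) _
  | succ j ih =>
    intro ι _ B h H hB hd hH
    set s := lett a b L k with hs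
    have hdis : ∀ g, Pairwise fun i i' => Disjoint {l | g :: l ∈ B i} {l | g :: l ∈ B i'} := by
      intro g i i' hne
      rw [Set.disjoint_left]
      exact fun l hl hl' => Set.disjoint_left.1 (hd hne) hl hl'
    have hcons : ∀ g, (fun l => wsum B h (g :: l)) = wsum (fun i => {l | g :: l ∈ B i}) h := by
      intro g; ext l; simp only [wsum]
      refine Finset.sum_congr rfl fun i _ => ?_
      by_cases hm : g :: l ∈ B i
      · rw [Set.indicator_of_mem hm, Set.indicator_of_mem (show l ∈ {l | g :: l ∈ B i} from hm)]
      · rw [Set.indicator_of_notMem hm,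
          Set.indicator_of_notMem (show l ∉ {l | g :: l ∈ B i} from hm)]
    have htriv : ∀ g, EE κ j (fun l => wsum B h (g :: l)) ≤ ρ ^ j * H := by
      intro g
      rw [hcons]
      exact ih ι _ h H (fun i => (hB i).cons hiso g) (hdis g) hH
    -- letters
    let P : Fin 16 → ι → Prop := fun q i =>
      ∃ w ∈ B i, |(β ((uw w)⁻¹ • y) : ℝ) + k * (16 - (q : ℕ))| ≤ c + e
    have hPuniq : ∀ i q q', P q i → P q' i → q = q' := by
      rintro i q q' ⟨w, hw, hwb⟩ ⟨w', hw', hwb'⟩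
      have hk0 : (0:ℝ) ≤ k := Nat.cast_nonneg k
      have hq0 : (0:ℝ) ≤ (q : ℕ) := Nat.cast_nonneg _
      have hq16 : ((q : ℕ) : ℝ) ≤ 16 := by exact_mod_cast q.2.le
      have hle : |(β ((uw w)⁻¹ • y) : ℝ)| ≤ 16 * k + c + e := by
        rw [abs_le] at hwb ⊢
        constructor <;> nlinarith
      have := hB i w hw w' hw' 1 (by simpa using Rw_nonneg o w) (by simpa using Rw_nonneg o w')
        (by simpa using hle)
      simp only [inv_one, one_smul] at this
      refine idx_eq hk ?_
      rw [abs_le] at *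
      constructor <;> nlinarith
    let h' : Fin 16 → ι → NNReal := fun q i => if P q i then h i else 0
    let Hs : Fin 16 → NNReal := fun q => NNReal.sqrt (∑ i, h' q i ^ 2)
    have hHs2 : ∀ q, Hs q ^ 2 = ∑ i, h' q i ^ 2 := fun q => NNReal.sq_sqrt _
    have hsum2 : ∑ q, Hs q ^ 2 ≤ H ^ 2 := by
      simp only [hHs2]
      rw [Finset.sum_comm]
      refine le_trans (Finset.sum_le_sum fun i _ => ?_) hH
      by_cases hex : ∃ q, P q i
      · obtain ⟨q, hq⟩ := hex
        rw [Finset.sum_eq_single q]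
        · simp [h', hq]
        · intro q' _ hne
          have : ¬ P q' i := fun hq' => hne (hPuniq i _ _ hq' hq)
          simp [h', this]
        · simp
      · push Not at hex
        simp [h', hex]
    have hsum : ∑ q, Hs q ≤ 4 * H := by
      have := sq_sum_le_card_mul_sum_sq (s := (Finset.univ : Finset (Fin 16))) (f := fun q => (Hs q : ℝ))
      simp only [Finset.card_univ, Fintype.card_fin] at this
      have h2 : ∑ q, (Hs q : ℝ) ^ 2 ≤ (H : ℝ) ^ 2 := by exact_mod_cast hsum2
      have h3 : (∑ q, (Hs q : ℝ)) ≤ 4 * H := by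
        refine (pow_le_pow_iff_left₀ (Finset.sum_nonneg fun _ _ => NNReal.coe_nonneg _)
          (by positivity) two_ne_zero).1 ?_
        push_cast at this
        nlinarith
      exact_mod_cast h3
    let B2 : Fin 16 × ι → Set (List G) := fun p =>
      if P p.1 p.2 then ∅ else {l | s p.1 :: l ∈ B p.2}
    have hB2 : ∀ p l, l ∈ B2 p → ¬ P p.1 p.2 ∧ s p.1 :: l ∈ B p.2 ∧
        |(β ((uw l)⁻¹ • y) : ℝ) - k * (p.1 : ℕ)| ≤ c + e := by
      intro p l hl
      by_cases hp : P p.1 p.2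
      · simp [B2, hp] at hl
      · have hl' : s p.1 :: l ∈ B p.2 := by simpa [B2, hp] using hl
        refine ⟨hp, hl', ?_⟩
        by_contra hcon
        have := pingpong a b L k β e c h1 h3 p.1 _ hcon
        apply hp
        refine ⟨_, hl', ?_⟩
        simp only [uw, mul_inv_rev, mul_smul]
        exact this
    have hB2c : ∀ p, Cls o β E (16 * k + c + e) y (B2 p) := by
      intro p
      by_cases hp : P p.1 p.2
      · simp only [B2, hp, if_true]; exact Cls.empty
      · simp only [B2, hp, if_false]; exact (hB p.2).cons hiso _
    have hB2d : Pairwise fun p p' => Disjoint (B2 p) (B2 p') := by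
      rintro ⟨q, i⟩ ⟨q', i'⟩ hne
      rw [Set.disjoint_left]
      intro l hl hl'
      obtain ⟨-, m1, m2⟩ := hB2 _ _ hl
      obtain ⟨-, m1', m2'⟩ := hB2 _ _ hl'
      simp only at m1 m2 m1' m2'
      have hq : q = q' := by
        refine idx_eq hk ?_
        rw [abs_le] at *
        constructor <;> linarith
      subst hq
      have hi : i ≠ i' := fun hi => hne (by rw [hi])
      exact Set.disjoint_left.1 (hd hi) m1 m1'
    have hlet : ∑ q, EE κ j (fun l => wsum B h (s q :: l)) ≤ 8 * (ρ ^ j * H) := by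
      have hsplit : ∀ l, ∑ q, wsum B h (s q :: l) ≤
          ∑ q, wsum (fun i => {l | s q :: l ∈ B i}) (h' q) l
            + wsum B2 (fun p => h p.2) l := by
        intro l
        simp only [wsum]
        rw [Fintype.sum_prod_type, ← Finset.sum_add_distrib]
        refine Finset.sum_le_sum fun q _ => ?_
        rw [← Finset.sum_add_distrib]
        refine Finset.sum_le_sum fun i _ => ?_
        by_cases hm : s q :: l ∈ B i
        · rw [Set.indicator_of_mem hm]
          rw [Set.indicator_of_mem (show l ∈ {l | s q :: l ∈ B i} from hm)]
          by_cases hp : P q i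
          · simp [h', hp]
          · have : l ∈ B2 (q, i) := by simpa [B2, hp] using hm
            rw [Set.indicator_of_mem this]
            exact le_add_self
        · rw [Set.indicator_of_notMem hm]; exact zero_le
      rw [← EE_sum]
      refine (EE_mono κ j hsplit).trans ?_
      rw [EE_add, EE_sum]
      have p1 : ∑ q, EE κ j (wsum (fun i => {l | s q :: l ∈ B i}) (h' q)) ≤ ρ ^ j * (4 * H) := by
        have t1 : ∀ q ∈ (Finset.univ : Finset (Fin 16)),
            EE κ j (wsum (fun i => {l | s q :: l ∈ B i}) (h' q)) ≤ ρ ^ j * (Hs q : ENNReal) := by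
          intro q _
          exact ih ι (fun i => {l | s q :: l ∈ B i}) (h' q) (Hs q)
            (fun i => (hB i).cons hiso (s q)) (hdis (s q)) (le_of_eq (hHs2 q).symm)
        calc ∑ q, EE κ j (wsum (fun i => {l | s q :: l ∈ B i}) (h' q))
              ≤ ∑ q, ρ ^ j * (Hs q : ENNReal) := Finset.sum_le_sum t1
          _ = ρ ^ j * ((∑ q, Hs q : NNReal) : ENNReal) := by
              rw [← Finset.mul_sum, ENNReal.coe_finset_sum]
          _ ≤ ρ ^ j * ((4 * H : NNReal) : ENNReal) := by gcongr
          _ = ρ ^ j * (4 * H) := by rw [ENNReal.coe_mul]; rfl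
      have p2 : EE κ j (wsum B2 (fun p => h p.2)) ≤ ρ ^ j * (4 * H) := by
        have := ih (Fin 16 × ι) B2 (fun p => h p.2) (4 * H) hB2c hB2d (by
          rw [Fintype.sum_prod_type]
          simp only [Finset.sum_const, Finset.card_univ, Fintype.card_fin, nsmul_eq_mul]
          push_cast
          calc (16 : NNReal) * ∑ i, h i ^ 2 ≤ 16 * H ^ 2 := by gcongr
            _ = (4 * H) ^ 2 := by ring)
        push_cast at this
        exact this
      calc _ ≤ ρ ^ j * (4 * H) + ρ ^ j * (4 * H) := add_le_add p1 p2
        _ = _ := by ring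
    simp only [EE]
    rw [hκ]
    calc _ ≤ ∑' g, κ' g * (ρ ^ j * H) + α * (8 * (ρ ^ j * H)) := by
            gcongr with g
            exact htriv g
      _ = (∑' g, κ' g + 8 * α) * (ρ ^ j * H) := by
            rw [ENNReal.tsum_mul_right]; ring
      _ ≤ ρ * (ρ ^ j * H) := by gcongr
      _ = _ := by ring

theorem devEE (o : X) (hiso : ∀ g : G, Isometry fun x : X => g • x)
    (a b : G) (L k : ℕ) (β : X → ℤ) (e E c A : ℝ) (he : 0 ≤ e) (hE : 0 ≤ E) (hc : 0 ≤ c)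
    (h1 : ∀ (n : ℤ) (x : X), |(β (b ^ n • x) : ℝ) - β x - n| ≤ e)
    (h3 : ∀ x : X, c < |(β x : ℝ)| → |(β ((a ^ L)⁻¹ • x) : ℝ)| ≤ c)
    (hk : 2 * (c + e) + 2 * E < k) (hA0 : 0 ≤ A)
    (hA : ∀ y z : X, A < gpr o y z → |(β y : ℝ)| ≤ 16 * k + c + e + E → |(β y : ℝ) - β z| ≤ E)
    (κ κ' : G → ENNReal) (α ρ : ENNReal)
    (hκ : ∀ F : G → ENNReal,
      ∑' g, κ g * F g = ∑' g, κ' g * F g + α * ∑ i, F (lett a b L k i))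
    (hρ : ∑' g, κ' g + 8 * α ≤ ρ) (hκ1 : ∑' g, κ' g + 16 * α ≤ 1) (hκs : ∑' g, κ g ≤ 1)
    (n : ℕ) (y : X) :
    EE κ n (fun l => ENNReal.ofReal (gpr o y (uw l • o))) ≤
      ENNReal.ofReal A +
        (∑' g, κ g * ENNReal.ofReal (2 * dist o (g • o))) * ∑ j ∈ Finset.range n, ρ ^ j := by
  set Λ := ∑' g, κ g * ENNReal.ofReal (2 * dist o (g • o)) with hΛ
  have main : ∀ n : ℕ, ∀ z : X, 
      EE κ n (fun l => ENNReal.ofReal (min (gpr o y (uw l • z)) (A + 2 * Rw o l))) ≤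
      ENNReal.ofReal A + Λ * ∑ j ∈ Finset.range n, ρ ^ j := by
    intro n
    induction n with
    | zero =>
      intro z
      simp only [EE, Rw, Finset.range_zero, Finset.sum_empty, mul_zero, add_zero]
      exact ENNReal.ofReal_le_ofReal (min_le_right _ _)
    | succ n ih =>
      intro z
      simp only [EE]
      have step : ∀ g, EE κ n (fun l => ENNReal.ofReal
          (min (gpr o y (uw (g :: l) • z)) (A + 2 * Rw o (g :: l)))) ≤
          (ENNReal.ofReal A + Λ * ∑ j ∈ Finset.range n, ρ ^ j) +
            ENNReal.ofReal (2 * dist o (g • o)) * ρ ^ n := by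
        intro g
        set B : Set (List G) := {l : List G | A + 2 * Rw o l < gpr o y (uw l • (g • z))} with hB
        have hcl : Cls o β E (16 * k + c + e) y B := Cls_gpr y (g • z) hiso hE hA
        have hL := L2lemma o hiso a b L k β e E c he hE hc h1 h3 hk y κ κ' α ρ hκ hρ hκ1 n
          Unit (fun _ => B) (fun _ => 1) 1 (fun _ => hcl)
          (fun i j hij => absurd (Subsingleton.elim i j) hij) (by simp)
        calc _ ≤ EE κ n (fun l => ENNReal.ofReal (min (gpr o y (uw l • (g • z))) (A + 2 * Rw o l))
                + ENNReal.ofReal (2 * dist o (g • o)) * wsum (fun _ : Unit => B) (fun _ => 1) l) := by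
              apply EE_mono
              intro l
              simp only [uw, Rw, mul_smul]
              by_cases hl : l ∈ B
              · have hw : wsum (fun _ : Unit => B) (fun _ => 1) l = 1 := by
                  simp [wsum, hl]
                have hl' : A + 2 * Rw o l < gpr o y (uw l • (g • z)) := hl
                rw [hw, mul_one, min_eq_right hl'.le]
                refine le_trans ?_ (ENNReal.ofReal_add ?_ ?_).le
                · apply ENNReal.ofReal_le_ofReal
                  refine (min_le_right _ _).trans (le_of_eq (by ring))
                · have := Rw_nonneg o l; positivity
                · positivity
              · have hl' : ¬ A + 2 * Rw o l < gpr o y (uw l • (g • z)) := hl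
                push Not at hl'
                rw [min_eq_left hl']
                exact le_add_right (ENNReal.ofReal_le_ofReal (min_le_left _ _))
          _ ≤ _ := by
              rw [EE_add, EE_smul]
              gcongr
              · exact ih (g • z)
              · simpa using hL
      calc _ ≤ ∑' g, κ g * ((ENNReal.ofReal A + Λ * ∑ j ∈ Finset.range n, ρ ^ j) +
            ENNReal.ofReal (2 * dist o (g • o)) * ρ ^ n) :=
            ENNReal.tsum_le_tsum fun g => mul_le_mul_right (step g) _
        _ = (∑' g, κ g) * (ENNReal.ofReal A + Λ * ∑ j ∈ Finset.range n, ρ ^ j) + Λ * ρ ^ n := by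
            simp only [mul_add, ENNReal.tsum_add, ← mul_assoc, ENNReal.tsum_mul_right, hΛ]
        _ ≤ 1 * (ENNReal.ofReal A + Λ * ∑ j ∈ Finset.range n, ρ ^ j) + Λ * ρ ^ n := by gcongr
        _ = _ := by rw [Finset.sum_range_succ]; ring
  refine le_trans (EE_mono κ n fun l => ?_) (main n o)
  apply ENNReal.ofReal_le_ofReal
  refine le_min (le_refl _) ?_
  have h1 := uw_le_Rw o hiso l
  have h2 := Rw_nonneg o l
  have h3 : gpr o y (uw l • o) ≤ dist o (uw l • o) := by
    unfold gpr
    have := dist_triangle_right o y (uw l • o)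
    rw [dist_comm] at this
    have := dist_triangle o (uw l • o) y
    rw [dist_comm (uw l • o) y] at this
    linarith
  linarith
end L2


section ops
set_option linter.unusedSectionVars false
variable {G X : Type*} [Group G] [MetricSpace X] [MulAction G X]

/-- Length function. -/
noncomputable def nn (o : X) (g : G) : ℝ := dist o (g • o)
/-- Weight function. -/
noncomputable def ww (o : X) (g : G) : ℝ := 1 + dist o (g • o)

lemma nn_nonneg (o : X) (g : G) : 0 ≤ nn o g := dist_nonneg
lemma one_le_ww (o : X) (g : G) : 1 ≤ ww o g := by
  unfold ww; linarith [@dist_nonneg _ _ o (g • o)]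
lemma ww_pos (o : X) (g : G) : 0 < ww o g := by linarith [one_le_ww o g]
lemma ww_eq (o : X) (g : G) : ww o g = 1 + nn o g := rfl

/-- The action is isometric. -/
abbrev IsoAct (G X : Type*) [Group G] [MetricSpace X] [MulAction G X] : Prop :=
  ∀ g : G, Isometry fun x : X => g • x

lemma nn_mul' (o : X) [hiso : Fact (IsoAct G X)] (g h : G) : nn o (g * h) ≤ nn o g + nn o h :=
  nn_mul o hiso.out g h

lemma nn_mul_ge (o : X) [hiso : Fact (IsoAct G X)] (g h : G) : nn o g - nn o h ≤ nn o (g * h) := by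
  have := nn_mul o hiso.out (g * h) h⁻¹
  rw [nn_inv o hiso.out, mul_inv_cancel_right] at this
  unfold nn; linarith

lemma ww_mul (o : X) [hiso : Fact (IsoAct G X)] (g h : G) : ww o (g * h) ≤ ww o g * ww o h := by
  have := nn_mul' o g h
  have h1 := nn_nonneg o g
  have h2 := nn_nonneg o h
  rw [ww_eq, ww_eq, ww_eq]
  nlinarith [mul_nonneg h1 h2]

/-- Signed measures with finite norm. -/
def Wt (o : X) : Submodule ℝ (G → ℝ) where
  carrier := {η | Summable fun g => ww o g * |η g|}
  zero_mem' := by simp [summable_zero]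
  add_mem' := by
    intro a b ha hb
    refine Summable.of_nonneg_of_le (fun g => ?_) (fun g => ?_) (Summable.add ha hb)
    · exact mul_nonneg (ww_pos o g).le (abs_nonneg _)
    · rw [← mul_add]
      exact mul_le_mul_of_nonneg_left (abs_add_le _ _) (ww_pos o g).le
  smul_mem' := by
    intro c a ha
    refine (Summable.mul_left |c| ha).congr fun g => ?_
    simp only [Pi.smul_apply, smul_eq_mul, abs_mul]; ring

/-- Functions of linear growth. -/
def Vf (o : X) : Submodule ℝ (G → ℝ) where
  carrier := {F | ∃ C : ℝ, ∀ g, |F g| ≤ C * ww o g}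
  zero_mem' := ⟨0, by simp⟩
  add_mem' := by
    rintro a b ⟨C, hC⟩ ⟨D, hD⟩
    refine ⟨C + D, fun g => ?_⟩
    have := abs_add_le (a g) (b g)
    simp only [Pi.add_apply]
    linarith [hC g, hD g]
  smul_mem' := by
    rintro c a ⟨C, hC⟩
    refine ⟨|c| * C, fun g => ?_⟩
    simp only [Pi.smul_apply, smul_eq_mul, abs_mul]
    nlinarith [hC g, abs_nonneg c]

/-- The norm. -/
noncomputable def nrm (o : X) (η : G → ℝ) : ℝ := ∑' g, ww o g * |η g|

lemma nrm_nonneg (o : X) (η : G → ℝ) : 0 ≤ nrm o η :=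
  tsum_nonneg fun g => mul_nonneg (ww_pos o g).le (abs_nonneg _)

variable {o : X}

lemma Wt_summ (η : Wt (G := G) o) : Summable fun g => ww o g * |η.1 g| := η.2

/-- General summability: bounded by weight. -/
lemma summ_of_bd (η : Wt (G := G) o) (Φ : G → ℝ) (C : ℝ) (h : ∀ g, |Φ g| ≤ C * ww o g) :
    Summable fun g => η.1 g * Φ g := by
  refine Summable.of_norm_bounded ((Wt_summ η).mul_left C) fun g => ?_
  rw [Real.norm_eq_abs, abs_mul]
  nlinarith [h g, abs_nonneg (η.1 g)]

lemma tsum_bd (η : Wt (G := G) o) (Φ : G → ℝ) (C : ℝ) (h : ∀ g, |Φ g| ≤ C * ww o g) :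
    |∑' g, η.1 g * Φ g| ≤ C * nrm o η.1 := by
  have hb : ∀ g, ‖η.1 g * Φ g‖ ≤ C * (ww o g * |η.1 g|) := fun g => by
    rw [Real.norm_eq_abs, abs_mul]
    nlinarith [h g, abs_nonneg (η.1 g)]
  have := tsum_of_norm_bounded (((Wt_summ η).hasSum).mul_left C) hb
  exact this

variable [hiso : Fact (IsoAct G X)]

lemma Vf_tr_bd (F : Vf (G := G) o) (x : G) : ∃ C, ∀ h, |F.1 (x * h)| ≤ C * ww o h := by
  obtain ⟨C, hC⟩ := F.2
  refine ⟨|C| * ww o x, fun h => (hC _).trans ?_⟩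
  have := ww_mul o x h
  have h1 := ww_pos o (x * h)
  calc C * ww o (x * h) ≤ |C| * ww o (x * h) := by gcongr; exact le_abs_self C
    _ ≤ |C| * (ww o x * ww o h) := by gcongr
    _ = _ := by ring

lemma op_summ (η : Wt (G := G) o) (F : Vf (G := G) o) (x : G) :
    Summable fun h => η.1 h * F.1 (x * h) := by
  obtain ⟨C, hC⟩ := Vf_tr_bd F x
  exact summ_of_bd η _ C hC

/-- Right convolution operator. -/
noncomputable def op (o : X) : Wt (G := G) o →ₗ[ℝ] Module.End ℝ (Vf (G := G) o) where
  toFun η :=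
    { toFun := fun F => ⟨fun x => ∑' h, η.1 h * F.1 (x * h), by
        obtain ⟨C, hC⟩ := F.2
        refine ⟨|C| * nrm o η.1, fun x => ?_⟩
        have := tsum_bd η (fun h => F.1 (x * h)) (|C| * ww o x) (fun h => by
          refine (hC _).trans ?_
          have := ww_mul o x h
          have h1 := ww_pos o (x * h)
          calc C * ww o (x * h) ≤ |C| * ww o (x * h) := by gcongr; exact le_abs_self C
            _ ≤ |C| * (ww o x * ww o h) := by gcongr
            _ = _ := by ring)
        calc _ ≤ _ := this
          _ = _ := by ring⟩
      map_add' := fun F F' => by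
        ext x
        simp only [Submodule.coe_add, Pi.add_apply, mul_add]
        exact (op_summ η F x).tsum_add (op_summ η F' x)
      map_smul' := fun c F => by
        ext x
        simp only [Submodule.coe_smul, Pi.smul_apply, smul_eq_mul, RingHom.id_apply]
        rw [← tsum_mul_left]
        congr 1; ext h; ring }
  map_add' := fun η η' => by
    ext F x
    simp only [Submodule.coe_add, Pi.add_apply, add_mul, LinearMap.coe_mk, AddHom.coe_mk,
      LinearMap.add_apply]
    exact (op_summ η F x).tsum_add (op_summ η' F x)
  map_smul' := fun c η => by
    ext F x
    simp only [Submodule.coe_smul, Pi.smul_apply, smul_eq_mul, RingHom.id_apply,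
      LinearMap.coe_mk, AddHom.coe_mk, LinearMap.smul_apply]
    rw [← tsum_mul_left]
    congr 1; ext h; ring

lemma op_apply (η : Wt (G := G) o) (F : Vf (G := G) o) (x : G) :
    (op o η F).1 x = ∑' h, η.1 h * F.1 (x * h) := rfl

/-- absolute summability on the product -/
lemma prod_summ (μ ν : Wt (G := G) o) (Φ : G → ℝ) (C : ℝ) (h : ∀ g, |Φ g| ≤ C * ww o g) :
    Summable fun p : G × G => μ.1 p.1 * ν.1 (p.1⁻¹ * p.2) * Φ p.2 := by
  let e : G × G ≃ G × G :=
    { toFun := fun p => (p.1, p.1 * p.2)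
      invFun := fun p => (p.1, p.1⁻¹ * p.2)
      left_inv := fun p => by simp
      right_inv := fun p => by simp }
  rw [← e.summable_iff]
  have hs := ((Wt_summ μ).mul_of_nonneg (Wt_summ ν)
    (fun g => mul_nonneg (ww_pos o g).le (abs_nonneg _))
    (fun g => mul_nonneg (ww_pos o g).le (abs_nonneg _))).mul_left |C|
  refine Summable.of_norm_bounded hs fun p => ?_
  simp only [e, Function.comp, Equiv.coe_fn_mk, inv_mul_cancel_left, Real.norm_eq_abs, abs_mul]
  have h1 := h (p.1 * p.2)
  have h2 := ww_mul o p.1 p.2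
  have h3 := ww_pos o (p.1 * p.2)
  have h4 : |Φ (p.1 * p.2)| ≤ |C| * (ww o p.1 * ww o p.2) := by
    calc _ ≤ _ := h1
      _ ≤ |C| * ww o (p.1 * p.2) := by gcongr; exact le_abs_self C
      _ ≤ _ := by gcongr
  calc |μ.1 p.1| * |ν.1 p.2| * |Φ (p.1 * p.2)| ≤
      |μ.1 p.1| * |ν.1 p.2| * (|C| * (ww o p.1 * ww o p.2)) := by gcongr
    _ = _ := by ring

/-- absolute value as an element -/
def Wt_abs (μ : Wt (G := G) o) : Wt (G := G) o := ⟨fun g => |μ.1 g|, by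
  show Summable _
  simpa using (Wt_summ μ)⟩

lemma conv_mem (μ ν : Wt (G := G) o) : conv μ.1 ν.1 ∈ Wt (G := G) o := by
  show Summable _
  have h1 := prod_summ (Wt_abs μ) (Wt_abs ν) (ww o) 1 (fun g => by
    rw [abs_of_pos (ww_pos o g), one_mul])
  have h2 := h1.prod_symm.prod
  have h1' := h1.prod_symm
  refine Summable.of_nonneg_of_le (fun g => mul_nonneg (ww_pos o g).le (abs_nonneg _))
    (fun g => ?_) h2
  have h3 : Summable fun h => |μ.1 h| * |ν.1 (h⁻¹ * g)| * ww o g :=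
    h1'.prod_factor g
  have h4 : Summable fun h => |μ.1 h| * |ν.1 (h⁻¹ * g)| := by
    have := h3.mul_right (ww o g)⁻¹
    refine this.congr fun h => ?_
    rw [mul_inv_cancel_right₀ (ww_pos o g).ne']
  have h5 : |conv μ.1 ν.1 g| ≤ ∑' h, |μ.1 h| * |ν.1 (h⁻¹ * g)| := by
    unfold conv
    exact tsum_of_norm_bounded h4.hasSum fun h => by rw [Real.norm_eq_abs, abs_mul]
  calc ww o g * |conv μ.1 ν.1 g| ≤ ww o g * ∑' h, |μ.1 h| * |ν.1 (h⁻¹ * g)| := by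
        have := ww_pos o g
        gcongr
    _ = ∑' h, |μ.1 h| * |ν.1 (h⁻¹ * g)| * ww o g := by rw [tsum_mul_right, mul_comm]
    _ = _ := rfl

lemma conv_pair (μ ν : Wt (G := G) o) (Φ : G → ℝ) (C : ℝ) (h : ∀ g, |Φ g| ≤ C * ww o g) :
    ∑' g, conv μ.1 ν.1 g * Φ g = ∑' h, μ.1 h * ∑' k, ν.1 k * Φ (h * k) := by
  have hs := prod_summ μ ν Φ C h
  have e1 : ∀ h, μ.1 h * ∑' k, ν.1 k * Φ (h * k) = ∑' g, μ.1 h * ν.1 (h⁻¹ * g) * Φ g := by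
    intro h
    rw [← tsum_mul_left, ← (Equiv.mulLeft h).tsum_eq (fun g => μ.1 h * ν.1 (h⁻¹ * g) * Φ g)]
    congr 1; ext k
    simp [mul_assoc]
  simp only [e1]
  have hc := Summable.tsum_comm (f := fun h g => μ.1 h * ν.1 (h⁻¹ * g) * Φ g) hs
  rw [← hc]
  congr 1; ext g
  rw [conv, tsum_mul_right]

/-- convolution in the space of measures -/
noncomputable def cv (μ ν : Wt (G := G) o) : Wt (G := G) o := ⟨conv μ.1 ν.1, conv_mem μ ν⟩

lemma op_cv (μ ν : Wt (G := G) o) : op o (cv μ ν) = op o μ * op o ν := by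
  ext F x
  obtain ⟨C, hC⟩ := Vf_tr_bd F x
  rw [op_apply, Module.End.mul_apply, op_apply]
  simp only [op_apply, cv]
  rw [conv_pair μ ν (fun g => F.1 (x * g)) C hC]
  simp only [mul_assoc]

lemma delta_mem : ({1} : Set G).indicator (fun _ => (1 : ℝ)) ∈ Wt (G := G) o := by
  show Summable _
  apply summable_of_ne_finset_zero (s := {1})
  intro g hg
  simp at hg
  simp [hg]

lemma convPow_mem (μ : Wt (G := G) o) (n : ℕ) : convPow μ.1 n ∈ Wt (G := G) o := by
  induction n with
  | zero => exact delta_mem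
  | succ n ih => exact conv_mem μ ⟨_, ih⟩

/-- convolution power -/
noncomputable def cp (μ : Wt (G := G) o) (n : ℕ) : Wt (G := G) o :=
  ⟨convPow μ.1 n, convPow_mem μ n⟩

lemma op_cp (μ : Wt (G := G) o) (n : ℕ) : op o (cp μ n) = (op o μ) ^ n := by
  induction n with
  | zero =>
    ext F x
    rw [op_apply, tsum_eq_single 1]
    · simp [cp, convPow]
    · intro g hg
      simp [cp, convPow, hg]
  | succ n ih =>
    have : cp μ (n + 1) = cv μ (cp μ n) := rfl
    rw [this, op_cv, ih, pow_succ']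

/-- length as an element of `Vf` -/
noncomputable def NV (o : X) : Vf (G := G) o := ⟨nn o, 1, fun g => by
  rw [abs_of_nonneg (nn_nonneg o g), ww_eq]; linarith⟩

lemma mem_Vf_of_bdd (F : G → ℝ) (B : ℝ) (h : ∀ g, |F g| ≤ B) : F ∈ Vf (G := G) o :=
  ⟨B, fun g => by nlinarith [h g, abs_nonneg (F g), one_le_ww o g]⟩

/-- constants -/
noncomputable def cst (o : X) (c : ℝ) : Vf (G := G) o :=
  ⟨fun _ => c, mem_Vf_of_bdd _ |c| fun _ => le_refl _⟩

lemma firstMoment_eq (η : Wt (G := G) o) : firstMoment o η.1 = (op o η (NV o)).1 1 := by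
  rw [op_apply]; simp only [firstMoment, NV, nn, one_mul]

end ops


section markov
set_option linter.unusedSectionVars false
variable {G X : Type*} [Group G] [MetricSpace X] [MulAction G X] {o : X}
  [hiso : Fact (IsoAct G X)]

lemma pow_applyL (T : Module.End ℝ (Vf (G := G) o)) (n : ℕ) (F : Vf (G := G) o) :
    (T ^ (n + 1)) F = T ((T ^ n) F) := by rw [pow_succ', Module.End.mul_apply]

lemma pow_applyR (T : Module.End ℝ (Vf (G := G) o)) (n : ℕ) (F : Vf (G := G) o) :
    (T ^ (n + 1)) F = (T ^ n) (T F) := by rw [pow_succ, Module.End.mul_apply]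

lemma op_mono {ν : Wt (G := G) o} (hν : IsProbMeasure ν.1) {F F' : Vf (G := G) o}
    (h : ∀ x, F.1 x ≤ F'.1 x) (x : G) : (op o ν F).1 x ≤ (op o ν F').1 x := by
  rw [op_apply, op_apply]
  exact (op_summ ν F x).tsum_le_tsum (fun g => mul_le_mul_of_nonneg_left (h _) (hν.1 g))
    (op_summ ν F' x)

lemma pow_mono {ν : Wt (G := G) o} (hν : IsProbMeasure ν.1) (n : ℕ) : ∀ {F F' : Vf (G := G) o},
    (∀ x, F.1 x ≤ F'.1 x) → ∀ x : G, ((op o ν ^ n) F).1 x ≤ ((op o ν ^ n) F').1 x := by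
  induction n with
  | zero => intro F F' h x; simpa using h x
  | succ n ih =>
    intro F F' h x
    rw [pow_applyL, pow_applyL]
    exact op_mono hν (ih h) x

lemma op_cst {ν : Wt (G := G) o} (hν : IsProbMeasure ν.1) (c : ℝ) :
    op o ν (cst o c) = cst o c := by
  ext x
  rw [op_apply]
  simp only [cst, tsum_mul_right, hν.2.2, one_mul]

lemma pow_cst {ν : Wt (G := G) o} (hν : IsProbMeasure ν.1) (c : ℝ) (n : ℕ) :
    (op o ν ^ n) (cst o c) = cst o c := by
  induction n with
  | zero => simp
  | succ n ih => rw [pow_applyL, ih, op_cst hν]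

lemma cst_apply (c : ℝ) (x : G) : (cst (G := G) o c).1 x = c := rfl

lemma pow_bd {ν : Wt (G := G) o} (hν : IsProbMeasure ν.1) (n : ℕ) {F : Vf (G := G) o} {B : ℝ}
    (h : ∀ x, |F.1 x| ≤ B) (x : G) : |((op o ν ^ n) F).1 x| ≤ B := by
  rw [abs_le]
  constructor
  · have := pow_mono hν n (F := cst o (-B)) (F' := F) (fun x => (abs_le.1 (h x)).1) x
    rwa [pow_cst hν] at this
  · have := pow_mono hν n (F := F) (F' := cst o B) (fun x => (abs_le.1 (h x)).2) x
    rwa [pow_cst hν] at this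

lemma pow_translate (ν : Wt (G := G) o) (n : ℕ) (x : G) : ∀ {F F' : Vf (G := G) o},
    (∀ y, F'.1 y = F.1 (x * y)) → ∀ y, ((op o ν ^ n) F').1 y = ((op o ν ^ n) F).1 (x * y) := by
  induction n with
  | zero => intro F F' h y; simpa using h y
  | succ n ih =>
    intro F F' h y
    rw [pow_applyL, pow_applyL, op_apply, op_apply]
    congr 1; ext g
    rw [ih h, mul_assoc]

lemma op_sub (μ ν : Wt (G := G) o) : op o (ν - μ) = op o ν - op o μ := by
  ext F x
  show _ = (op o ν F).1 x - (op o μ F).1 x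
  rw [op_apply, op_apply, op_apply,
    ← (op_summ ν F x).tsum_sub (op_summ μ F x)]
  congr 1; ext g
  rw [Submodule.coe_sub, Pi.sub_apply]; ring

lemma pow_diff_bound {μ ν : Wt (G := G) o} (hν : IsProbMeasure ν.1) (F : Vf (G := G) o)
    {B : ℝ} (h : ∀ j x, |(op o (ν - μ) ((op o μ ^ j) F)).1 x| ≤ B) (n : ℕ) :
    ∀ x, |((op o ν ^ n) F).1 x - ((op o μ ^ n) F).1 x| ≤ n * B := by
  induction n with
  | zero => intro x; simp
  | succ n ih =>
    intro x
    have key : (op o ν ^ (n + 1)) F - (op o μ ^ (n + 1)) F =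
        op o ν ((op o ν ^ n) F - (op o μ ^ n) F) + op o (ν - μ) ((op o μ ^ n) F) := by
      rw [pow_applyL, pow_applyL, op_sub, map_sub]
      simp only [LinearMap.sub_apply]
      abel
    have key2 := congrArg (fun F : Vf (G := G) o => F.1 x) key
    simp only [Submodule.coe_sub, Submodule.coe_add, Pi.sub_apply, Pi.add_apply] at key2
    rw [key2]
    have h1 := pow_bd hν 1 (F := (op o ν ^ n) F - (op o μ ^ n) F) (B := n * B) (fun x => by
      simpa using ih x) x
    rw [pow_one] at h1
    push_cast
    calc _ ≤ _ := abs_add_le _ _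
      _ ≤ n * B + B := add_le_add h1 (h n x)
      _ = _ := by ring

lemma op_bdd (ζ : Wt (G := G) o) {F : Vf (G := G) o} {B : ℝ} (h : ∀ x, |F.1 x| ≤ B) (x : G) :
    |(op o ζ F).1 x| ≤ B * nrm o ζ.1 := by
  rw [op_apply]
  refine tsum_bd ζ _ B fun g => (h _).trans ?_
  have := (abs_nonneg _).trans (h x)
  nlinarith [one_le_ww o g]

/-- moments -/
noncomputable def Lm (ν : Wt (G := G) o) (n : ℕ) : ℝ := ((op o ν ^ n) (NV o)).1 1

lemma NV_apply (x : G) : (NV (G := G) o).1 x = nn o x := rfl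
lemma nn_one : nn o (1 : G) = 0 := by simp [nn]

lemma op_NV_le {ν : Wt (G := G) o} (hν : IsProbMeasure ν.1) (x : G) :
    |(op o ν (NV o)).1 x - nn o x| ≤ Lm ν 1 := by
  have hs := op_summ ν (NV o) x
  have hs1 := op_summ ν (NV o) 1
  have hc := hν.2.1.mul_right (nn o x)
  have e1 : nn o x = ∑' g, ν.1 g * nn o x := by rw [tsum_mul_right, hν.2.2, one_mul]
  have e2 : (op o ν (NV o)).1 x - nn o x = ∑' g, (ν.1 g * (NV o).1 (x * g) - ν.1 g * nn o x) := by
    rw [op_apply, hs.tsum_sub hc, ← e1]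
  have e3 : Lm ν 1 = ∑' g, ν.1 g * (NV o).1 (1 * g) := by rw [Lm, pow_one, op_apply]
  rw [e2, e3, ← Real.norm_eq_abs]
  refine tsum_of_norm_bounded hs1.hasSum fun g => ?_
  rw [← mul_sub, Real.norm_eq_abs, abs_mul, abs_of_nonneg (hν.1 g)]
  refine mul_le_mul_of_nonneg_left ?_ (hν.1 g)
  rw [NV_apply, NV_apply, one_mul, abs_le]
  have := nn_mul' o x g
  have := nn_mul_ge o x g
  constructor <;> linarith

lemma Lm_nonneg {ν : Wt (G := G) o} (hν : IsProbMeasure ν.1) (n : ℕ) : 0 ≤ Lm ν n := by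
  have := pow_mono hν n (F := cst o 0) (F' := NV o) (fun x => nn_nonneg o x) 1
  rwa [pow_cst hν] at this

lemma pow_NV_near {ν : Wt (G := G) o} (hν : IsProbMeasure ν.1) (r : ℕ) :
    ∀ x : G, |((op o ν ^ r) (NV o)).1 x - nn o x| ≤ r * Lm ν 1 := by
  induction r with
  | zero => intro x; simp [NV_apply]
  | succ r ih =>
    intro x
    have h1 := op_NV_le hν x
    have h2 := pow_bd hν 1 (F := (op o ν ^ r) (NV o) - NV o) (B := r * Lm ν 1) (fun x => by
      simpa [NV_apply] using ih x) x
    rw [pow_one, map_sub] at h2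
    simp only [Submodule.coe_sub, Pi.sub_apply] at h2
    rw [pow_applyL]
    push_cast
    rw [abs_le] at *
    constructor <;> linarith

lemma Lm_le {ν : Wt (G := G) o} (hν : IsProbMeasure ν.1) (n : ℕ) : Lm ν n ≤ n * Lm ν 1 := by
  have := (abs_le.1 (pow_NV_near hν n (1 : G))).2
  rw [nn_one] at this
  unfold Lm at *; linarith

/-- deviation -/
noncomputable def dv (ν : Wt (G := G) o) (n : ℕ) (x : G) : ℝ :=
  nn o x + Lm ν n - ((op o ν ^ n) (NV o)).1 x

/-- translated Gromov product function -/
noncomputable def gf (o : X) (x : G) : Vf (G := G) o := ⟨fun g => nn o x + nn o g - nn o (x * g), by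
  refine ⟨2, fun g => ?_⟩
  have h1 := nn_mul' o x g
  have h2 := nn_mul_ge o x⁻¹ (x * g)
  have h3 : nn o x - nn o g ≤ nn o (x * g) := nn_mul_ge o x g
  have h4 := nn_nonneg o g
  rw [abs_of_nonneg (by linarith), ww_eq]
  linarith⟩

lemma gf_nonneg (x g : G) : 0 ≤ (gf o x).1 g := by
  have h1 := nn_mul' o x g
  show 0 ≤ nn o x + nn o g - nn o (x * g)
  linarith

lemma dv_eq {ν : Wt (G := G) o} (hν : IsProbMeasure ν.1) (n : ℕ) (x : G) :
    dv ν n x = ((op o ν ^ n) (gf o x)).1 1 := by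
  have hx : (fun g => nn o (x * g)) ∈ Vf (G := G) o := by
    obtain ⟨C, hC⟩ := Vf_tr_bd (NV (G := G) o) x
    exact ⟨C, hC⟩
  have : gf o x = cst o (nn o x) + NV o - ⟨_, hx⟩ := by ext g; rfl
  rw [this, map_sub, map_add, pow_cst hν]
  have h2 := pow_translate ν n x (F := NV o) (F' := ⟨_, hx⟩) (fun y => rfl) 1
  simp only [Submodule.coe_sub, Submodule.coe_add, Pi.sub_apply, Pi.add_apply]
  rw [h2, cst_apply, mul_one]
  rfl

lemma dv_nonneg {ν : Wt (G := G) o} (hν : IsProbMeasure ν.1) (n : ℕ) (x : G) : 0 ≤ dv ν n x := by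
  rw [dv_eq hν]
  have := pow_mono hν n (F := cst o 0) (F' := gf o x) (fun g => gf_nonneg x g) 1
  rwa [pow_cst hν] at this

lemma EE_tsum {ι : Type*} (κ : G → ENNReal) (n : ℕ) : ∀ (F : ι → List G → ENNReal),
    EE κ n (fun l => ∑' i, F i l) = ∑' i, EE κ n (F i) := by
  induction n with
  | zero => intro F; rfl
  | succ n ih =>
    intro F
    simp only [EE, ih, ← ENNReal.tsum_mul_left]
    rw [ENNReal.tsum_comm]

lemma EE_op {κ : Wt (G := G) o} (hκ : IsProbMeasure κ.1) (n : ℕ) : ∀ (F : Vf (G := G) o),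
    (∀ x, 0 ≤ F.1 x) →
    EE (fun g => ENNReal.ofReal (κ.1 g)) n (fun l => ENNReal.ofReal (F.1 (uw l))) =
      ENNReal.ofReal (((op o κ ^ n) F).1 1) := by
  induction n with
  | zero => intro F hF; simp [EE, uw]
  | succ n ih =>
    intro F hF
    have hpos : ∀ x, 0 ≤ (op o κ F).1 x := fun x => by
      rw [op_apply]; exact tsum_nonneg fun g => mul_nonneg (hκ.1 g) (hF _)
    rw [pow_applyR, ← ih _ hpos]
    simp only [EE, uw]
    simp only [← EE_smul]
    rw [← EE_tsum]
    congr 1; ext l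
    rw [op_apply, ENNReal.ofReal_tsum_of_nonneg (fun g => mul_nonneg (hκ.1 g) (hF _))
      (op_summ κ F _)]
    congr 1; ext g
    rw [ENNReal.ofReal_mul (hκ.1 g)]

end markov


section devu
set_option linter.unusedSectionVars false
variable {G X : Type*} [Group G] [MetricSpace X] [MulAction G X] {o : X}
  [hiso : Fact (IsoAct G X)]

open Classical in
/-- indicator of a point -/
noncomputable def ind (o : X) (g : G) : Vf (G := G) o :=
  ⟨fun h => if h = g then 1 else 0, mem_Vf_of_bdd _ 1 fun h => by split_ifs <;> simp⟩

lemma ind_self (g : G) : (ind o g).1 g = 1 := by simp [ind]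
lemma ind_ne {g h : G} (hn : h ≠ g) : (ind o g).1 h = 0 := by simp [ind, hn]
lemma ind_nonneg (g h : G) : 0 ≤ (ind o g).1 h := by simp only [ind]; split_ifs <;> simp
lemma ind_bd (g h : G) : |(ind o g).1 h| ≤ 1 := by simp only [ind]; split_ifs <;> simp

lemma cp_val (ν : Wt (G := G) o) (n : ℕ) (g : G) :
    convPow ν.1 n g = ((op o ν ^ n) (ind o g)).1 1 := by
  rw [← op_cp, op_apply, tsum_eq_single g]
  · simp [cp, ind_self]
  · intro h hn
    rw [one_mul, ind_ne hn, mul_zero]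

lemma cp_nonneg {ν : Wt (G := G) o} (hν : IsProbMeasure ν.1) (n : ℕ) (g : G) :
    0 ≤ convPow ν.1 n g := by
  rw [cp_val]
  have := pow_mono hν n (F := cst o 0) (F' := ind o g) (fun x => ind_nonneg g x) 1
  rwa [pow_cst hν] at this

lemma cp_prob {ν : Wt (G := G) o} (hν : IsProbMeasure ν.1) (n : ℕ) :
    IsProbMeasure (cp ν n).1 := by
  refine ⟨cp_nonneg hν n, ?_, ?_⟩
  · have := op_summ (cp ν n) (cst o 1) 1
    simpa [cst] using this
  · have := congrArg (fun F : Vf (G := G) o => F.1 1) (pow_cst hν 1 n)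
    simp only [← op_cp, op_apply, cst, mul_one] at this
    exact this

lemma cp_mul_pos {ν : Wt (G := G) o} (hν : IsProbMeasure ν.1) {m m' : ℕ} {g g' : G}
    (h : 0 < convPow ν.1 m g) (h' : 0 < convPow ν.1 m' g') :
    0 < convPow ν.1 (m + m') (g * g') := by
  rw [cp_val] at *
  rw [pow_add, Module.End.mul_apply]
  have hle : ∀ x, (((((op o ν) ^ m') (ind o g')).1 1) • ind o g).1 x ≤
      (((op o ν) ^ m') (ind o (g * g'))).1 x := by
    intro x
    rw [Submodule.coe_smul, Pi.smul_apply, smul_eq_mul]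
    by_cases hx : x = g
    · subst hx
      rw [ind_self, mul_one]
      have := pow_translate ν m' x (F := ind o (x * g')) (F' := ind o g') (fun y => by
        by_cases hy : y = g'
        · subst hy; rw [ind_self, ind_self]
        · rw [ind_ne hy, ind_ne]; simpa using hy) 1
      rw [this, mul_one]
    · rw [ind_ne hx, mul_zero]
      have := pow_mono hν m' (F := cst o 0) (F' := ind o (g * g')) (fun x => ind_nonneg _ x) x
      rwa [pow_cst hν] at this
  have := pow_mono hν m hle 1
  rw [map_smul, Submodule.coe_smul, Pi.smul_apply, smul_eq_mul] at this
  exact lt_of_lt_of_le (mul_pos h' h) this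

lemma cp_pow_pos {ν : Wt (G := G) o} (hν : IsProbMeasure ν.1) {m : ℕ} {g : G}
    (h : 0 < convPow ν.1 m g) (j : ℕ) : 0 < convPow ν.1 (j * m) (g ^ j) := by
  induction j with
  | zero => simp [convPow]
  | succ j ih =>
    have := cp_mul_pos hν ih h
    rwa [← pow_succ, ← Nat.succ_mul] at this

lemma closure_pos {ν : Wt (G := G) o} (hν : IsProbMeasure ν.1) {g : G}
    (hg : g ∈ Subsemigroup.closure {x : G | 0 < ν.1 x}) :
    ∃ m : ℕ, 1 ≤ m ∧ 0 < convPow ν.1 m g := by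
  induction hg using Subsemigroup.closure_induction with
  | mem x hx =>
    refine ⟨1, le_refl _, ?_⟩
    rw [cp_val, pow_one, op_apply, tsum_eq_single x]
    · rw [one_mul, ind_self, mul_one]; exact hx
    · intro h hn
      rw [one_mul, ind_ne hn, mul_zero]
  | mul x y _ _ hx hy =>
    obtain ⟨m, hm, hx⟩ := hx
    obtain ⟨m', hm', hy⟩ := hy
    exact ⟨m + m', by omega, cp_mul_pos hν hx hy⟩

lemma nrm_summ_L1 {μ ν : Wt (G := G) o} : Lm ν 1 ≤ Lm μ 1 + nrm o (ν - μ).1 := by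
  have h : Lm ν 1 - Lm μ 1 = (op o (ν - μ) (NV o)).1 1 := by
    rw [op_sub]; simp only [Lm, pow_one]; rfl
  have h2 : |(op o (ν - μ) (NV o)).1 1| ≤ 1 * nrm o (ν - μ).1 := by
    rw [op_apply]
    refine tsum_bd _ _ 1 fun g => ?_
    rw [NV_apply, one_mul, one_mul, abs_of_nonneg (nn_nonneg o g), ww_eq]; linarith
  have := (abs_le.1 h2).2
  linarith

lemma decomp (κ : G → ENNReal) (s : Fin 16 → G) (α : ENNReal)
    (h : ∀ i, 16 * α ≤ κ (s i)) :
    ∃ κ' : G → ENNReal, ∀ F : G → ENNReal,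
      ∑' g, κ g * F g = ∑' g, κ' g * F g + α * ∑ i, F (s i) := by
  classical
  let c : G → ENNReal := fun g => ∑ i, if s i = g then α else 0
  have hc : ∀ g, c g ≤ κ g := by
    intro g
    by_cases hex : ∃ i, s i = g
    · obtain ⟨i, rfl⟩ := hex
      refine le_trans ?_ (h i)
      calc c (s i) ≤ ∑ _i : Fin 16, α := Finset.sum_le_sum fun j _ => by split_ifs <;> simp
        _ = 16 * α := by simp
    · push Not at hex
      simp [c, hex]
  refine ⟨fun g => κ g - c g, fun F => ?_⟩
  have h1 : ∀ g, κ g * F g = (κ g - c g) * F g + c g * F g := by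
    intro g
    rw [← add_mul, tsub_add_cancel_of_le (hc g)]
  have h2 : ∑' g, c g * F g = α * ∑ i, F (s i) := by
    simp only [c, Finset.sum_mul]
    rw [Summable.tsum_finsetSum (fun _ _ => ENNReal.summable), Finset.mul_sum]
    refine Finset.sum_congr rfl fun i _ => ?_
    rw [tsum_eq_single (s i)]
    · simp
    · intro g hg
      simp [Ne.symm hg]
  rw [← h2, ← ENNReal.tsum_add]
  exact tsum_congr h1

theorem dev_unif (hgeo : IsGeodesicSpace X) (μ : Wt (G := G) o) (hμ : IsProbMeasure μ.1)
    (hne : NonElementary o μ.1) :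
    ∃ C δ : ℝ, 0 ≤ C ∧ 0 < δ ∧ ∀ ν : Wt (G := G) o, IsProbMeasure ν.1 → nrm o (ν - μ).1 ≤ δ →
      ∀ n x, dv ν n x ≤ C := by
  obtain ⟨a, b, ha, hb, hab⟩ := hne
  obtain ⟨β, e, E, c, L, he, hE, hc, h1, h2, h3⟩ := geometry o hgeo hiso.out a b hab
  obtain ⟨k, hk⟩ := exists_nat_gt (2 * (c + e) + 2 * E)
  obtain ⟨A0, hA0⟩ := h2 (16 * k + c + e + E)
  set A := max A0 0 with hA
  have hAA : ∀ y z : X, A < gpr o y z → |(β y : ℝ)| ≤ 16 * k + c + e + E →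
      |(β y : ℝ) - β z| ≤ E := fun y z h => hA0 y z (lt_of_le_of_lt (le_max_left _ _) h)
  obtain ⟨p, hp1, hp⟩ := closure_pos hμ ha
  obtain ⟨q, hq1, hq⟩ := closure_pos hμ hb
  have hk1 : 1 ≤ k := by
    have : (0:ℝ) < k := lt_of_le_of_lt (by positivity) hk
    exact_mod_cast this
  set N0 := k * 16 * q + L * p with hN0
  have hN1 : 1 ≤ N0 := by
    have : 1 ≤ k * 16 * q := Nat.mul_pos (by omega) hq1
    omega
  have hpos : ∀ i, 0 < convPow μ.1 N0 (lett a b L k i) := by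
    intro i
    have := cp_mul_pos hμ (cp_mul_pos hμ (cp_pow_pos hμ hq (k * (i : ℕ))) (cp_pow_pos hμ hp L))
      (cp_pow_pos hμ hq (k * (16 - (i : ℕ))))
    have hN : k * (i : ℕ) * q + L * p + k * (16 - (i : ℕ)) * q = N0 := by
      have hi : (i : ℕ) + (16 - (i : ℕ)) = 16 := by omega
      rw [hN0]
      calc k * (i : ℕ) * q + L * p + k * (16 - (i : ℕ)) * q
          = k * ((i : ℕ) + (16 - (i : ℕ))) * q + L * p := by ring
        _ = _ := by rw [hi]
    rw [hN] at this
    exact this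
  obtain ⟨i0, hi0⟩ := Finite.exists_min fun i => convPow μ.1 N0 (lett a b L k i)
  set ε := convPow μ.1 N0 (lett a b L k i0) with hε
  have hε0 : 0 < ε := hpos i0
  have hNr : (1:ℝ) ≤ N0 := by exact_mod_cast hN1
  set δ := ε / (2 * N0) with hδ
  have hδ0 : 0 < δ := by positivity
  set αE : ENNReal := ENNReal.ofReal (ε / 32) with hαE
  have hα0 : 0 < αE := by rw [hαE, ENNReal.ofReal_pos]; positivity
  set ρ : ENNReal := 1 - 8 * αE with hρ
  have hρ1 : ρ < 1 := ENNReal.sub_lt_self (by simp) (by simp) (by positivity)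
  set M := Lm μ 1 + δ with hM
  have hM0 : 0 ≤ M := add_nonneg (Lm_nonneg hμ 1) hδ0.le
  set CE : ENNReal := 2 * (ENNReal.ofReal A + ENNReal.ofReal (2 * (N0 * M)) * (1 - ρ)⁻¹) with hCE
  have hCEt : CE ≠ ⊤ := by
    rw [hCE]
    refine ENNReal.mul_ne_top (by simp) (ENNReal.add_ne_top.2 ⟨by simp, ?_⟩)
    refine ENNReal.mul_ne_top ENNReal.ofReal_ne_top ?_
    rw [ENNReal.inv_ne_top]
    exact (tsub_pos_of_lt hρ1).ne'
  refine ⟨CE.toReal + 2 * (N0 * M), δ, by positivity, hδ0, ?_⟩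
  intro ν hν hνδ
  have hL1 : Lm ν 1 ≤ M := by
    have := nrm_summ_L1 (μ := μ) (ν := ν); linarith
  have hclose : ∀ i, ε / 2 ≤ convPow ν.1 N0 (lett a b L k i) := by
    intro i
    have := pow_diff_bound (μ := μ) hν (ind o (lett a b L k i)) (B := δ) (fun j x => by
      have := op_bdd (ν - μ) (B := 1) (fun x => pow_bd hμ j (ind_bd (o := o) (lett a b L k i)) x) x
      linarith) N0 1
    rw [← cp_val, ← cp_val] at this
    have h4 := hi0 i
    have h5 : (N0 : ℝ) * δ = ε / 2 := by rw [hδ]; field_simp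
    have := (abs_le.1 this).1
    linarith
  set κ := cp ν N0 with hκ
  have hκp : IsProbMeasure κ.1 := cp_prob hν N0
  set κE : G → ENNReal := fun g => ENNReal.ofReal (κ.1 g) with hκE
  have hκE1 : ∑' g, κE g = 1 := by
    rw [hκE, ← ENNReal.ofReal_tsum_of_nonneg hκp.1 hκp.2.1, hκp.2.2, ENNReal.ofReal_one]
  obtain ⟨κ', hκ'⟩ := decomp κE (lett a b L k) αE (fun i => by
    rw [hαE, hκE]
    have : (16 : ENNReal) = ENNReal.ofReal 16 := by simp
    rw [this, ← ENNReal.ofReal_mul (by norm_num)]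
    apply ENNReal.ofReal_le_ofReal
    have := hclose i
    have h6 : κ.1 (lett a b L k i) = convPow ν.1 N0 (lett a b L k i) := rfl
    rw [h6]; linarith)
  have hone : ∑' g, κ' g + 16 * αE = 1 := by
    have := hκ' fun _ => 1
    simp only [mul_one, hκE1, Finset.sum_const, Finset.card_univ, Fintype.card_fin,
      nsmul_eq_mul] at this
    rw [this, mul_comm αE]; norm_num
  have hρle : ∑' g, κ' g + 8 * αE ≤ ρ := by
    apply ENNReal.le_sub_of_add_le_right (by simp [hαE, ENNReal.mul_eq_top])
    rw [add_assoc, ← add_mul]; norm_num; exact hone.le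
  have hLκ : ∑' g, κE g * ENNReal.ofReal (2 * dist o (g • o)) ≤ ENNReal.ofReal (2 * (N0 * M)) := by
    have e1 : ∀ g, κE g * ENNReal.ofReal (2 * dist o (g • o)) =
        ENNReal.ofReal (2 * (κ.1 g * (NV o).1 (1 * g))) := by
      intro g
      rw [hκE, ← ENNReal.ofReal_mul (hκp.1 g), one_mul, NV_apply, nn]
      congr 1; ring
    rw [tsum_congr e1, ← ENNReal.ofReal_tsum_of_nonneg
      (f := fun g => 2 * (κ.1 g * (NV o).1 (1 * g)))
      (fun g => mul_nonneg (by norm_num) (mul_nonneg (hκp.1 g) (nn_nonneg o _)))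
      ((op_summ κ (NV o) 1).mul_left 2), tsum_mul_left, ← op_apply, hκ, op_cp]
    apply ENNReal.ofReal_le_ofReal
    have := Lm_le hν N0
    unfold Lm at this hL1
    have : (N0 : ℝ) * Lm ν 1 ≤ N0 * M := by unfold Lm; gcongr
    unfold Lm at this
    linarith
  have hdq : ∀ n x, dv ν (N0 * n) x ≤ CE.toReal := by
    intro n x
    have hdev := devEE o hiso.out a b L k β e E c A he hE hc h1 h3 hk (le_max_right _ _) hAA
      κE κ' αE ρ hκ' hρle hone.le hκE1.le n (x⁻¹ • o)
    have hg : ∀ l : List G, ENNReal.ofReal ((gf o x).1 (uw l)) =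
        2 * ENNReal.ofReal (gpr o (x⁻¹ • o) (uw l • o)) := by
      intro l
      have : (2 : ENNReal) = ENNReal.ofReal 2 := by simp
      rw [this, ← ENNReal.ofReal_mul (by norm_num)]
      congr 1
      have h7 : dist (x⁻¹ • o) (uw l • o) = nn o (x * uw l) := by
        have := (hiso.out x).dist_eq (x⁻¹ • o) (uw l • o)
        rw [← this, smul_inv_smul, nn, mul_smul]
      simp only [gf, gpr, h7, nn_inv o hiso.out x]
      simp only [nn]; ring
    have h8 := EE_op hκp n (gf o x) (gf_nonneg x)
    simp only [hg] at h8
    rw [EE_smul, hκ, op_cp, ← pow_mul, ← dv_eq hν] at h8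
    have h9 : ∑ j ∈ Finset.range n, ρ ^ j ≤ (1 - ρ)⁻¹ := by
      rw [← ENNReal.tsum_geometric]; exact ENNReal.sum_le_tsum _
    have h10 : ENNReal.ofReal (dv ν (N0 * n) x) ≤ CE := by
      rw [← h8, hCE]
      gcongr
      refine hdev.trans ?_
      gcongr
    exact (ENNReal.ofReal_le_iff_le_toReal hCEt).1 h10
  intro n x
  have hn : n = N0 * (n / N0) + n % N0 := (Nat.div_add_mod n N0).symm
  set r := n % N0 with hr
  have hrN : r ≤ N0 := (Nat.mod_lt _ hN1).le
  have hnear : ∀ x, |((op o ν ^ n) (NV o)).1 x - ((op o ν ^ (N0 * (n / N0))) (NV o)).1 x|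
      ≤ r * Lm ν 1 := by
    intro x
    have := pow_bd hν (N0 * (n / N0)) (F := (op o ν ^ r) (NV o) - NV o) (B := r * Lm ν 1)
      (fun x => by simpa [NV_apply] using pow_NV_near hν r x) x
    rw [map_sub, ← Module.End.mul_apply, ← pow_add, ← hn] at this
    simpa using this
  have a1 := abs_le.1 (hnear x)
  have a2 := abs_le.1 (hnear 1)
  have a3 := hdq (n / N0) x
  have a4 : (r : ℝ) * Lm ν 1 ≤ N0 * M := by
    have : (r : ℝ) ≤ N0 := by exact_mod_cast hrN
    have := Lm_nonneg hν 1
    gcongr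
  unfold dv Lm at *
  linarith [a1.1, a1.2, a2.1, a2.2]

end devu


lemma cauchy_windows (g : ℝ → ℝ) (D : ℕ → ℝ) (C K δ : ℝ) (hC : 0 ≤ C) (hK : 0 ≤ K) (hδ : 0 < δ)
    (h : ∀ t : ℝ, |t| < δ → ∀ n : ℕ, 1 ≤ n →
      |g t - g 0 - t * D n| ≤ C / n + K * t ^ 2 * Real.sqrt n) :
    CauchySeq D := by
  -- comparison with the difference quotients
  let t : ℕ → ℝ := fun j => (1 / 8 : ℝ) ^ j
  let q : ℕ → ℝ := fun j => (g (t j) - g 0) / t j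
  have ht0 : ∀ j, 0 < t j := fun j => by positivity
  obtain ⟨J, hJ⟩ : ∃ J : ℕ, ∀ j ≥ J, t j < δ := by
    have := tendsto_pow_atTop_nhds_zero_of_lt_one (r := (1 / 8 : ℝ)) (by norm_num) (by norm_num)
    exact eventually_atTop.1 (this.eventually (gt_mem_nhds hδ))
  set K2 := C + 4 * K with hK2
  have hK20 : 0 ≤ K2 := by positivity
  have hq : ∀ j ≥ J, ∀ n : ℕ, 16 ^ j ≤ n → n ≤ 16 ^ (j + 1) → |q j - D n| ≤ K2 * (1 / 2) ^ j := by
    intro j hj n h1 h2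
    have hn1 : 1 ≤ n := le_trans Nat.one_le_two_pow (le_trans (Nat.pow_le_pow_left (by norm_num) j) h1)
    have hh := h (t j) (by rw [abs_of_pos (ht0 j)]; exact hJ j hj) n hn1
    have e1 : g (t j) - g 0 - t j * D n = t j * (q j - D n) := by
      simp only [q]; field_simp [(ht0 j).ne']
    rw [e1, abs_mul, abs_of_pos (ht0 j)] at hh
    have h1' : (16 : ℝ) ^ j ≤ n := by exact_mod_cast h1
    have h2' : (n : ℝ) ≤ 16 ^ (j + 1) := by exact_mod_cast h2
    have hsq : Real.sqrt n ≤ 4 * 4 ^ j := by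
      rw [Real.sqrt_le_left (by positivity)]
      refine h2'.trans (le_of_eq ?_)
      rw [mul_pow, ← pow_mul, mul_comm j 2, pow_mul, pow_succ]; norm_num; ring
    have hCn : C / n ≤ C * (1 / 16) ^ j := by
      rw [div_le_iff₀ (by exact_mod_cast hn1)]
      have : (1 / 16 : ℝ) ^ j * 16 ^ j = 1 := by rw [← mul_pow]; norm_num
      calc C = C * ((1 / 16 : ℝ) ^ j * 16 ^ j) := by rw [this, mul_one]
        _ ≤ C * ((1 / 16 : ℝ) ^ j * n) := by gcongr
        _ = _ := by ring
    have h16 : (1 / 16 : ℝ) ^ j = t j * (1 / 2) ^ j := by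
      simp only [t]; rw [← mul_pow]; norm_num
    have h84 : t j * 4 ^ j = (1 / 2 : ℝ) ^ j := by
      simp only [t]; rw [← mul_pow]; norm_num
    have : t j * |q j - D n| ≤ t j * (K2 * (1 / 2) ^ j) := by
      calc _ ≤ _ := hh
        _ ≤ C * (t j * (1 / 2) ^ j) + K * t j ^ 2 * (4 * 4 ^ j) := by
            rw [← h16]; gcongr
        _ = t j * (C * (1 / 2) ^ j + 4 * K * (t j * 4 ^ j)) := by ring
        _ = _ := by rw [h84, hK2]; ring
    exact le_of_mul_le_mul_left this (ht0 j)
  have hqd : ∀ j, dist (q (J + j)) (q (J + (j + 1))) ≤ (2 * K2) * (1 / 2) ^ j := by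
    intro j
    have a1 := hq (J + j) (by omega) (16 ^ (J + j + 1))
      (Nat.pow_le_pow_right (by norm_num) (by omega)) le_rfl
    have a2 := hq (J + (j + 1)) (by omega) (16 ^ (J + j + 1)) le_rfl
      (Nat.pow_le_pow_right (by norm_num) (by omega))
    rw [Real.dist_eq]
    have b1 : (1 / 2 : ℝ) ^ (J + j) ≤ (1 / 2) ^ j :=
      pow_le_pow_of_le_one (by norm_num) (by norm_num) (by omega)
    have b2 : (1 / 2 : ℝ) ^ (J + (j + 1)) ≤ (1 / 2) ^ j :=
      pow_le_pow_of_le_one (by norm_num) (by norm_num) (by omega)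
    rw [abs_sub_comm] at a2
    calc _ ≤ _ := abs_sub_le _ (D (16 ^ (J + j + 1))) _
      _ ≤ K2 * (1 / 2) ^ j + K2 * (1 / 2) ^ j :=
          add_le_add (a1.trans (by gcongr)) (a2.trans (by gcongr))
      _ = _ := by ring
  have hqc : CauchySeq fun j => q (J + j) :=
    cauchySeq_of_le_geometric (1 / 2) (2 * K2) (by norm_num) hqd
  obtain ⟨Q, hQ⟩ := cauchySeq_tendsto_of_complete hqc
  have hQ' : Tendsto q atTop (𝓝 Q) := by
    rw [← tendsto_add_atTop_iff_nat J]
    simpa [add_comm] using hQ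
  have hlog : Tendsto (fun n : ℕ => Nat.log 16 n) atTop atTop := by
    rw [tendsto_atTop]
    intro b
    filter_upwards [eventually_ge_atTop (16 ^ b)] with n hn
    exact (Nat.le_log_iff_pow_le (by norm_num) (by
      have : 0 < 16 ^ b := by positivity
      omega)).2 hn
  have hdiff : Tendsto (fun n : ℕ => q (Nat.log 16 n) - D n) atTop (𝓝 0) := by
    have hz : Tendsto (fun n : ℕ => K2 * (1 / 2 : ℝ) ^ (Nat.log 16 n)) atTop (𝓝 0) := by
      have := (tendsto_pow_atTop_nhds_zero_of_lt_one (r := (1 / 2 : ℝ)) (by norm_num)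
        (by norm_num)).comp hlog
      simpa using this.const_mul K2
    refine squeeze_zero_norm' ?_ hz
    filter_upwards [hlog.eventually_ge_atTop J, eventually_ge_atTop 1] with n h1 h2
    exact hq _ h1 n (Nat.pow_log_le_self _ (by omega))
      (Nat.lt_pow_succ_log_self (by norm_num) n).le
  have : Tendsto D atTop (𝓝 Q) := by
    have := (hQ'.comp hlog).sub hdiff
    simpa using this
  exact this.cauchySeq

lemma cauchy_approx (D : ℕ → ℝ)
    (h : ∀ ε > 0, ∃ D' : ℕ → ℝ, CauchySeq D' ∧ ∀ n ≥ 1, |D n - D' n| ≤ ε) : CauchySeq D := by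
  rw [Metric.cauchySeq_iff]
  intro ε hε
  obtain ⟨D', hc, hd⟩ := h (ε / 4) (by positivity)
  rw [Metric.cauchySeq_iff] at hc
  obtain ⟨N, hN⟩ := hc (ε / 4) (by positivity)
  refine ⟨max N 1, fun m hm n hn => ?_⟩
  have h1 := hN m (le_trans (le_max_left _ _) hm) n (le_trans (le_max_left _ _) hn)
  have h2 := hd m (le_trans (le_max_right _ _) hm)
  have h3 := hd n (le_trans (le_max_right _ _) hn)
  rw [Real.dist_eq] at *
  rw [abs_lt] at *
  rw [abs_le] at *
  constructor <;> linarith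

lemma deriv_of_est (f : ℝ → ℝ) (D : ℕ → ℝ) (Di C C1 : ℝ) (hC : 0 ≤ C) (hC1 : 0 ≤ C1)
    (hD : Tendsto D atTop (𝓝 Di))
    (h : ∀ ε > 0, ∃ K δ : ℝ, 0 ≤ K ∧ 0 < δ ∧ ∀ t : ℝ, |t| < δ → ∀ n : ℕ, 1 ≤ n →
      |f t - f 0 - t * D n| ≤ C / n + C1 * ε * |t| + K * t ^ 2 * Real.sqrt n) :
    HasDerivAt f Di 0 := by
  rw [hasDerivAt_iff_isLittleO, Asymptotics.isLittleO_iff]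
  intro c hc
  set ε := c / (C + C1 + 2) with hε
  have hε0 : 0 < ε := by positivity
  obtain ⟨K, δ, hK, hδ, hest⟩ := h ε hε0
  obtain ⟨N, hN⟩ := Metric.tendsto_atTop.1 hD ε hε0
  set r := min δ (min (1 / ε) (min (ε ^ 3 / (2 * K ^ 2 + 1)) (1 / (ε * (N + 1))))) with hr
  have hr0 : 0 < r := by
    refine lt_min hδ (lt_min (by positivity) (lt_min (by positivity) (by positivity)))
  filter_upwards [Metric.ball_mem_nhds (0 : ℝ) hr0] with t ht
  rw [Metric.mem_ball, dist_zero_right, Real.norm_eq_abs] at ht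
  simp only [sub_zero, smul_eq_mul, Real.norm_eq_abs]
  by_cases ht0 : t = 0
  · subst ht0; simp
  have hta : 0 < |t| := abs_pos.2 ht0
  have h1 : |t| < δ := ht.trans_le (min_le_left _ _)
  have h2 : |t| < 1 / ε := ht.trans_le ((min_le_right _ _).trans (min_le_left _ _))
  have h3 : |t| < ε ^ 3 / (2 * K ^ 2 + 1) :=
    ht.trans_le ((min_le_right _ _).trans ((min_le_right _ _).trans (min_le_left _ _)))
  have h4 : |t| < 1 / (ε * (N + 1)) :=
    ht.trans_le ((min_le_right _ _).trans ((min_le_right _ _).trans (min_le_right _ _)))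
  set n := ⌈1 / (ε * |t|)⌉₊ with hn
  have hp : 0 < ε * |t| := by positivity
  have hnl : 1 / (ε * |t|) ≤ n := Nat.le_ceil _
  have hnu : (n : ℝ) < 1 / (ε * |t|) + 1 := Nat.ceil_lt_add_one (by positivity)
  have hn0 : (0 : ℝ) < n := lt_of_lt_of_le (by positivity) hnl
  have hn1 : 1 ≤ n := by exact_mod_cast hn0
  have hεt : ε * |t| < 1 := by rw [lt_div_iff₀ hε0] at h2; linarith
  have h1le : 1 ≤ 1 / (ε * |t|) := by rw [le_div_iff₀ hp]; linarith
  have hn2 : (n : ℝ) ≤ 2 / (ε * |t|) := by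
    have : 2 / (ε * |t|) = 1 / (ε * |t|) + 1 / (ε * |t|) := by ring
    linarith
  have hNn : N ≤ n := by
    have : (N : ℝ) + 1 < 1 / (ε * |t|) := by
      rw [lt_div_iff₀ (by positivity)] at h4 ⊢
      linarith
    have : (N : ℝ) ≤ n := by linarith
    exact_mod_cast this
  have e1 := hest t h1 n hn1
  have e2 := hN n hNn
  rw [Real.dist_eq] at e2
  have e3 : C / n ≤ C * ε * |t| := by
    rw [div_le_iff₀ hn0]
    rw [div_le_iff₀ hp] at hnl
    calc C = C * 1 := by ring
      _ ≤ C * (n * (ε * |t|)) := by gcongr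
      _ = _ := by ring
  have e4 : K * |t| * Real.sqrt n ≤ ε := by
    refine (pow_le_pow_iff_left₀ (by positivity) hε0.le two_ne_zero).1 ?_
    rw [mul_pow, mul_pow, Real.sq_sqrt hn0.le]
    rw [lt_div_iff₀ (by positivity)] at h3
    have : |t| ^ 2 * n ≤ 2 * |t| / ε := by
      calc |t| ^ 2 * n ≤ |t| ^ 2 * (2 / (ε * |t|)) := by gcongr
        _ = _ := by field_simp
    have h5 : K ^ 2 * (|t| ^ 2 * n) ≤ K ^ 2 * (2 * |t| / ε) := by gcongr
    have h6 : K ^ 2 * (2 * |t| / ε) ≤ ε ^ 2 := by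
      rw [mul_div_assoc', div_le_iff₀ hε0]
      nlinarith
    linarith
  have e5 : K * t ^ 2 * Real.sqrt n ≤ ε * |t| := by
    rw [← sq_abs]
    calc K * |t| ^ 2 * Real.sqrt n = (K * |t| * Real.sqrt n) * |t| := by ring
      _ ≤ ε * |t| := by gcongr
  have e6 : |t * D n - t * Di| ≤ ε * |t| := by
    rw [← mul_sub, abs_mul, mul_comm]
    gcongr
  have e7 := abs_add_le (f t - f 0 - t * D n) (t * D n - t * Di)
  have e8 : f t - f 0 - t * D n + (t * D n - t * Di) = f t - f 0 - t * Di := by ring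
  rw [e8] at e7
  have e9 : (C + C1 + 2) * ε = c := by rw [hε]; field_simp
  calc |f t - f 0 - t * Di| ≤ (C + C1 + 2) * ε * |t| := by linarith
    _ = c * |t| := by rw [e9]


section gen
variable {V : Type*} [AddCommGroup V] [Module ℝ V]

/-- first order term -/
def SS (P Z : Module.End ℝ V) : ℕ → V → V
  | 0, _ => 0
  | k + 1, v => P (SS P Z k v) + Z ((P ^ k) v)

lemma SS_add (P Z : Module.End ℝ V) (k : ℕ) (v w : V) :
    SS P Z k (v + w) = SS P Z k v + SS P Z k w := by
  induction k with
  | zero => simp [SS]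
  | succ k ih => simp only [SS, ih, map_add]; abel

lemma SS_smul (P Z : Module.End ℝ V) (k : ℕ) (t : ℝ) (v : V) :
    SS P Z k (t • v) = t • SS P Z k v := by
  induction k with
  | zero => simp [SS]
  | succ k ih => simp only [SS, ih, map_smul, smul_add]

lemma SS_succ (P Z : Module.End ℝ V) (k : ℕ) (v : V) :
    SS P Z (k + 1) v = SS P Z k (P v) + (P ^ k) (Z v) := by
  induction k with
  | zero => simp [SS]
  | succ k ih =>
    have e1 : (P ^ (k + 1)) v = (P ^ k) (P v) := by rw [pow_succ, Module.End.mul_apply]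
    have e2 : (P ^ (k + 1)) (Z v) = P ((P ^ k) (Z v)) := by rw [pow_succ', Module.End.mul_apply]
    rw [SS, ih, SS, map_add, e1, e2]
    abel

lemma SS_sum (P Z : Module.End ℝ V) (n : ℕ) (v : V) :
    SS P Z n v = ∑ i ∈ Finset.range n, (P ^ i) (Z ((P ^ (n - 1 - i)) v)) := by
  induction n with
  | zero => simp [SS]
  | succ n ih =>
    rw [SS, ih, Finset.sum_range_succ', map_sum]
    congr 1
    · refine Finset.sum_congr rfl fun i hi => ?_
      rw [pow_succ', Module.End.mul_apply]
      congr 5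
      omega

lemma SS_id (P Z Q : Module.End ℝ V) (t : ℝ) (hQ : ∀ v, Q v = P v + t • Z v) (n : ℕ) (v : V) :
    (Q ^ (n + 1)) v - (P ^ (n + 1)) v - t • SS P Z (n + 1) v =
      ((Q ^ n) (Q v) - (P ^ n) (Q v) - t • SS P Z n (Q v)) + (t ^ 2) • SS P Z n (Z v) := by
  rw [SS_succ, pow_succ, Module.End.mul_apply, pow_succ, Module.End.mul_apply]
  have e1 : (P ^ n) (Q v) = (P ^ n) (P v) + t • (P ^ n) (Z v) := by rw [hQ, map_add, map_smul]
  have e2 : SS P Z n (Q v) = SS P Z n (P v) + t • SS P Z n (Z v) := by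
    rw [hQ, SS_add, SS_smul]
  rw [e1, e2]
  module
end gen

section fin
set_option linter.unusedSectionVars false
variable {G X : Type*} [Group G] [MetricSpace X] [MulAction G X] {o : X}
  [hiso : Fact (IsoAct G X)]

lemma fm_Lm (ν : Wt (G := G) o) (n : ℕ) : firstMoment o (convPow ν.1 n) = Lm ν n := by
  have := firstMoment_eq (cp ν n)
  rw [op_cp] at this
  exact this

lemma Lm_add_le {ν : Wt (G := G) o} (hν : IsProbMeasure ν.1) (m n : ℕ) :
    Lm ν (m + n) ≤ Lm ν m + Lm ν n := by
  have h := pow_mono hν m (F := (op o ν ^ n) (NV o)) (F' := NV o + cst o (Lm ν n))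
    (fun x => by
      have := dv_nonneg hν n x
      unfold dv at this
      simp only [Submodule.coe_add, Pi.add_apply, NV_apply, cst_apply]
      linarith) 1
  rw [map_add, pow_cst hν, ← Module.End.mul_apply, ← pow_add] at h
  exact h

lemma Lm_add_ge {ν : Wt (G := G) o} (hν : IsProbMeasure ν.1) {C : ℝ}
    (hC : ∀ n x, dv ν n x ≤ C) (m n : ℕ) :
    Lm ν m + Lm ν n - C ≤ Lm ν (m + n) := by
  have h := pow_mono hν m (F := NV o + cst o (Lm ν n - C)) (F' := (op o ν ^ n) (NV o))
    (fun x => by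
      have := hC n x
      unfold dv at this
      simp only [Submodule.coe_add, Pi.add_apply, NV_apply, cst_apply]
      linarith) 1
  rw [map_add, pow_cst hν, ← Module.End.mul_apply, ← pow_add] at h
  have h2 : Lm ν m + (Lm ν n - C) ≤ Lm ν (m + n) := h
  linarith

lemma Lm_zero (ν : Wt (G := G) o) : Lm ν 0 = 0 := by
  simp [Lm, NV_apply, nn_one]

lemma esc_near {ν : Wt (G := G) o} (hν : IsProbMeasure ν.1) {C : ℝ}
    (hC : ∀ n x, dv ν n x ≤ C) (n : ℕ) :
    |Lm ν n - n * escapeRate o ν.1| ≤ C := by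
  have hC0 : 0 ≤ C := (dv_nonneg hν 0 (1 : G)).trans (hC 0 1)
  rcases Nat.eq_zero_or_pos n with rfl | hn
  · simp [Lm_zero, hC0]
  have hup : ∀ j m : ℕ, Lm ν (j * m) ≤ j * Lm ν m := by
    intro j m
    induction j with
    | zero => simp [Lm_zero]
    | succ j ih =>
      have := Lm_add_le hν (j * m) m
      rw [add_mul, one_mul]; push_cast; linarith
  have hlo : ∀ j m : ℕ, j * (Lm ν m - C) ≤ Lm ν (j * m) := by
    intro j m
    induction j with
    | zero => simp [Lm_zero]
    | succ j ih =>
      have := Lm_add_ge hν hC (j * m) m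
      rw [add_mul, one_mul]; push_cast; linarith
  have hnR : (0 : ℝ) < n := by exact_mod_cast hn
  have h1 : escapeRate o ν.1 ≤ Lm ν n / n := by
    have := ciInf_le (f := fun n : ℕ => firstMoment o (convPow ν.1 (n + 1)) / (n + 1 : ℝ))
      ⟨0, by rintro _ ⟨k, rfl⟩; simp only [fm_Lm]; exact div_nonneg (Lm_nonneg hν _) (by positivity)⟩ (n - 1)
    rw [fm_Lm, Nat.sub_add_cancel hn] at this
    have e : ((n - 1 : ℕ) : ℝ) + 1 = n := by
      rw [Nat.cast_sub hn]; simp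
    rw [e] at this
    exact this
  have h2 : (Lm ν n - C) / n ≤ escapeRate o ν.1 := by
    refine le_ciInf fun k => ?_
    rw [fm_Lm, div_le_div_iff₀ hnR (by positivity)]
    have a := hup n (k + 1)
    have b := hlo (k + 1) n
    rw [mul_comm (k + 1) n] at b
    push_cast at b
    linarith
  rw [le_div_iff₀ hnR] at h1
  rw [div_le_iff₀ hnR] at h2
  rw [abs_le]; constructor <;> linarith

lemma F_bound {ν : Wt (G := G) o} (hν : IsProbMeasure ν.1) {C : ℝ}
    (hC : ∀ n x, dv ν n x ≤ C) (ζ : Wt (G := G) o) (hζ : ∑' g, ζ.1 g = 0) (m : ℕ) (x : G) :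
    |(op o ζ ((op o ν ^ m) (NV o))).1 x| ≤ (1 + C) * nrm o ζ.1 := by
  have hC0 : 0 ≤ C := (dv_nonneg hν 0 (1 : G)).trans (hC 0 1)
  set F := (op o ν ^ m) (NV o) with hF
  have hs := op_summ ζ F x
  have hc := summ_of_bd ζ (fun _ => nn o x + Lm ν m) |nn o x + Lm ν m| (fun g => by
    nlinarith [one_le_ww o g, abs_nonneg (nn o x + Lm ν m)])
  have e : (op o ζ F).1 x = ∑' h, ζ.1 h * (F.1 (x * h) - (nn o x + Lm ν m)) := by
    rw [op_apply]
    simp only [mul_sub]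
    rw [hs.tsum_sub hc, tsum_mul_right, hζ]; ring
  rw [e]
  refine tsum_bd ζ _ _ fun h => ?_
  have a := hC m (x * h)
  have b := dv_nonneg hν m (x * h)
  unfold dv at a b
  rw [← hF] at a b
  have c1 := nn_mul' o x h
  have c2 := nn_mul_ge o x h
  have c3 := nn_nonneg o h
  rw [ww_eq, abs_le]
  constructor <;> nlinarith

lemma Lm_lip {ν μ : Wt (G := G) o} (hν : IsProbMeasure ν.1) (hμ : IsProbMeasure μ.1) {C : ℝ}
    (hC : ∀ n x, dv μ n x ≤ C) (n : ℕ) :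
    |Lm ν n - Lm μ n| ≤ n * ((1 + C) * nrm o (ν - μ).1) := by
  refine pow_diff_bound hν (NV o) (fun j x => F_bound hμ hC _ ?_ j x) n 1
  have : ∀ g, (ν - μ).1 g = ν.1 g - μ.1 g := fun g => rfl
  simp only [this]
  rw [hν.2.1.tsum_sub hμ.2.1, hν.2.2, hμ.2.2, sub_self]

lemma Wt_s (η : Wt (G := G) o) : Summable η.1 := by
  have := summ_of_bd η (fun _ => 1) 1 (fun g => by simpa using one_le_ww o g)
  simpa using this

lemma S_claim {μ η : Wt (G := G) o} (hμ : IsProbMeasure μ.1) {f : G → ℝ} {M : ℝ}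
    (hf : ∀ g, |f g| ≤ M) (hη : ∀ g, η.1 g = μ.1 g * f g) (h0 : ∑' g, η.1 g = 0)
    (F : Vf (G := G) o) {B : ℝ} (hF : ∀ x, |F.1 x| ≤ B) (k : ℕ) :
    ∀ (l c : ℝ) (x : G), 0 ≤ l ^ 2 * B ^ 2 + 2 * l * ((SS (op o μ) (op o η) k F).1 x +
      c * ((op o μ ^ k) F).1 x) + c ^ 2 + k * M ^ 2 := by
  induction k with
  | zero =>
    intro l c x
    have h1 : (F.1 x) ^ 2 ≤ B ^ 2 := sq_le_sq' (abs_le.1 (hF x)).1 (abs_le.1 (hF x)).2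
    have h2 : (SS (op o μ) (op o η) 0 F).1 x = 0 := rfl
    have h3 : ((op o μ ^ 0) F).1 x = F.1 x := by simp
    rw [h2, h3]
    push_cast
    nlinarith [sq_nonneg (c + l * F.1 x), mul_nonneg (sq_nonneg l) (sub_nonneg.2 h1)]
  | succ k ih =>
    intro l c x
    set S := SS (op o μ) (op o η) k F with hS
    set P := (op o μ ^ k) F with hP
    have e1 : (SS (op o μ) (op o η) (k + 1) F).1 x = (op o μ S).1 x + (op o η P).1 x := rfl
    rw [e1, pow_applyL, ← hP]
    have a1 : HasSum (fun h => μ.1 h * S.1 (x * h)) ((op o μ S).1 x) := (op_summ μ S x).hasSum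
    have a2 : HasSum (fun h => η.1 h * P.1 (x * h)) ((op o η P).1 x) := (op_summ η P x).hasSum
    have a3 : HasSum (fun h => μ.1 h * P.1 (x * h)) ((op o μ P).1 x) := (op_summ μ P x).hasSum
    have a4 : HasSum μ.1 1 := by have := hμ.2.1.hasSum; rwa [hμ.2.2] at this
    have a5 : HasSum η.1 0 := by have := (Wt_s η).hasSum; rwa [h0] at this
    have a := ((((a4.mul_left (l ^ 2 * B ^ 2 + c ^ 2 + (k + 1) * M ^ 2)).add
      (a1.mul_left (2 * l))).add (a2.mul_left (2 * l))).add (a3.mul_left (2 * l * c))).add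
      (a5.mul_left (2 * c))
    have hn := a.nonneg (fun h => by
      have i := mul_nonneg (hμ.1 h) (ih l (c + f h) (x * h))
      have j : (f h) ^ 2 ≤ M ^ 2 := sq_le_sq' (abs_le.1 (hf h)).1 (abs_le.1 (hf h)).2
      have j2 := mul_nonneg (hμ.1 h) (sub_nonneg.2 j)
      simp only [hη h]
      nlinarith)
    push_cast
    linarith

lemma S_bound {μ η : Wt (G := G) o} (hμ : IsProbMeasure μ.1) {f : G → ℝ} {M : ℝ}
    (hf : ∀ g, |f g| ≤ M) (hη : ∀ g, η.1 g = μ.1 g * f g) (h0 : ∑' g, η.1 g = 0)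
    (F : Vf (G := G) o) {B : ℝ} (hF : ∀ x, |F.1 x| ≤ B) (k : ℕ) (x : G) :
    |(SS (op o μ) (op o η) k F).1 x| ≤ M * √k * B := by
  have hM : 0 ≤ M := (abs_nonneg _).trans (hf 1)
  have hB : 0 ≤ B := (abs_nonneg _).trans (hF 1)
  set s := (SS (op o μ) (op o η) k F).1 x with hs
  have h := discrim_le_zero (a := B ^ 2) (b := 2 * s) (c := k * M ^ 2) (fun l => by
    have := S_claim hμ hf hη h0 F hF k l 0 x
    rw [← hs] at this
    linarith)
  unfold discrim at h
  apply abs_le_of_sq_le_sq _ (by positivity)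
  have : (√(k : ℝ)) ^ 2 = k := Real.sq_sqrt (by positivity)
  rw [mul_pow, mul_pow, this]
  linarith

lemma SS_lin_bound {μ ζ : Wt (G := G) o} (hμ : IsProbMeasure μ.1) {C : ℝ}
    (hC : ∀ n x, dv μ n x ≤ C) (h0 : ∑' g, ζ.1 g = 0) (n : ℕ) : ∀ x,
    |(SS (op o μ) (op o ζ) n (NV o)).1 x| ≤ n * ((1 + C) * nrm o ζ.1) := by
  induction n with
  | zero => intro x; simp [SS]
  | succ n ih =>
    intro x
    have e1 : (SS (op o μ) (op o ζ) (n + 1) (NV o)).1 x =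
      (op o μ (SS (op o μ) (op o ζ) n (NV o))).1 x + (op o ζ ((op o μ ^ n) (NV o))).1 x := rfl
    rw [e1]
    have h1 := pow_bd hμ 1 ih x
    rw [pow_one] at h1
    push_cast
    calc _ ≤ _ := abs_add_le _ _
      _ ≤ _ := add_le_add h1 (F_bound hμ hC ζ h0 n x)
      _ = _ := by ring

lemma SS_sub_op (μ η η' : Wt (G := G) o) (n : ℕ) (F : Vf (G := G) o) : ∀ x,
    (SS (op o μ) (op o (η - η')) n F).1 x =
      (SS (op o μ) (op o η) n F).1 x - (SS (op o μ) (op o η') n F).1 x := by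
  induction n with
  | zero => intro x; simp [SS]
  | succ n ih =>
    intro x
    have e1 : ∀ ζ : Wt (G := G) o, (SS (op o μ) (op o ζ) (n + 1) F).1 x =
      (op o μ (SS (op o μ) (op o ζ) n F)).1 x + (op o ζ ((op o μ ^ n) F)).1 x := fun ζ => rfl
    rw [e1, e1, e1]
    have e2 : SS (op o μ) (op o (η - η')) n F =
      SS (op o μ) (op o η) n F - SS (op o μ) (op o η') n F := by ext y; exact ih y
    have e3 : (op o (η - η') ((op o μ ^ n) F)).1 x =
      (op o η ((op o μ ^ n) F)).1 x - (op o η' ((op o μ ^ n) F)).1 x := by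
      rw [op_sub]; rfl
    rw [e2, e3, map_sub]
    simp only [Submodule.coe_sub, Pi.sub_apply]
    ring

lemma second_order {μ η ν : Wt (G := G) o} (hμ : IsProbMeasure μ.1) {f : G → ℝ} {M : ℝ}
    (hf : ∀ g, |f g| ≤ M) (hη : ∀ g, η.1 g = μ.1 g * f g) (h0 : ∑' g, η.1 g = 0)
    (hν : IsProbMeasure ν.1) {C : ℝ} (hC : ∀ n x, dv ν n x ≤ C)
    (t : ℝ) (hν2 : ν = μ + t • η) (n : ℕ) :
    |Lm ν n - Lm μ n - t * (SS (op o μ) (op o η) n (NV o)).1 1| ≤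
      t ^ 2 * (n * √n * (M * ((1 + C) * nrm o η.1))) := by
  set K := (1 + C) * nrm o η.1 with hK
  have hM : 0 ≤ M := (abs_nonneg _).trans (hf 1)
  have hK0 : 0 ≤ K := (abs_nonneg _).trans (F_bound hν hC η h0 0 1)
  have hQ : ∀ v, op o ν v = op o μ v + t • op o η v := by
    intro v; rw [hν2, map_add, map_smul]; rfl
  have key : ∀ n m : ℕ, |((op o ν ^ n) ((op o ν ^ m) (NV o))).1 1 -
      ((op o μ ^ n) ((op o ν ^ m) (NV o))).1 1 -
      t * (SS (op o μ) (op o η) n ((op o ν ^ m) (NV o))).1 1| ≤ t ^ 2 * (n * √n * (M * K)) := by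
    intro n
    induction n with
    | zero => intro m; simp [SS]
    | succ n ih =>
      intro m
      have h1 := congrArg (fun F : Vf (G := G) o => F.1 1)
        (SS_id (op o μ) (op o η) (op o ν) t hQ n ((op o ν ^ m) (NV o)))
      simp only [Submodule.coe_sub, Submodule.coe_add, Pi.sub_apply, Pi.add_apply,
        Submodule.coe_smul, Pi.smul_apply, smul_eq_mul] at h1
      rw [h1, ← pow_applyL]
      have h2 := S_bound hμ hf hη h0 _ (F_bound hν hC η h0 m) n 1
      rw [← hK] at h2
      have h3 := mul_le_mul_of_nonneg_left h2 (sq_nonneg t)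
      have h4 : √(n : ℝ) ≤ √((n + 1 : ℕ) : ℝ) := Real.sqrt_le_sqrt (by push_cast; linarith)
      have h5 : (n : ℝ) * √n * (M * K) + M * √n * K ≤
          ((n + 1 : ℕ) : ℝ) * √((n + 1 : ℕ) : ℝ) * (M * K) := by
        calc _ = ((n : ℝ) + 1) * √n * (M * K) := by ring
          _ ≤ _ := by push_cast at h4 ⊢; gcongr
      have h6 := mul_le_mul_of_nonneg_left h5 (sq_nonneg t)
      refine (abs_add_le _ _).trans ?_
      rw [abs_mul (t ^ 2), abs_of_nonneg (sq_nonneg t)]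
      have h7 := ih (m + 1)
      rw [mul_add] at h6
      linarith
  have := key n 0
  simp only [pow_zero, Module.End.one_apply] at this
  exact this
end fin


section approx
set_option linter.unusedSectionVars false
variable {G X : Type*} [Group G] [MetricSpace X] [MulAction G X] {o : X}
  [hiso : Fact (IsoAct G X)]

lemma nrm_add (a b : Wt (G := G) o) : nrm o (a + b).1 ≤ nrm o a.1 + nrm o b.1 := by
  unfold nrm
  rw [← (Wt_summ a).tsum_add (Wt_summ b)]
  refine (Wt_summ (a + b)).tsum_le_tsum (fun g => ?_) ((Wt_summ a).add (Wt_summ b))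
  rw [← mul_add]
  exact mul_le_mul_of_nonneg_left (abs_add_le _ _) (ww_pos o g).le

lemma nrm_smul (c : ℝ) (a : Wt (G := G) o) : nrm o (c • a).1 = |c| * nrm o a.1 := by
  unfold nrm
  rw [← tsum_mul_left]
  congr 1; ext g
  have : (c • a).1 g = c * a.1 g := rfl
  rw [this, abs_mul]; ring

lemma sum_le_nrm (a : Wt (G := G) o) : |∑' g, a.1 g| ≤ nrm o a.1 := by
  have := tsum_bd a (fun _ => 1) 1 (fun g => by simpa using one_le_ww o g)
  simpa using this

open Classical in
lemma approx_eta (μ η : Wt (G := G) o) (hμ : IsProbMeasure μ.1)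
    (hac : ∀ g, μ.1 g = 0 → η.1 g = 0) (h0 : ∑' g, η.1 g = 0) (ε : ℝ) (hε : 0 < ε) :
    ∃ (η' : Wt (G := G) o) (f : G → ℝ) (M : ℝ), (∀ g, |f g| ≤ M) ∧
      (∀ g, η'.1 g = μ.1 g * f g) ∧ ∑' g, η'.1 g = 0 ∧ nrm o (η - η').1 ≤ ε := by
  have hn := nrm_nonneg o μ.1
  set ε' := ε / (1 + nrm o μ.1) with hε'
  have hε'0 : 0 < ε' := by positivity
  have hs := (Wt_summ η).hasSum
  obtain ⟨F, hF⟩ := (Metric.tendsto_atTop.1 hs) ε' hε'0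
  have hF := hF F le_rfl
  rw [Real.dist_eq, abs_lt] at hF
  have hF := hF.1
  let τ : Wt (G := G) o := ⟨fun g => if g ∈ F then 0 else η.1 g, by
    show Summable _
    refine Summable.of_nonneg_of_le (fun g => mul_nonneg (ww_pos o g).le (abs_nonneg _))
      (fun g => ?_) (Wt_summ η)
    refine mul_le_mul_of_nonneg_left ?_ (ww_pos o g).le
    show |if g ∈ F then 0 else η.1 g| ≤ |η.1 g|
    split_ifs <;> simp⟩
  have hτ : ∀ g, τ.1 g = if g ∈ F then 0 else η.1 g := fun g => rfl
  have fin : ∀ a : G → ℝ, HasSum (fun g => if g ∈ F then a g else 0) (∑ g ∈ F, a g) := by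
    intro a
    have h : HasSum (fun g => if g ∈ F then a g else 0)
        (∑ g ∈ F, if g ∈ F then a g else 0) :=
      hasSum_sum_of_ne_finset_zero (fun b hb => by simp [hb])
    rwa [Finset.sum_congr rfl (fun g hg => if_pos hg)] at h
  have hτn : nrm o τ.1 ≤ ε' := by
    have h1 := hs.sub (fin fun g => ww o g * |η.1 g|)
    have h2 : nrm o τ.1 = ∑' g, ww o g * |η.1 g| - ∑ g ∈ F, ww o g * |η.1 g| := by
      rw [← h1.tsum_eq]
      unfold nrm
      congr 1; ext g
      rw [hτ]
      split_ifs <;> simp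
    rw [h2]; linarith
  set m := ∑ g ∈ F, η.1 g with hm
  have hτs : ∑' g, τ.1 g = - m := by
    have h1 := (Wt_s η).hasSum.sub (fin η.1)
    rw [h0, zero_sub] at h1
    rw [← h1.tsum_eq]
    congr 1; ext g; rw [hτ]; split_ifs <;> simp
  have hmn : |m| ≤ ε' := by
    have := sum_le_nrm τ
    rw [hτs, abs_neg] at this
    linarith
  refine ⟨η - τ - m • μ, fun g => (if g ∈ F then η.1 g / μ.1 g else 0) - m,
    ∑ g ∈ F, |η.1 g / μ.1 g| + |m|, fun g => ?_, fun g => ?_, ?_, ?_⟩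
  · refine (abs_sub _ _).trans ?_
    gcongr
    split_ifs with h
    · exact Finset.single_le_sum (f := fun g => |η.1 g / μ.1 g|) (fun i _ => abs_nonneg _) h
    · simp; exact Finset.sum_nonneg fun i _ => abs_nonneg _
  · show η.1 g - τ.1 g - m * μ.1 g = _
    rw [hτ]
    by_cases hg : μ.1 g = 0
    · rw [hg, hac g hg]; simp
    · by_cases hgF : g ∈ F
      · simp only [if_pos hgF]; field_simp; ring
      · simp only [if_neg hgF]; ring
  · have e : ∀ g, (η - τ - m • μ).1 g = η.1 g - τ.1 g - m * μ.1 g := fun g => rfl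
    simp only [e]
    rw [((Wt_s η).sub (Wt_s τ)).tsum_sub ((Wt_s μ).mul_left m), (Wt_s η).tsum_sub (Wt_s τ),
      tsum_mul_left, hμ.2.2, hτs, h0]
    ring
  · have e : η - (η - τ - m • μ) = τ + m • μ := by abel
    rw [e]
    have h1 := nrm_add τ (m • μ)
    rw [nrm_smul] at h1
    have h2 : ε' * (1 + nrm o μ.1) = ε := by rw [hε']; field_simp
    nlinarith

lemma nu_prob {μ η : Wt (G := G) o} (hμ : IsProbMeasure μ.1) {f : G → ℝ} {M : ℝ}
    (hf : ∀ g, |f g| ≤ M) (hη : ∀ g, η.1 g = μ.1 g * f g) (h0 : ∑' g, η.1 g = 0)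
    (t : ℝ) (ht : |t| * M ≤ 1) : IsProbMeasure (μ + t • η).1 := by
  have e : ∀ g, (μ + t • η).1 g = μ.1 g + t * η.1 g := fun g => rfl
  refine ⟨fun g => ?_, Wt_s _, ?_⟩
  · rw [e, hη]
    have h1 : |t * f g| ≤ 1 := by
      rw [abs_mul]; exact (mul_le_mul_of_nonneg_left (hf g) (abs_nonneg t)).trans ht
    have := hμ.1 g
    nlinarith [(abs_le.1 h1).1]
  · simp only [e]
    rw [(Wt_s μ).tsum_add ((Wt_s η).mul_left t), tsum_mul_left, h0, hμ.2.2]; simp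

lemma en_mem (η : G → ℝ) (h : enorm01 o η ≠ ⊤) : η ∈ Wt (G := G) o := by
  show Summable _
  have := ENNReal.summable_toReal h
  refine this.congr fun g => ?_
  exact ENNReal.toReal_ofReal (mul_nonneg (ww_pos o g).le (abs_nonneg (η g)))

lemma en_nrm (η : G → ℝ) (c : ℝ) (hc : 0 ≤ c) (h : enorm01 o η ≤ ENNReal.ofReal c) :
    nrm o η ≤ c := by
  have hm := en_mem η (ne_top_of_le_ne_top ENNReal.ofReal_ne_top h)
  have : enorm01 o η = ENNReal.ofReal (nrm o η) := by
    unfold nrm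
    rw [ENNReal.ofReal_tsum_of_nonneg
      (fun g => mul_nonneg (ww_pos o g).le (abs_nonneg _)) hm]
    rfl
  rw [this] at h
  exact (ENNReal.ofReal_le_ofReal_iff hc).1 h

lemma nrm_zero_imp (η : Wt (G := G) o) (h : nrm o η.1 ≤ 0) : η = 0 := by
  ext g
  have h1 := (Wt_summ η).le_tsum g (fun j _ => mul_nonneg (ww_pos o j).le (abs_nonneg _))
  have h2 : ww o g * |η.1 g| ≤ 0 := h1.trans h
  have h3 := one_le_ww o g
  have h4 := abs_nonneg (η.1 g)
  have : |η.1 g| = 0 := by nlinarith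
  exact abs_eq_zero.1 this

/-- the averaged derivative -/
noncomputable def Dn (μ η : Wt (G := G) o) (n : ℕ) : ℝ :=
  (1 / (n : ℝ)) * (SS (op o μ) (op o η) n (NV o)).1 1

lemma Dn_eq (μ η : Wt (G := G) o) (n : ℕ) :
    (1 / (n : ℝ)) * ∑ i ∈ Finset.range n,
      ∑' g : G, conv (convPow μ.1 i) (conv η.1 (convPow μ.1 (n - 1 - i))) g * dist o (g • o) =
    Dn μ η n := by
  unfold Dn
  congr 1
  rw [SS_sum]
  have e : ∀ (s : Finset ℕ) (Φ : ℕ → Vf (G := G) o), (∑ i ∈ s, Φ i).1 1 = ∑ i ∈ s, (Φ i).1 1 := by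
    intro s Φ
    induction s using Finset.cons_induction with
    | empty => simp
    | cons a s ha ih => rw [Finset.sum_cons, Finset.sum_cons, ← ih]; rfl
  rw [e]
  refine Finset.sum_congr rfl fun i _ => ?_
  have h1 := firstMoment_eq (cv (cp μ i) (cv η (cp μ (n - 1 - i))))
  rw [op_cv, op_cv, op_cp, op_cp] at h1
  exact h1

lemma Dn_sub {μ η η' : Wt (G := G) o} (hμ : IsProbMeasure μ.1) {C : ℝ}
    (hC : ∀ n x, dv μ n x ≤ C) (h0 : ∑' g, η.1 g = 0) (h0' : ∑' g, η'.1 g = 0) (n : ℕ)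
    (hn : 1 ≤ n) : |Dn μ η n - Dn μ η' n| ≤ (1 + C) * nrm o (η - η').1 := by
  have h1 := SS_lin_bound (ζ := η - η') hμ hC (by
    have e : ∀ g, (η - η').1 g = η.1 g - η'.1 g := fun g => rfl
    simp only [e]
    rw [(Wt_s η).tsum_sub (Wt_s η'), h0, h0', sub_zero]) n 1
  rw [SS_sub_op] at h1
  have hnR : (0 : ℝ) < n := by exact_mod_cast hn
  unfold Dn
  rw [← mul_sub, abs_mul, abs_of_pos (by positivity), one_div, inv_mul_le_iff₀ hnR]
  exact h1

lemma esc_second {μ η ν : Wt (G := G) o} (hμ : IsProbMeasure μ.1) {f : G → ℝ} {M : ℝ}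
    (hf : ∀ g, |f g| ≤ M) (hη : ∀ g, η.1 g = μ.1 g * f g) (h0 : ∑' g, η.1 g = 0)
    (hν : IsProbMeasure ν.1) {C : ℝ} (hCμ : ∀ n x, dv μ n x ≤ C) (hC : ∀ n x, dv ν n x ≤ C)
    (t : ℝ) (hν2 : ν = μ + t • η) (n : ℕ) (hn : 1 ≤ n) :
    |escapeRate o ν.1 - escapeRate o μ.1 - t * Dn μ η n| ≤
      (2 * C) / n + (M * ((1 + C) * nrm o η.1)) * t ^ 2 * √n := by
  have hnR : (0 : ℝ) < n := by exact_mod_cast hn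
  have a := esc_near hμ hCμ n
  have b := esc_near hν hC n
  have c := second_order hμ hf hη h0 hν hC t hν2 n
  have e : (SS (op o μ) (op o η) n (NV o)).1 1 = n * Dn μ η n := by
    unfold Dn; field_simp
  rw [e] at c
  have key : |n * (escapeRate o ν.1 - escapeRate o μ.1 - t * Dn μ η n)| ≤
      2 * C + t ^ 2 * (n * √n * (M * ((1 + C) * nrm o η.1))) := by
    rw [abs_le] at *
    constructor <;> nlinarith
  rw [abs_mul, abs_of_pos hnR] at key
  have : (2 * C) / n + (M * ((1 + C) * nrm o η.1)) * t ^ 2 * √n =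
    (2 * C + t ^ 2 * (n * √n * (M * ((1 + C) * nrm o η.1)))) / n := by field_simp
  rw [this, le_div_iff₀ hnR]
  linarith

lemma esc_lip {ν μ : Wt (G := G) o} (hν : IsProbMeasure ν.1) (hμ : IsProbMeasure μ.1) {C : ℝ}
    (hC : ∀ n x, dv μ n x ≤ C) (hCν : ∀ n x, dv ν n x ≤ C) :
    |escapeRate o ν.1 - escapeRate o μ.1| ≤ (1 + C) * nrm o (ν - μ).1 := by
  have key : ∀ n : ℕ, 1 ≤ n → |escapeRate o ν.1 - escapeRate o μ.1| ≤
      (1 + C) * nrm o (ν - μ).1 + (2 * C) / n := by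
    intro n hn
    have hnR : (0 : ℝ) < n := by exact_mod_cast hn
    have a := esc_near hμ hC n
    have b := esc_near hν hCν n
    have c := Lm_lip hν hμ hC n
    have k : |n * (escapeRate o ν.1 - escapeRate o μ.1)| ≤
        n * ((1 + C) * nrm o (ν - μ).1) + 2 * C := by
      rw [abs_le] at *
      constructor <;> linarith
    rw [abs_mul, abs_of_pos hnR] at k
    have : (1 + C) * nrm o (ν - μ).1 + (2 * C) / n =
      (n * ((1 + C) * nrm o (ν - μ).1) + 2 * C) / n := by field_simp
    rw [this, le_div_iff₀ hnR]
    linarith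
  have lim : Tendsto (fun n : ℕ => (1 + C) * nrm o (ν - μ).1 + (2 * C) / n) atTop
      (𝓝 ((1 + C) * nrm o (ν - μ).1 + 0)) :=
    tendsto_const_nhds.add (tendsto_const_div_atTop_nhds_zero_nat _)
  rw [add_zero] at lim
  exact ge_of_tendsto lim (eventually_atTop.2 ⟨1, key⟩)
end approx


/-- Differentiability of the escape rate (Theorem 1.3). -/
theorem escape_rate_differentiable
    {G X : Type*} [Group G] [Countable G] [MetricSpace X] [MulAction G X]
    (o : X) (hgeo : IsGeodesicSpace X)
    (hiso : ∀ g : G, Isometry fun x : X => g • x)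
    (hind : HasIndepContracting G o)
    (μ : G → ℝ) (hμ : IsProbMeasure μ) (hne : NonElementary o μ)
    (hL : HasFiniteFirstMoment o μ)
    (η : G → ℝ) (hηac : ∀ g : G, μ g = 0 → η g = 0)
    (hηfin : enorm01 o η ≠ ⊤)
    (μt : ℝ → G → ℝ) (hμtprob : ∀ t ∈ Set.Icc (-1 : ℝ) 1, IsProbMeasure (μt t))
    (hlo : IsLittleO01 o fun t g => μt t g - μ g - t * η g) :
    ∃ D : ℝ,
      Filter.Tendsto (fun n : ℕ =>
          (1 / (n : ℝ)) * ∑ i ∈ Finset.range n,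
            ∑' g : G, conv (convPow μ i) (conv η (convPow μ (n - 1 - i))) g * dist o (g • o))
        Filter.atTop (𝓝 D) ∧
      HasDerivAt (fun t : ℝ => escapeRate o (μt t)) D 0 := by
  have : Fact (IsoAct G X) := ⟨hiso⟩
  have hμm : μ ∈ Wt (G := G) o := by
    show Summable _
    refine (hμ.2.1.add hL).congr fun g => ?_
    rw [abs_of_nonneg (hμ.1 g), ww]; ring
  have hηm : η ∈ Wt (G := G) o := en_mem η hηfin
  lift μ to Wt (G := G) o using hμm
  lift η to Wt (G := G) o using hηm
  obtain ⟨C, δ, hC, hδ, hdev⟩ := dev_unif hgeo μ hμ hne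
  have hmem : ∀ {t : ℝ} {c : ℝ}, enorm01 o (fun g => μt t g - μ.1 g - t * η.1 g) ≤
      ENNReal.ofReal c → 0 ≤ c →
      ∃ κ : Wt (G := G) o, κ.1 = μt t ∧ nrm o (κ - (μ + t • η)).1 ≤ c := by
    intro t c h hc
    have h1 := en_mem _ (ne_top_of_le_ne_top ENNReal.ofReal_ne_top h)
    let ρ : Wt (G := G) o := ⟨_, h1⟩
    have e : (ρ + (μ + t • η)).1 = μt t := by
      ext g
      show (μt t g - μ.1 g - t * η.1 g) + (μ.1 g + t * η.1 g) = μt t g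
      ring
    refine ⟨ρ + (μ + t • η), e, ?_⟩
    rw [add_sub_cancel_right]
    exact en_nrm _ c hc h
  have hzero : μt 0 = μ.1 := by
    obtain ⟨d, hd, h⟩ := hlo 1 one_pos
    have h := h 0 (by simpa using hd)
    obtain ⟨κ, hκ, hn⟩ := hmem h (by simp)
    have := nrm_zero_imp _ (hn.trans (by simp))
    rw [zero_smul, add_zero, sub_eq_zero] at this
    rw [← hκ, this]
  have h0 : ∑' g, η.1 g = 0 := by
    by_contra hne0
    have hpos : 0 < |∑' g, η.1 g| := abs_pos.2 hne0
    obtain ⟨d, hd, h⟩ := hlo (|∑' g, η.1 g| / 2) (by positivity)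
    set t : ℝ := min (d / 2) 1 with ht
    have ht0 : 0 < t := lt_min (by positivity) one_pos
    have htd : |t| < d := by
      rw [abs_of_pos ht0]; exact lt_of_le_of_lt (min_le_left _ _) (by linarith)
    have ht1 : t ≤ 1 := min_le_right _ _
    obtain ⟨κ, hκ, hn⟩ := hmem (h t htd) (by positivity)
    have hp := hμtprob t ⟨by linarith, ht1⟩
    rw [← hκ] at hp
    have hs := sum_le_nrm (κ - (μ + t • η))
    have e : ∀ g, (κ - (μ + t • η)).1 g = κ.1 g - (μ.1 g + t * η.1 g) := fun g => rfl
    simp only [e] at hs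
    rw [(Wt_s κ).tsum_sub ((Wt_s μ).add ((Wt_s η).mul_left t)),
      (Wt_s μ).tsum_add ((Wt_s η).mul_left t), tsum_mul_left, hp.2.2, hμ.2.2] at hs
    have e2 : (1 : ℝ) - (1 + t * ∑' g, η.1 g) = - (t * ∑' g, η.1 g) := by ring
    rw [e2, abs_neg, abs_mul] at hs
    have h3 := mul_pos (abs_pos.2 ht0.ne') hpos
    have := hs.trans hn
    nlinarith
  have hdevμ : ∀ n x, dv μ n x ≤ C := hdev μ hμ (by rw [sub_self]; simpa [nrm] using hδ.le)
  -- perturbations with bounded density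
  have hpert : ∀ (η' : Wt (G := G) o) (f : G → ℝ) (M : ℝ), (∀ g, |f g| ≤ M) →
      (∀ g, η'.1 g = μ.1 g * f g) → ∑' g, η'.1 g = 0 →
      ∃ K δ' : ℝ, 0 ≤ K ∧ 0 < δ' ∧ ∀ t : ℝ, |t| < δ' →
        IsProbMeasure (μ + t • η').1 ∧ (∀ n x, dv (μ + t • η') n x ≤ C) ∧ ∀ n : ℕ, 1 ≤ n →
        |escapeRate o (μ + t • η').1 - escapeRate o μ.1 - t * Dn μ η' n| ≤
          (2 * C) / n + K * t ^ 2 * √n := by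
    intro η' f M hf hη' h0'
    have hM : 0 ≤ M := (abs_nonneg _).trans (hf 1)
    have hN := nrm_nonneg o η'.1
    refine ⟨M * ((1 + C) * nrm o η'.1), min (1 / (1 + M)) (δ / (1 + nrm o η'.1)), by positivity,
      by positivity, fun t ht => ?_⟩
    have ht1 := ht.trans_le (min_le_left _ _)
    have ht2 := ht.trans_le (min_le_right _ _)
    rw [lt_div_iff₀ (by positivity)] at ht1 ht2
    have ha := abs_nonneg t
    have hp : IsProbMeasure (μ + t • η').1 := nu_prob hμ hf hη' h0' t (by nlinarith)
    have hd : ∀ n x, dv (μ + t • η') n x ≤ C := hdev _ hp (by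
      rw [add_sub_cancel_left, nrm_smul]; nlinarith)
    exact ⟨hp, hd, fun n hn => esc_second hμ hf hη' h0' hp hdevμ hd t rfl n hn⟩
  have hcau : CauchySeq (Dn μ η) := by
    refine cauchy_approx _ fun ε hε => ?_
    obtain ⟨η', f, M, hf, hη', h0', hn⟩ := approx_eta μ η hμ hηac h0 (ε / (1 + C)) (by positivity)
    obtain ⟨K, δ', hK, hδ', hh⟩ := hpert η' f M hf hη' h0'
    refine ⟨Dn μ η', ?_, fun n hn1 => ?_⟩
    · refine cauchy_windows (fun t => escapeRate o (μ + t • η').1) _ (2 * C) K δ'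
        (by positivity) hK hδ' fun t ht n hn1 => ?_
      have := (hh t ht).2.2 n hn1
      simpa only [zero_smul, add_zero] using this
    · refine (Dn_sub hμ hdevμ h0 h0' n hn1).trans ?_
      rw [le_div_iff₀ (by positivity)] at hn
      linarith
  obtain ⟨D, hD⟩ := cauchySeq_tendsto_of_complete hcau
  refine ⟨D, ?_, ?_⟩
  · refine hD.congr fun n => ?_
    rw [← Dn_eq]
  · refine deriv_of_est _ (Dn μ η) D (2 * C) (3 * (1 + C)) (by positivity) (by positivity) hD ?_
    intro ε hε
    obtain ⟨η', f, M, hf, hη', h0', hn⟩ := approx_eta μ η hμ hηac h0 ε hε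
    obtain ⟨K, δ', hK, hδ', hh⟩ := hpert η' f M hf hη' h0'
    obtain ⟨d, hd, hl⟩ := hlo ε hε
    have hN := nrm_nonneg o η.1
    refine ⟨K, min (min δ' d) (min 1 (δ / (ε + nrm o η.1))), hK, by positivity,
      fun t ht n hn1 => ?_⟩
    have ht1 := ht.trans_le ((min_le_left _ _).trans (min_le_left _ _))
    have ht2 := ht.trans_le ((min_le_left _ _).trans (min_le_right _ _))
    have ht3 := ht.trans_le ((min_le_right _ _).trans (min_le_left _ _))
    have ht4 := ht.trans_le ((min_le_right _ _).trans (min_le_right _ _))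
    rw [lt_div_iff₀ (by positivity)] at ht4
    have ha := abs_nonneg t
    obtain ⟨κ, hκ, hκn⟩ := hmem (hl t ht2) (by positivity)
    have hp := hμtprob t ⟨(abs_lt.1 ht3).1.le, (abs_lt.1 ht3).2.le⟩
    rw [← hκ] at hp
    have hdκ : ∀ n x, dv κ n x ≤ C := hdev κ hp (by
      have e : κ - μ = (κ - (μ + t • η)) + t • η := by abel
      rw [e]
      refine (nrm_add _ _).trans ?_
      rw [nrm_smul]; linarith)
    obtain ⟨hpν, hdν, hest⟩ := hh t ht1
    have hest := hest n hn1
    have hlip := esc_lip hp hpν hdν hdκ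
    have hnn : nrm o (κ - (μ + t • η')).1 ≤ 2 * ε * |t| := by
      have e : κ - (μ + t • η') = (κ - (μ + t • η)) + t • (η - η') := by rw [smul_sub]; abel
      rw [e]
      refine (nrm_add _ _).trans ?_
      rw [nrm_smul]
      nlinarith
    have hlip2 : |escapeRate o κ.1 - escapeRate o (μ + t • η').1| ≤ (1 + C) * (2 * ε * |t|) :=
      hlip.trans (by gcongr)
    have hDs : |t * (Dn μ η n - Dn μ η' n)| ≤ (1 + C) * (ε * |t|) := by
      rw [abs_mul]
      have := (Dn_sub hμ hdevμ h0 h0' n hn1).trans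
        (mul_le_mul_of_nonneg_left hn (by positivity))
      calc _ ≤ |t| * ((1 + C) * ε) := by gcongr
        _ = _ := by ring
    show |escapeRate o (μt t) - escapeRate o (μt 0) - t * Dn μ η n| ≤ _
    rw [hzero, ← hκ]
    rw [abs_le] at *
    constructor <;> linarith
end

section
/- Let X be a geodesic metric space with basepoint o, let G be a countable group acting on X by isometries containing two independent contracting isometries, and let μ be a non-elementary probability measure on G. Then there exist K > 0 and ε > 0 with the following property: for every integer k > 2, every j with 1 < j < k, every a, b, c ∈ G, and every family (ν_i) (for 2 ≤ i ≤ k−1, i ≠ j) of probability measures on G with ‖ν_i − μ‖₀ < ε, if one sets g₁ = a, g_j = b, g_k = c and draws the remaining g_i (2 ≤ i ≤ k−1, i ≠ j) independently with law ν_i, then with probability at least 1 − K e^{−k/K} there exists l with 1 < l < k such that d((g₁g₂⋯g_l)·o, im γ) < K for every geodesic γ in X from o to (g₁g₂⋯g_k)·o. -/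
open Filter Topology Pointwise

open Classical in
/-- Weight of a tuple `(g₁,…,g_k)` where `g₁ = a`, `g_j = b`, `g_k = c` are fixed
(point masses) and `g_i` has law `ν i` for the remaining indices. -/
noncomputable def tupleWeight {G : Type*} [Group G] (k j : ℕ) (a b c : G)
    (ν : ℕ → G → ℝ) (x : Fin k → G) : ℝ :=
  ∏ i : Fin k,
    if (i : ℕ) + 1 = 1 then (if x i = a then (1 : ℝ) else 0)
    else if (i : ℕ) + 1 = j then (if x i = b then (1 : ℝ) else 0)
    else if (i : ℕ) + 1 = k then (if x i = c then (1 : ℝ) else 0)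
    else ν ((i : ℕ) + 1) (x i)

/-- The event: there exists `1 < l < k` such that `(g₁⋯g_l)·o` is `K`-close to every
geodesic from `o` to `(g₁⋯g_k)·o`. -/
def CloseEvent {G X : Type*} [Group G] [MetricSpace X] [MulAction G X]
    (o : X) (K : ℝ) {k : ℕ} (x : Fin k → G) : Prop :=
  ∃ l : ℕ, 1 < l ∧ l < k ∧
    ∀ f : ℝ → X, IsGeodesicSegment f o ((List.ofFn x).prod • o) →
      Metric.infDist (((List.ofFn x).take l).prod • o)
        (f '' Set.Icc (0 : ℝ) (dist o ((List.ofFn x).prod • o))) < K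

structure Contr {X : Type*} [MetricSpace X] (K : ℝ) (A : Set X) : Prop where
  pos : 0 < K
  ne : ∀ x, (projSet A x).Nonempty
  con : ∀ (f : ℝ → X) (x y : X), IsGeodesicSegment f x y →
    (∀ t ∈ Set.Icc (0 : ℝ) (dist x y), K ≤ Metric.infDist (f t) A) →
    ∀ p ∈ projSet A x, ∀ q ∈ projSet A y, dist p q ≤ K

section geo
variable {X : Type*} [MetricSpace X]

lemma geo_sub {f : ℝ → X} {x y : X} (hf : IsGeodesicSegment f x y) {s : ℝ}
    (hs : s ∈ Set.Icc (0 : ℝ) (dist x y)) :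
    dist x (f s) = s ∧ dist (f s) y = dist x y - s ∧ IsGeodesicSegment f x (f s) := by
  obtain ⟨h0, h1, h2⟩ := hf
  have e1 : dist x (f s) = s := by
    have := h2 0 ⟨le_rfl, dist_nonneg⟩ s hs
    rw [h0] at this
    rw [this, zero_sub, abs_neg, abs_of_nonneg hs.1]
  have e2 : dist (f s) y = dist x y - s := by
    have := h2 s hs (dist x y) ⟨dist_nonneg, le_rfl⟩
    rw [h1] at this
    rw [this, abs_sub_comm, abs_of_nonneg (by linarith [hs.2])]
  refine ⟨e1, e2, h0, by rw [e1], ?_⟩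
  rw [e1]
  intro a ha b hb
  exact h2 a ⟨ha.1, ha.2.trans hs.2⟩ b ⟨hb.1, hb.2.trans hs.2⟩

lemma entry {K : ℝ} {A : Set X} (hA : Contr K A) {f : ℝ → X} {x y : X}
    (hf : IsGeodesicSegment f x y) {p q : X} (hp : p ∈ projSet A x) (hq : q ∈ projSet A y)
    (h : K < dist p q) : ∃ t ∈ Set.Icc (0 : ℝ) (dist x y), dist p (f t) ≤ 2 * K := by
  have hK := hA.pos
  by_cases hx : Metric.infDist x A ≤ K
  · refine ⟨0, ⟨le_rfl, dist_nonneg⟩, ?_⟩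
    rw [hf.1, dist_comm, hp.2]; linarith
  push Not at hx
  have hlip : ∀ s ∈ Set.Icc (0 : ℝ) (dist x y), ∀ t ∈ Set.Icc (0 : ℝ) (dist x y),
      Metric.infDist (f s) A ≤ Metric.infDist (f t) A + |s - t| := by
    intro s hs t ht
    rw [← hf.2.2 s hs t ht]
    exact Metric.infDist_le_infDist_add_dist
  have hcont : ContinuousOn (fun t => Metric.infDist (f t) A) (Set.Icc (0 : ℝ) (dist x y)) := by
    have hfc : ContinuousOn f (Set.Icc (0 : ℝ) (dist x y)) := by
      have : LipschitzOnWith 1 f (Set.Icc (0 : ℝ) (dist x y)) := by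
        apply LipschitzOnWith.of_dist_le_mul
        intro s hs t ht
        rw [hf.2.2 s hs t ht]; simp [Real.dist_eq]
      exact this.continuousOn
    exact (Metric.continuous_infDist_pt A).comp_continuousOn hfc
  have hcomp : IsCompact {t ∈ Set.Icc (0 : ℝ) (dist x y) | Metric.infDist (f t) A ≤ K} := by
    have : {t ∈ Set.Icc (0 : ℝ) (dist x y) | Metric.infDist (f t) A ≤ K} =
      Set.Icc (0 : ℝ) (dist x y) ∩ (fun t => Metric.infDist (f t) A) ⁻¹' Set.Iic K := rfl
    rw [this]
    exact isCompact_Icc.of_isClosed_subset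
      (hcont.preimage_isClosed_of_isClosed isClosed_Icc isClosed_Iic) Set.inter_subset_left
  have hne : {t ∈ Set.Icc (0 : ℝ) (dist x y) | Metric.infDist (f t) A ≤ K}.Nonempty := by
    by_contra hn
    rw [Set.not_nonempty_iff_eq_empty] at hn
    have := hA.con f x y hf (by
      intro t ht
      by_contra hlt
      have : t ∈ {t ∈ Set.Icc (0 : ℝ) (dist x y) | Metric.infDist (f t) A ≤ K} :=
        ⟨ht, by linarith⟩
      rw [hn] at this; exact this) p hp q hq
    linarith
  obtain ⟨t0, ⟨ht0, hle⟩, hmin⟩ := hcomp.exists_isLeast hne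
  have hlt : ∀ t ∈ Set.Icc (0 : ℝ) (dist x y), t < t0 → K < Metric.infDist (f t) A := by
    intro t ht htt
    by_contra hc
    have := hmin ⟨ht, not_lt.mp hc⟩
    linarith
  have ht0pos : 0 < t0 := by
    rcases ht0.1.lt_or_eq with h | h
    · exact h
    · rw [← h, hf.1] at hle; linarith
  have hge : K ≤ Metric.infDist (f t0) A := by
    by_contra hc
    push Not at hc
    set e := K - Metric.infDist (f t0) A
    have he : 0 < e := by simp only [e]; linarith
    have hs : max 0 (t0 - e) ∈ Set.Icc (0 : ℝ) (dist x y) :=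
      ⟨le_max_left _ _, max_le dist_nonneg (by linarith [ht0.2])⟩
    have h1 := hlt _ hs (max_lt ht0pos (by linarith))
    have h2 := hlip _ hs t0 ht0
    have h3 : |max 0 (t0 - e) - t0| ≤ e := by
      rw [abs_le]; constructor
      · linarith [le_max_right 0 (t0 - e)]
      · have : max 0 (t0 - e) ≤ t0 := max_le ht0pos.le (by linarith)
        linarith
    simp only [e] at h1 h2 h3; linarith
  obtain ⟨e1, -, hsub⟩ := geo_sub hf ht0
  obtain ⟨r, hr⟩ := hA.ne (f t0)
  have := hA.con f x (f t0) hsub (by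
    rw [e1]; intro t ht
    rcases ht.2.lt_or_eq with h | h
    · exact (hlt t ⟨ht.1, ht.2.trans ht0.2⟩ h).le
    · rw [h]; exact hge) p hp r hr
  refine ⟨t0, ht0, ?_⟩
  have h4 := hr.2
  have := dist_triangle p r (f t0)
  rw [dist_comm r] at this
  linarith

lemma proj_lip (hgeo : IsGeodesicSpace X) {K : ℝ} {A : Set X} (hA : Contr K A) {w c a a' : X}
    (ha : a ∈ projSet A w) (ha' : a' ∈ projSet A c) : dist a a' ≤ 3 * dist w c + 2 * K := by
  obtain ⟨f, hf⟩ := hgeo w c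
  have hK := hA.pos
  have hd : 0 ≤ dist w c := dist_nonneg
  by_cases h : ∀ t ∈ Set.Icc (0 : ℝ) (dist w c), K ≤ Metric.infDist (f t) A
  · have := hA.con f w c hf h a ha a' ha'
    linarith
  · push Not at h
    obtain ⟨t, ht, hlt⟩ := h
    obtain ⟨e1, e2, -⟩ := geo_sub hf ht
    have h1 : Metric.infDist w A ≤ Metric.infDist (f t) A + dist w (f t) :=
      Metric.infDist_le_infDist_add_dist
    have h2 : Metric.infDist c A ≤ Metric.infDist (f t) A + dist c (f t) :=
      Metric.infDist_le_infDist_add_dist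
    rw [dist_comm c] at h2
    have h3 := ha.2
    have h4 := ha'.2
    have h5 := dist_triangle4 a w c a'
    rw [dist_comm a w] at h5
    linarith

lemma behr (hgeo : IsGeodesicSpace X) {K1 K2 : ℝ} {A H : Set X} (hA : Contr K1 A)
    (hH : Contr K2 H) {x p q q' a' : X} (hp : p ∈ projSet A x) (hq : q ∈ projSet H x)
    (hq' : q' ∈ projSet H p) (hlt : K2 < dist q q') (ha' : a' ∈ projSet A q) :
    dist p a' ≤ 6 * K2 + 2 * K1 := by
  obtain ⟨f, hf⟩ := hgeo x p
  obtain ⟨t, ht, hd⟩ := entry hH hf hq hq' hlt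
  obtain ⟨e1, e2, -⟩ := geo_sub hf ht
  have hpt : p ∈ projSet A (f t) := by
    refine ⟨hp.1, le_antisymm ?_ (Metric.infDist_le_dist_of_mem hp.1)|>.symm.symm⟩
    have h1 : Metric.infDist x A ≤ Metric.infDist (f t) A + dist x (f t) :=
      Metric.infDist_le_infDist_add_dist
    rw [e2, hp.2]; linarith
  have := proj_lip hgeo hA hpt ha'
  rw [dist_comm] at hd
  linarith

variable {G : Type*} [Group G] [MulAction G X]

lemma smul_dist' (hiso : ∀ g : G, Isometry fun x : X => g • x) (u : G) (x y : X) :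
    dist (u • x) (u • y) = dist x y := (hiso u).dist_eq x y

lemma proj_smul (hiso : ∀ g : G, Isometry fun x : X => g • x) (u : G) {A : Set X} {x p : X}
    (h : p ∈ projSet A x) : u • p ∈ projSet (u • A) (u • x) := by
  refine ⟨Set.smul_mem_smul_set h.1, ?_⟩
  rw [smul_dist' hiso, h.2]
  exact (Metric.infDist_image (hiso u)).symm

lemma Contr.smul (hiso : ∀ g : G, Isometry fun x : X => g • x) (u : G) {A : Set X} {K : ℝ}
    (hA : Contr K A) : Contr K (u • A) := by
  refine ⟨hA.pos, ?_, ?_⟩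
  · intro x
    obtain ⟨p, hp⟩ := hA.ne (u⁻¹ • x)
    refine ⟨u • p, ?_⟩
    simpa using proj_smul hiso u hp
  · intro f x y hf hfar p hp q hq
    have hf' : IsGeodesicSegment (fun t => u⁻¹ • f t) (u⁻¹ • x) (u⁻¹ • y) := by
      unfold IsGeodesicSegment
      rw [smul_dist' hiso]
      refine ⟨by simp [hf.1], by simp [hf.2.1], ?_⟩
      intro s hs t ht
      simp only [smul_dist' hiso]
      exact hf.2.2 s hs t ht
    have := hA.con _ _ _ hf' (by
      rw [smul_dist' hiso]
      intro t ht
      refine (hfar t ht).trans (le_of_eq ?_)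
      have := Metric.infDist_image (hiso u) (t := A) (x := u⁻¹ • f t)
      simp only [smul_inv_smul] at this
      rw [← this]; rfl)
      (u⁻¹ • p) (by simpa using proj_smul hiso u⁻¹ hp)
      (u⁻¹ • q) (by simpa using proj_smul hiso u⁻¹ hq)
    rwa [smul_dist' hiso] at this

lemma contr_of_isom {o : X} {g : G} (h : IsContractingIsom o g) :
    ∃ K, Contr K (zorbit o g) ∧ ∀ i : ℤ, |(i : ℝ)| / K - K ≤ dist o (g ^ i • o) := by
  obtain ⟨K, hK, hq, hc⟩ := h
  refine ⟨K, ⟨by linarith, ?_, ?_⟩, ?_⟩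
  · intro x
    let γ : ℤ → X := fun i => g ^ i • o
    have hfin : {i : ℤ | dist x (γ i) ≤ dist x (γ 0)}.Finite := by
      set R := K * (2 * dist x (γ 0) + K) with hR
      apply (Set.finite_Icc (-⌈R⌉) ⌈R⌉).subset
      intro i hi
      have h1 := (hq i 0).1
      have h2 : dist (γ i) (γ 0) ≤ 2 * dist x (γ 0) := by
        have := dist_triangle (γ i) x (γ 0)
        rw [dist_comm (γ i) x] at this
        have hi' : dist x (γ i) ≤ dist x (γ 0) := hi
        linarith
      have h3 : |(i : ℝ)| ≤ R := by
        have h4 : |(i : ℝ)| / K ≤ 2 * dist x (γ 0) + K := by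
          simp only [Int.cast_zero, sub_zero] at h1
          change |(i : ℝ)| / K - K ≤ dist (γ i) (γ 0) at h1
          linarith
        rw [div_le_iff₀ (by linarith)] at h4
        rw [hR]; linarith
      have h5 := Int.le_ceil R
      rw [abs_le] at h3
      constructor
      · have : (-(⌈R⌉ : ℝ)) ≤ i := by linarith
        exact_mod_cast this
      · have : (i : ℝ) ≤ ⌈R⌉ := by linarith
        exact_mod_cast this
    obtain ⟨i, hi, hmin⟩ := hfin.exists_minimalFor (fun i => dist x (γ i)) _
      ⟨0, (le_refl (dist x (γ 0)) : dist x (γ 0) ≤ dist x (γ 0))⟩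
    have hall : ∀ j, dist x (γ i) ≤ dist x (γ j) := by
      intro j
      by_contra hcc
      push Not at hcc
      have hj : dist x (γ j) ≤ dist x (γ 0) := hcc.le.trans hi
      have := hmin (j := j) hj hcc.le
      simp only at this; linarith
    refine ⟨γ i, ⟨i, rfl⟩, le_antisymm ?_ (Metric.infDist_le_dist_of_mem ⟨i, rfl⟩)⟩
    rw [Metric.le_infDist (⟨γ i, ⟨i, rfl⟩⟩ : (zorbit o g).Nonempty)]
    rintro _ ⟨j, rfl⟩
    exact hall j
  · intro f x y hf hfar p hp q hq
    have h := hc f x y hf hfar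
    have h1 : edist p q ≤ EMetric.diam (projSetOf (zorbit o g)
        (f '' Set.Icc (0 : ℝ) (dist x y))) := by
      apply Metric.edist_le_ediam_of_mem
      · exact Set.mem_biUnion ⟨0, ⟨le_rfl, dist_nonneg⟩, hf.1⟩ hp
      · exact Set.mem_biUnion ⟨dist x y, ⟨dist_nonneg, le_rfl⟩, hf.2.1⟩ hq
    have h2 := (h1.trans_lt h).le
    rw [edist_dist] at h2
    exact (ENNReal.ofReal_le_ofReal_iff (by linarith)).mp h2
  · intro i
    have := (hq 0 i).1
    simpa using this

lemma zorbit_smul (o : X) (g : G) (n : ℤ) : g ^ n • zorbit o g = zorbit o g := by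
  ext x
  constructor
  · rintro ⟨_, ⟨i, rfl⟩, rfl⟩
    exact ⟨n + i, by simp [zpow_add, mul_smul]⟩
  · rintro ⟨i, rfl⟩
    refine ⟨g ^ (i - n) • o, ⟨i - n, rfl⟩, ?_⟩
    simp only [smul_smul, ← zpow_add]; congr 2; ring

/-- the projection of far translates of the axis of `g` to that axis is bounded -/
lemma far_translates (hgeo : IsGeodesicSpace X) (hiso : ∀ g : G, Isometry fun x : X => g • x)
    {o : X} {g h : G} (hi : IndependentPair o g h) :
    ∃ (L : ℕ) (R : ℝ), 0 < L ∧ ∀ i : ℤ, (L : ℤ) ≤ |i| → ∀ y ∈ h ^ i • zorbit o g,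
      ∀ a ∈ projSet (zorbit o g) y, dist a o ≤ R := by
  obtain ⟨hg, hh, hb1, hb2⟩ := hi
  obtain ⟨K1, hA, -⟩ := contr_of_isom hg
  obtain ⟨K2, hH, hqh⟩ := contr_of_isom hh
  obtain ⟨r1, hr1⟩ := hb1.subset_closedBall o
  obtain ⟨r2, hr2⟩ := hb2.subset_closedBall o
  obtain ⟨L, hL⟩ := exists_nat_gt (max 0 (K2 * (K2 + K2 + 2 * r2)))
  refine ⟨L, 6 * K2 + 2 * K1 + r1, ?_, ?_⟩
  · have := (le_max_left _ _).trans_lt hL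
    exact_mod_cast this
  rintro i hiL _ ⟨y, hy, rfl⟩ a ha
  simp only at ha
  obtain ⟨q0, hq0⟩ := hH.ne y
  have hq := proj_smul hiso (h ^ i) hq0
  rw [zorbit_smul] at hq
  obtain ⟨q', hq'⟩ := hH.ne a
  have m1 : dist q0 o ≤ r2 := hr2 (Set.mem_biUnion hy hq0)
  have m2 : dist q' o ≤ r2 := hr2 (Set.mem_biUnion ha.1 hq')
  have hK2 := hH.pos
  have hlt : K2 < dist (h ^ i • q0) q' := by
    have h1 := hqh i
    have h2 : (L : ℝ) ≤ |(i : ℝ)| := by exact_mod_cast hiL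
    have h3 := (le_max_right _ _).trans_lt hL
    have h4 : K2 + K2 + 2 * r2 < |(i : ℝ)| / K2 := by
      rw [lt_div_iff₀ hK2]; linarith
    have h5 := dist_triangle4 (h ^ i • o) (h ^ i • q0) q' o
    rw [smul_dist' hiso, dist_comm o q0, dist_comm (h ^ i • o) o] at h5
    linarith
  obtain ⟨a', ha'⟩ := hA.ne (h ^ i • q0)
  have hb := behr hgeo hA hH ha hq hq' hlt ha'
  have m3 : dist a' o ≤ r1 := hr1 (Set.mem_biUnion hq.1 ha')
  linarith [dist_triangle a a' o]

/-- Behrstock: at most one bad index. -/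
lemma one_bad (hgeo : IsGeodesicSpace X) (hiso : ∀ g : G, Isometry fun x : X => g • x)
    {o : X} {g h : G} {K R : ℝ} {L : ℤ} (hA : Contr K (zorbit o g))
    (hR : ∀ i : ℤ, L ≤ |i| → ∀ y ∈ h ^ i • zorbit o g,
      ∀ a ∈ projSet (zorbit o g) y, dist a o ≤ R)
    {i j : ℤ} (hij : L ≤ |i - j|) {x p q : X}
    (hp : p ∈ projSet (h ^ i • zorbit o g) x) (hq : q ∈ projSet (h ^ j • zorbit o g) x)
    (hpD : 8 * K + R < dist p (h ^ i • o)) (hqD : 8 * K + R < dist q (h ^ j • o)) : False := by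
  have key : ∀ i j : ℤ, L ≤ |i - j| → ∀ y ∈ h ^ j • zorbit o g,
      ∀ a ∈ projSet (h ^ i • zorbit o g) y, dist a (h ^ i • o) ≤ R := by
    intro i j hij y hy a ha
    have h1 := proj_smul hiso (h ^ (-i)) ha
    rw [smul_smul, ← zpow_add, neg_add_cancel, zpow_zero, one_smul] at h1
    have h2 : h ^ (-i) • y ∈ h ^ (j - i) • zorbit o g := by
      have := Set.smul_mem_smul_set (a := h ^ (-i)) hy
      rw [smul_smul, ← zpow_add] at this
      convert this using 3; ring
    have h3 := hR (j - i) (by rwa [abs_sub_comm]) _ h2 _ h1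
    rw [← smul_dist' hiso (h ^ i), smul_smul, ← zpow_add] at h3
    simpa using h3
  have hAi := hA.smul hiso (h ^ i)
  have hAj := hA.smul hiso (h ^ j)
  have hK := hA.pos
  obtain ⟨q', hq'⟩ := hAj.ne p
  have k1 := key j i (by rwa [abs_sub_comm]) p hp.1 q' hq'
  obtain ⟨a', ha'⟩ := hAi.ne q
  have k2 := key i j hij q hq.1 a' ha'
  by_cases hlt : K < dist q q'
  · have := behr hgeo hAi hAj hp hq hq' hlt ha'
    linarith [dist_triangle p a' (h ^ i • o)]
  · linarith [dist_triangle q q' (h ^ j • o)]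

open Classical in
/-- Schottky sets -/
lemma schottky (hgeo : IsGeodesicSpace X) (hiso : ∀ g : G, Isometry fun x : X => g • x)
    {o : X} {g h : G} (hi : IndependentPair o g h) (p q : ℕ) (hp : 0 < p) (hq : 0 < q) :
    ∃ (m n : Fin 16 → ℕ) (N : ℕ) (K : ℝ) (b b' : X → Finset (Fin 16)),
      0 < N ∧ (∀ t, m t * q + n t * p + m t * q = N) ∧ (∀ x, (b x).card ≤ 1) ∧
      (∀ x, (b' x).card ≤ 1) ∧
      ∀ x z t, t ∉ b x → t ∉ b' z → ∀ f, IsGeodesicSegment f x ((h ^ m t * g ^ n t * h ^ m t) • z) →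
        ∃ s ∈ Set.Icc (0 : ℝ) (dist x ((h ^ m t * g ^ n t * h ^ m t) • z)),
          dist (f s) ((h ^ m t * g ^ n t * h ^ m t) • o) < K := by
  obtain ⟨L, R, hL, hR⟩ := far_translates hgeo hiso hi
  obtain ⟨K1, hA, hqg⟩ := contr_of_isom hi.1
  have hK := hA.pos
  set D := 8 * K1 + R with hD
  obtain ⟨n0, hn0⟩ := exists_nat_gt (max 0 (K1 * (K1 + K1 + 2 * D)))
  have hn0pos : 0 < n0 := by
    have := (le_max_left _ _).trans_lt hn0
    exact_mod_cast this
  let m : Fin 16 → ℕ := fun t => t.1 * L * p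
  let n : Fin 16 → ℕ := fun t => n0 + 2 * (16 - t.1) * L * q
  have hn : ∀ t, n0 ≤ n t := fun t => Nat.le_add_right _ _
  have hsep : ∀ s t : Fin 16, s ≠ t → (L : ℤ) ≤ |(m s : ℤ) - m t| := by
    intro s t hst
    have h1 : (m s : ℤ) - m t = ((s.1 : ℤ) - t.1) * (L * p) := by
      simp only [m]; push_cast; ring
    have h2 : 1 ≤ |(s.1 : ℤ) - t.1| := by
      apply Int.one_le_abs
      intro hc; apply hst; ext; omega
    have h3 : (1 : ℤ) ≤ p := by exact_mod_cast hp
    rw [h1, abs_mul, abs_of_nonneg (by positivity : (0 : ℤ) ≤ L * p)]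
    have h4 : (L : ℤ) ≤ L * p := le_mul_of_one_le_right (by positivity) h3
    nlinarith
  let b : X → Finset (Fin 16) := fun x => Finset.univ.filter fun t =>
    ∃ a ∈ projSet (h ^ (m t : ℤ) • zorbit o g) x, D < dist a (h ^ (m t : ℤ) • o)
  let b' : X → Finset (Fin 16) := fun x => Finset.univ.filter fun t =>
    ∃ a ∈ projSet (h ^ (-(m t : ℤ)) • zorbit o g) x, D < dist a (h ^ (-(m t : ℤ)) • o)
  let C := (Finset.univ.image fun t : Fin 16 => dist o ((g ^ n t * h ^ m t) • o)).max' (by simp)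
  refine ⟨m, n, n0 * p + 2 * 16 * L * q * p, 2 * K1 + D + C + 1, b, b', by positivity, ?_, ?_, ?_, ?_⟩
  · intro t
    have : (16 - t.1) + t.1 = 16 := by omega
    simp only [m, n]
    calc _ = n0 * p + 2 * ((16 - t.1) + t.1) * L * q * p := by ring
      _ = _ := by rw [this]
  · intro x
    rw [Finset.card_le_one]
    intro s hs t ht
    by_contra hst
    simp only [b, Finset.mem_filter, Finset.mem_univ, true_and] at hs ht
    obtain ⟨a, ha, ha'⟩ := hs
    obtain ⟨c, hc, hc'⟩ := ht
    exact one_bad hgeo hiso hA hR (hsep s t hst) ha hc ha' hc'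
  · intro x
    rw [Finset.card_le_one]
    intro s hs t ht
    by_contra hst
    simp only [b', Finset.mem_filter, Finset.mem_univ, true_and] at hs ht
    obtain ⟨a, ha, ha'⟩ := hs
    obtain ⟨c, hc, hc'⟩ := ht
    refine one_bad hgeo hiso hA hR ?_ ha hc ha' hc'
    have := hsep s t hst
    rwa [neg_sub_neg, abs_sub_comm]
  · intro x z t hx hz f hf
    set u := h ^ m t with hu
    simp only [b, b', Finset.mem_filter, Finset.mem_univ, true_and, not_exists, not_and, not_lt,
      zpow_neg, zpow_natCast, ← hu] at hx hz
    have hAu := hA.smul hiso u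
    obtain ⟨a, ha⟩ := hAu.ne x
    obtain ⟨c, hc⟩ := (hA.smul hiso u⁻¹).ne z
    have h1 := hx a ha
    have h2 := hz c hc
    set s := u * g ^ n t * u with hs
    have h3 := proj_smul hiso s hc
    have h4 : s • u⁻¹ • zorbit o g = u • zorbit o g := by
      rw [smul_smul, hs, mul_inv_cancel_right, mul_smul, ← zpow_natCast, zorbit_smul]
    rw [h4] at h3
    have h5 : dist (s • c) ((u * g ^ n t) • o) ≤ D := by
      rw [← smul_dist' hiso s, smul_smul, hs, mul_inv_cancel_right] at h2
      exact h2
    have h6 : K1 < dist a (s • c) := by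
      have e1 := hqg (n t)
      have e2 : (n0 : ℝ) ≤ |((n t : ℤ) : ℝ)| := by
        rw [abs_of_nonneg (by positivity)]; exact_mod_cast hn t
      have e3 := (le_max_right _ _).trans_lt hn0
      have e4 : K1 + K1 + 2 * D < |((n t : ℤ) : ℝ)| / K1 := by
        rw [lt_div_iff₀ hK]; linarith
      rw [zpow_natCast, ← smul_dist' hiso u, smul_smul] at e1
      have e5 := dist_triangle4 (u • o) a (s • c) ((u * g ^ n t) • o)
      rw [dist_comm (u • o) a] at e5
      linarith
    obtain ⟨τ, hτ, hd⟩ := entry hAu hf ha h3 h6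
    refine ⟨τ, hτ, ?_⟩
    have h7 : dist (u • o) (s • o) ≤ C := by
      rw [hs, mul_assoc, mul_smul, smul_dist' hiso]
      apply Finset.le_max'
      exact Finset.mem_image_of_mem _ (Finset.mem_univ t)
    have h8 := dist_triangle4 (f τ) a (u • o) (s • o)
    rw [dist_comm (f τ) a] at h8
    linarith

end geo

section prob
open scoped ENNReal

/-- iterated expectation of a function of a random word with independent letters -/
noncomputable def Ex {α : Type*} : List (α → ℝ≥0∞) → (List α → ℝ≥0∞) → ℝ≥0∞
  | [], f => f []
  | ν :: L, f => ∑' g, ν g * Ex L (fun l => f (g :: l))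

variable {α : Type*}

lemma Ex_mono (L : List (α → ℝ≥0∞)) {f g : List α → ℝ≥0∞}
    (h : ∀ l, l.length = L.length → f l ≤ g l) : Ex L f ≤ Ex L g := by
  induction L generalizing f g with
  | nil => exact h [] rfl
  | cons ν L ih =>
    exact ENNReal.tsum_le_tsum fun a => mul_le_mul_right
      (ih fun l hl => h (a :: l) (by simp [hl])) _

lemma Ex_append (L L' : List (α → ℝ≥0∞)) (f : List α → ℝ≥0∞) :
    Ex (L ++ L') f = Ex L (fun l => Ex L' (fun l' => f (l ++ l'))) := by
  induction L generalizing f with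
  | nil => rfl
  | cons ν L ih => simp only [List.cons_append, Ex, ih]

lemma Ex_mul (L : List (α → ℝ≥0∞)) (c : ℝ≥0∞) (f : List α → ℝ≥0∞) :
    Ex L (fun l => c * f l) = c * Ex L f := by
  induction L generalizing f with
  | nil => rfl
  | cons ν L ih =>
    simp only [Ex, ih, ← ENNReal.tsum_mul_left]
    exact tsum_congr fun a => by ring

lemma Ex_add (L : List (α → ℝ≥0∞)) (f g : List α → ℝ≥0∞) :
    Ex L (fun l => f l + g l) = Ex L f + Ex L g := by
  induction L generalizing f g with
  | nil => rfl
  | cons ν L ih =>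
    simp only [Ex, ih, mul_add, ENNReal.tsum_add]

lemma Ex_tsum {β : Type*} (L : List (α → ℝ≥0∞)) (f : β → List α → ℝ≥0∞) :
    Ex L (fun l => ∑' b, f b l) = ∑' b, Ex L (f b) := by
  induction L generalizing f with
  | nil => rfl
  | cons ν L ih =>
    simp only [Ex, ih, ← ENNReal.tsum_mul_left]
    exact ENNReal.tsum_comm

lemma Ex_comm {β : Type*} (L : List (α → ℝ≥0∞)) (L' : List (β → ℝ≥0∞))
    (F : List α → List β → ℝ≥0∞) :
    Ex L (fun l => Ex L' (fun l' => F l l')) = Ex L' (fun l' => Ex L (fun l => F l l')) := by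
  induction L' generalizing F with
  | nil => rfl
  | cons ν L' ih => simp only [Ex, Ex_tsum, Ex_mul, ih]

lemma Ex_const (L : List (α → ℝ≥0∞)) (hL : ∀ ν ∈ L, ∑' a, ν a = 1) (c : ℝ≥0∞) :
    Ex L (fun _ => c) = c := by
  induction L with
  | nil => rfl
  | cons ν L ih =>
    simp only [Ex]
    rw [ih fun ν hν => hL ν (by simp [hν]), ENNReal.tsum_mul_right, hL ν (by simp), one_mul]

lemma Ex_ofFn {k : ℕ} (law : Fin k → α → ℝ≥0∞) (f : List α → ℝ≥0∞) :
    ∑' x : Fin k → α, (∏ i, law i (x i)) * f (List.ofFn x) = Ex (List.ofFn law) f := by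
  induction k generalizing f with
  | zero => simp [Ex]
  | succ k ih =>
    rw [List.ofFn_succ]
    simp only [Ex]
    rw [← (Fin.consEquiv fun _ => α).tsum_eq, ENNReal.tsum_prod']
    refine tsum_congr fun a => ?_
    rw [← ih, ← ENNReal.tsum_mul_left]
    refine tsum_congr fun x => ?_
    simp [Fin.consEquiv, Fin.prod_univ_succ, List.ofFn_succ, mul_assoc]

open Classical in
/-- law of the word -/
noncomputable def wlaw (L : List (α → ℝ≥0∞)) (w : List α) : ℝ≥0∞ :=
  Ex L (fun l => if l = w then 1 else 0)

lemma Ex_eq_wlaw (L : List (α → ℝ≥0∞)) (f : List α → ℝ≥0∞) :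
    Ex L f = ∑' w, wlaw L w * f w := by
  classical
  have : f = fun l => ∑' w, f w * (if l = w then 1 else 0) := by
    funext l
    rw [tsum_eq_single l]
    · simp
    · intro w hw; simp [hw.symm]
  conv_lhs => rw [this]
  rw [Ex_tsum]
  refine tsum_congr fun w => ?_
  rw [Ex_mul, mul_comm]; rfl

lemma wlaw_ge (L : List (α → ℝ≥0∞)) (F : Set α) (δ : ℝ≥0∞) (hL : ∀ ν ∈ L, ∀ s ∈ F, δ ≤ ν s)
    (w : List α) (hw : w.length = L.length) (hF : ∀ s ∈ w, s ∈ F) :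
    δ ^ L.length ≤ wlaw L w := by
  classical
  induction L generalizing w with
  | nil =>
    have : w = [] := by simpa using hw
    subst this; simp [wlaw, Ex]
  | cons ν L ih =>
    cases w with
    | nil => simp at hw
    | cons s w =>
      have h1 := ih (fun ν hν => hL ν (by simp [hν])) w (by simpa using hw)
        (fun s hs => hF s (by simp [hs]))
      have h2 := hL ν (by simp) s (hF s (by simp))
      rw [List.length_cons, pow_succ']
      calc δ * δ ^ L.length ≤ ν s * wlaw L w := mul_le_mul' h2 h1
        _ = ν s * Ex L (fun l => if s :: l = s :: w then 1 else 0) := by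
            simp [wlaw]
        _ ≤ _ := by
            unfold wlaw
            simp only [Ex]
            exact ENNReal.le_tsum (f := fun a => ν a * Ex L fun l => if a :: l = s :: w then 1 else 0) s

open Classical in
noncomputable def theta (b : Finset (Fin 16)) : List α ⊕ Fin 16 → ℝ≥0∞
  | Sum.inl _ => 1
  | Sum.inr t => if t ∈ b then 4 else 4⁻¹

lemma tsum_sum_type {β γ : Type*} (f : β ⊕ γ → ℝ≥0∞) :
    ∑' a, f a = ∑' b, f (Sum.inl b) + ∑' c, f (Sum.inr c) := by
  have h1 : HasSum (f ∘ Sum.inl) (∑' b, f (Sum.inl b)) := ENNReal.summable.hasSum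
  have h2 : HasSum (f ∘ Sum.inr) (∑' b, f (Sum.inr b)) := ENNReal.summable.hasSum
  exact (h1.sum h2).tsum_eq

lemma theta_sum (b : Finset (Fin 16)) (hb : b.card ≤ 1) :
    ∑ t : Fin 16, theta (α := α) b (Sum.inr t) ≤ 8 := by
  classical
  have h4 : (4 : ℝ≥0∞) * 4⁻¹ = 1 := ENNReal.mul_inv_cancel (by norm_num) (by norm_num)
  calc ∑ t : Fin 16, theta (α := α) b (Sum.inr t)
      ≤ ∑ t : Fin 16, ((if t ∈ b then 4 else 0) + 4⁻¹) := by
        refine Finset.sum_le_sum fun t _ => ?_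
        simp only [theta]
        split_ifs <;> simp
    _ = b.card * 4 + 16 * 4⁻¹ := by
        rw [Finset.sum_add_distrib]
        simp [Finset.sum_ite_mem]
    _ ≤ 1 * 4 + 4 * (4 * 4⁻¹) := by
        rw [← mul_assoc]
        have : (b.card : ℝ≥0∞) ≤ 1 := by exact_mod_cast hb
        gcongr
        norm_num
    _ = 8 := by rw [h4]; norm_num

lemma block_decomp (L : List (α → ℝ≥0∞)) (hm : ∀ ν ∈ L, ∑' a, ν a = 1) (F : Set α) (δ : ℝ≥0∞)
    (hδ : δ ≠ ⊤)
    (hL : ∀ ν ∈ L, ∀ s ∈ F, δ ≤ ν s) (wd : Fin 16 → List α)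
    (hwd : ∀ t, (wd t).length = L.length) (hF : ∀ t, ∀ s ∈ wd t, s ∈ F) :
    ∃ ψ : List α ⊕ Fin 16 → ℝ≥0∞,
      (∀ f, Ex L f = ∑' a, ψ a * f (Sum.elim id wd a)) ∧
      ∀ b : Finset (Fin 16), b.card ≤ 1 → ∑' a, ψ a * theta b a ≤ 1 - 8 * (δ ^ L.length / 16) := by
  classical
  set q := δ ^ L.length / 16 with hq
  have hqt : q ≠ ⊤ := by
    rw [hq]; exact ENNReal.div_ne_top (ENNReal.pow_ne_top hδ) (by norm_num)
  let c : List α → ℝ≥0∞ := fun w => ∑ t : Fin 16, if wd t = w then q else 0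
  have hc : ∀ w, c w ≤ wlaw L w := by
    intro w
    by_cases h : ∃ t, wd t = w
    · obtain ⟨t, rfl⟩ := h
      calc c (wd t) ≤ ∑ t : Fin 16, q := Finset.sum_le_sum fun s _ => by split_ifs <;> simp
        _ = 16 * q := by simp
        _ = δ ^ L.length := by
          rw [hq, ENNReal.mul_div_cancel (by norm_num) (by norm_num)]
        _ ≤ _ := wlaw_ge L F δ hL _ (hwd t) (hF t)
    · push Not at h
      simp [c, h]
  have hcsum : ∀ f : List α → ℝ≥0∞, ∑' w, c w * f w = ∑ t : Fin 16, q * f (wd t) := by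
    intro f
    simp only [c, Finset.sum_mul]
    rw [Summable.tsum_finsetSum fun _ _ => ENNReal.summable]
    refine Finset.sum_congr rfl fun t _ => ?_
    rw [tsum_eq_single (wd t)]
    · simp
    · intro w hw; simp [hw.symm]
  have key : ∀ f, Ex L f = ∑' w, (wlaw L w - c w) * f w + ∑ t : Fin 16, q * f (wd t) := by
    intro f
    rw [Ex_eq_wlaw, ← hcsum, ← ENNReal.tsum_add]
    refine tsum_congr fun w => ?_
    rw [← add_mul, tsub_add_cancel_of_le (hc w)]
  refine ⟨Sum.elim (fun w => wlaw L w - c w) (fun _ => q), ?_, ?_⟩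
  · intro f
    rw [key, tsum_sum_type]
    simp [tsum_fintype]
  · intro b hb
    rw [tsum_sum_type, tsum_fintype (β := Fin 16)]
    simp only [Sum.elim_inl, Sum.elim_inr]
    rw [← Finset.mul_sum]
    have h1 := key (fun _ => 1)
    rw [Ex_const L hm] at h1
    simp only [mul_one, Finset.sum_const, Finset.card_univ, Fintype.card_fin] at h1
    simp only [theta, mul_one]
    apply ENNReal.le_sub_of_add_le_right (ENNReal.mul_ne_top (by norm_num) hqt)
    calc _ ≤ ∑' w, (wlaw L w - c w) + q * 8 + 8 * q := by
          gcongr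
          exact theta_sum (α := α) b hb
      _ = ∑' w, (wlaw L w - c w) + 16 • q := by
          rw [nsmul_eq_mul]; push_cast; ring
      _ ≤ 1 := h1.symm.le

lemma blocks_decomp (N : ℕ) (F : Set α) (δ : ℝ≥0∞)
    (hδ : δ ≠ ⊤) (wd : Fin 16 → List α)
    (hwd : ∀ t, (wd t).length = N) (hF : ∀ t, ∀ s ∈ wd t, s ∈ F) (M : ℕ)
    (L : List (α → ℝ≥0∞)) (hm : ∀ ν ∈ L, ∑' a, ν a = 1)
    (hL : ∀ ν ∈ L, ∀ s ∈ F, δ ≤ ν s) (hlen : L.length = M * N) :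
    ∃ Ψ : List (List α ⊕ Fin 16 → ℝ≥0∞), Ψ.length = M ∧
      (∀ f, Ex L f = Ex Ψ fun as => f (as.map (Sum.elim id wd)).flatten) ∧
      ∀ ψ ∈ Ψ, ∀ b : Finset (Fin 16), b.card ≤ 1 → ∑' a, ψ a * theta b a ≤ 1 - 8 * (δ ^ N / 16) := by
  induction M generalizing L with
  | zero =>
    have : L = [] := by simpa using hlen
    subst this
    exact ⟨[], rfl, fun f => by simp [Ex], by simp⟩
  | succ M ih =>
    have hN : (L.take N).length = N := by
      rw [List.length_take, hlen]; apply min_eq_left; nlinarith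
    obtain ⟨Ψ, h1, h2, h3⟩ := ih (L.drop N) (fun ν hν => hm ν (List.mem_of_mem_drop hν))
      (fun ν hν => hL ν (List.mem_of_mem_drop hν)) (by
        rw [List.length_drop, hlen, Nat.succ_mul]; simp)
    obtain ⟨ψ, h4, h5⟩ := block_decomp (L.take N) (fun ν hν => hm ν (List.mem_of_mem_take hν)) F δ hδ
      (fun ν hν => hL ν (List.mem_of_mem_take hν)) wd (by rw [hN]; exact hwd) hF
    refine ⟨ψ :: Ψ, by simp [h1], ?_, ?_⟩
    · intro f
      conv_lhs => rw [← List.take_append_drop N L]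
      rw [Ex_append, h4]
      simp only [Ex, h2, List.map_cons, List.flatten_cons]
    · intro ψ' hψ'
      rcases List.mem_cons.mp hψ' with rfl | h
      · rw [hN] at h5; exact h5
      · exact h3 ψ' h

variable {G : Type*} [Group G]

noncomputable def thU (wd : Fin 16 → List G) (B : G → Finset (Fin 16)) :
    G → List (List G ⊕ Fin 16) → ℝ≥0∞
  | _, [] => 1
  | p, a :: as => theta (B p) a * thU wd B (p * (Sum.elim id wd a).prod) as

noncomputable def thV (wd : Fin 16 → List G) (B : G → Finset (Fin 16)) (z : G) :
    List (List G ⊕ Fin 16) → ℝ≥0∞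
  | [] => 1
  | a :: as => theta (B ((as.map (Sum.elim id wd)).flatten.prod * z)) a * thV wd B z as

lemma Ex_thU (wd : Fin 16 → List G) (B : G → Finset (Fin 16)) (hB : ∀ p, (B p).card ≤ 1) (c : ℝ≥0∞)
    (Ψ : List (List G ⊕ Fin 16 → ℝ≥0∞))
    (hΨ : ∀ ψ ∈ Ψ, ∀ b : Finset (Fin 16), b.card ≤ 1 → ∑' a, ψ a * theta b a ≤ c) (p : G) :
    Ex Ψ (thU wd B p) ≤ c ^ Ψ.length := by
  induction Ψ generalizing p with
  | nil => simp [Ex, thU]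
  | cons ψ Ψ ih =>
    simp only [Ex, thU, Ex_mul]
    calc _ ≤ ∑' a, (ψ a * theta (B p) a) * c ^ Ψ.length := by
          refine ENNReal.tsum_le_tsum fun a => ?_
          rw [mul_assoc]
          gcongr
          exact ih (fun ψ hψ => hΨ ψ (by simp [hψ])) _
      _ = (∑' a, (ψ a * theta (B p) a)) * c ^ Ψ.length := ENNReal.tsum_mul_right
      _ ≤ c * c ^ Ψ.length := by gcongr; exact hΨ ψ (by simp) _ (hB p)
      _ = _ := by rw [List.length_cons, pow_succ']

lemma Ex_thV (wd : Fin 16 → List G) (B : G → Finset (Fin 16)) (hB : ∀ p, (B p).card ≤ 1) (c : ℝ≥0∞)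
    (Ψ : List (List G ⊕ Fin 16 → ℝ≥0∞))
    (hΨ : ∀ ψ ∈ Ψ, ∀ b : Finset (Fin 16), b.card ≤ 1 → ∑' a, ψ a * theta b a ≤ c) (z : G) :
    Ex Ψ (thV wd B z) ≤ c ^ Ψ.length := by
  induction Ψ with
  | nil => simp [Ex, thV]
  | cons ψ Ψ ih =>
    simp only [Ex, thV, ← Ex_mul]
    rw [← Ex_tsum]
    calc _ ≤ Ex Ψ (fun l => c * thV wd B z l) := by
          refine Ex_mono _ fun l _ => ?_
          simp only [← mul_assoc]
          rw [ENNReal.tsum_mul_right]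
          gcongr; exact hΨ ψ (by simp) _ (hB _)
      _ = c * Ex Ψ (thV wd B z) := Ex_mul _ _ _
      _ ≤ c * c ^ Ψ.length := by gcongr; exact ih (fun ψ hψ => hΨ ψ (by simp [hψ]))
      _ = _ := by rw [List.length_cons, pow_succ']

def BadSeq (wd : Fin 16 → List G) (B B' : G → Finset (Fin 16)) (p z : G)
    (as : List (List G ⊕ Fin 16)) : Prop :=
  ∀ us t vs, as = us ++ Sum.inr t :: vs →
    t ∈ B (p * (us.map (Sum.elim id wd)).flatten.prod) ∨
    t ∈ B' ((vs.map (Sum.elim id wd)).flatten.prod * z)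

lemma bad_mul (wd : Fin 16 → List G) (B B' : G → Finset (Fin 16)) (p z : G)
    (as : List (List G ⊕ Fin 16)) (h : BadSeq wd B B' p z as) :
    1 ≤ thU wd B p as * thV wd B' z as := by
  classical
  induction as generalizing p with
  | nil => simp [thU, thV]
  | cons a as ih =>
    have h1 := ih (p * (Sum.elim id wd a).prod) (by
      intro us t vs hE
      have := h (a :: us) t vs (by simp [hE])
      simpa [mul_assoc] using this)
    have h2 : 1 ≤ theta (B p) a * theta (B' ((as.map (Sum.elim id wd)).flatten.prod * z)) a := by
      cases a with
      | inl w => simp [theta]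
      | inr t =>
        have h3 := h [] t as rfl
        simp only [List.map_nil, List.flatten_nil, List.prod_nil, mul_one] at h3
        have h4 : (4 : ℝ≥0∞) * 4⁻¹ = 1 := ENNReal.mul_inv_cancel (by norm_num) (by norm_num)
        simp only [theta]
        split_ifs with h5 h6 h6
        · norm_num
        · rw [h4]
        · rw [mul_comm, h4]
        · exact absurd h3 (by tauto)
    simp only [thU, thV]
    calc (1 : ℝ≥0∞) = 1 * 1 := by simp
      _ ≤ _ := mul_le_mul' h2 h1
      _ = _ := by ring

lemma bad_le (wd : Fin 16 → List G) (B B' : G → Finset (Fin 16)) (p z : G)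
    (as : List (List G ⊕ Fin 16)) (h : BadSeq wd B B' p z as) :
    1 ≤ thU wd B p as + thV wd B' z as := by
  have h1 := bad_mul wd B B' p z as h
  by_cases h2 : 1 ≤ thU wd B p as
  · exact h2.trans le_self_add
  · push Not at h2
    refine le_trans ?_ le_add_self
    calc (1 : ℝ≥0∞) ≤ _ := h1
      _ ≤ 1 * _ := mul_le_mul_left h2.le _
      _ = _ := one_mul _

lemma main_prob (N : ℕ) (F : Set G) (δ : ℝ≥0∞) (hδ : δ ≠ ⊤) (wd : Fin 16 → List G)
    (hwd : ∀ t, (wd t).length = N) (hF : ∀ t, ∀ s ∈ wd t, s ∈ F) (M : ℕ)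
    (B B' : G → Finset (Fin 16)) (hB : ∀ p, (B p).card ≤ 1) (hB' : ∀ p, (B' p).card ≤ 1)
    (L1 L L2 : List (G → ℝ≥0∞)) (hm1 : ∀ ν ∈ L1, ∑' a, ν a = 1) (hm : ∀ ν ∈ L, ∑' a, ν a = 1)
    (hm2 : ∀ ν ∈ L2, ∑' a, ν a = 1)
    (hL : ∀ ν ∈ L, ∀ s ∈ F, δ ≤ ν s) (hlen : L.length = M * N)
    (f : List G → ℝ≥0∞) (hf1 : ∀ l, f l ≤ 1)
    (hf : ∀ l1 as l2, l1.length = L1.length → l2.length = L2.length →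
      f (l1 ++ ((as.map (Sum.elim id wd)).flatten ++ l2)) ≠ 0 →
      BadSeq wd B B' l1.prod l2.prod as) :
    Ex (L1 ++ (L ++ L2)) f ≤ 2 * (1 - 8 * (δ ^ N / 16)) ^ M := by
  obtain ⟨Ψ, h1, h2, h3⟩ := blocks_decomp N F δ hδ wd hwd hF M L hm hL hlen
  set c := 1 - 8 * (δ ^ N / 16)
  rw [Ex_append]
  calc _ ≤ Ex L1 (fun _ => 2 * c ^ M) := by
        refine Ex_mono _ fun l1 hl1 => ?_
        rw [Ex_append, Ex_comm]
        calc _ ≤ Ex L2 (fun _ => 2 * c ^ M) := by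
              refine Ex_mono _ fun l2 hl2 => ?_
              rw [h2]
              calc _ ≤ Ex Ψ (fun as => thU wd B l1.prod as + thV wd B' l2.prod as) := by
                    refine Ex_mono _ fun as _ => ?_
                    by_cases h0 : f (l1 ++ ((as.map (Sum.elim id wd)).flatten ++ l2)) = 0
                    · rw [h0]; exact zero_le
                    · exact (hf1 _).trans (bad_le _ _ _ _ _ _ (hf l1 as l2 hl1 hl2 h0))
                _ = _ := Ex_add _ _ _
                _ ≤ c ^ M + c ^ M := by
                    have e1 := Ex_thU wd B hB c Ψ h3 l1.prod
                    have e2 := Ex_thV wd B' hB' c Ψ h3 l2.prod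
                    rw [h1] at e1 e2
                    exact add_le_add e1 e2
                _ = _ := (two_mul _).symm
          _ = _ := Ex_const _ hm2 _
    _ = _ := Ex_const _ hm1 _

end prob

section fin
open scoped ENNReal

variable {G X : Type*} [Group G] [MetricSpace X] [MulAction G X]

lemma closure_list {s : Set G} {x : G} (hx : x ∈ Subsemigroup.closure s) :
    ∃ l : List G, 0 < l.length ∧ (∀ a ∈ l, a ∈ s) ∧ l.prod = x := by
  induction hx using Subsemigroup.closure_induction with
  | mem x hx => exact ⟨[x], by simp, by simpa using hx, by simp⟩
  | mul x y _ _ hx hy =>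
    obtain ⟨l, h1, h2, h3⟩ := hx
    obtain ⟨l', h1', h2', h3'⟩ := hy
    refine ⟨l ++ l', by simp; omega, ?_, by simp [h3, h3']⟩
    intro a ha
    rcases List.mem_append.mp ha with h | h
    exacts [h2 a h, h2' a h]

def wpow (n : ℕ) (l : List G) : List G := (List.replicate n l).flatten

lemma wpow_length (n : ℕ) (l : List G) : (wpow n l).length = n * l.length := by
  simp [wpow]

lemma wpow_prod (n : ℕ) (l : List G) : (wpow n l).prod = l.prod ^ n := by
  simp [wpow, List.prod_flatten]

lemma wpow_mem {n : ℕ} {l : List G} {a : G} (h : a ∈ wpow n l) : a ∈ l := by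
  simp only [wpow, List.mem_flatten] at h
  obtain ⟨l', h1, h2⟩ := h
  rw [List.eq_of_mem_replicate h1] at h2; exact h2

def CloseL (o : X) (K : ℝ) (k : ℕ) (l : List G) : Prop :=
  ∃ n : ℕ, 1 < n ∧ n < k ∧
    ∀ f : ℝ → X, IsGeodesicSegment f o (l.prod • o) →
      Metric.infDist ((l.take n).prod • o)
        (f '' Set.Icc (0 : ℝ) (dist o (l.prod • o))) < K

lemma exists_delta (μ : G → ℝ) (l : List G) (h : ∀ a ∈ l, 0 < μ a) :
    ∃ d : ℝ, 0 < d ∧ ∀ a ∈ l, 2 * d ≤ μ a := by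
  induction l with
  | nil => exact ⟨1, one_pos, by simp⟩
  | cons x l ih =>
    obtain ⟨d, hd, h1⟩ := ih fun a ha => h a (by simp [ha])
    have hx := h x (by simp)
    refine ⟨min d (μ x / 2), lt_min hd (by linarith), ?_⟩
    intro a ha
    rcases List.mem_cons.mp ha with rfl | h2
    · linarith [min_le_right d (μ a / 2)]
    · linarith [min_le_left d (μ x / 2), h1 a h2]

/-- geometric input: failure of closeness gives a bad sequence -/
lemma bad_of_not_close (hiso : ∀ g : G, Isometry fun x : X => g • x) (o : X) (K : ℝ) (k N : ℕ)
    (hN : 0 < N)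
    (wd : Fin 16 → List G) (hwd : ∀ t, (wd t).length = N) (b b' : X → Finset (Fin 16))
    (hs : ∀ x z t, t ∉ b x → t ∉ b' z → ∀ f, IsGeodesicSegment f x ((wd t).prod • z) →
        ∃ s ∈ Set.Icc (0 : ℝ) (dist x ((wd t).prod • z)),
          dist (f s) ((wd t).prod • o) < K)
    (l1 l2 : List G) (as : List (List G ⊕ Fin 16)) (h1 : 0 < l1.length) (h2 : 0 < l2.length)
    (hlen : (l1 ++ ((as.map (Sum.elim id wd)).flatten ++ l2)).length = k)
    (hc : ¬ CloseL o K k (l1 ++ ((as.map (Sum.elim id wd)).flatten ++ l2))) :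
    BadSeq wd (fun p => b (p⁻¹ • o)) (fun z => b' (z • o)) l1.prod l2.prod as := by
  intro us t vs hE
  by_contra hcon
  push Not at hcon
  obtain ⟨hb, hb'⟩ := hcon
  apply hc
  set us' := (us.map (Sum.elim id wd)).flatten with hus
  set vs' := (vs.map (Sum.elim id wd)).flatten with hvs
  have hl : l1 ++ ((as.map (Sum.elim id wd)).flatten ++ l2) =
      (l1 ++ us' ++ wd t) ++ (vs' ++ l2) := by
    simp [hE, us', vs']
  rw [hl] at hlen ⊢
  set P := l1.prod * us'.prod with hP
  set Z := vs'.prod * l2.prod with hZ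
  have hprod : ((l1 ++ us' ++ wd t) ++ (vs' ++ l2)).prod = P * ((wd t).prod * Z) := by
    simp [hP, hZ, mul_assoc]
  have hw := hwd t
  refine ⟨(l1 ++ us' ++ wd t).length, ?_, ?_, ?_⟩
  · simp only [List.length_append]; omega
  · rw [← hlen]; simp only [List.length_append]; omega
  · rw [List.take_left', hprod]
    swap
    · rfl
    intro f hf
    have htr : ∀ y : X, (P * ((wd t).prod * Z)) • y = P • (wd t).prod • Z • y := by
      intro y; simp [mul_smul]
    rw [htr] at hf ⊢
    have hd : dist (P⁻¹ • o) ((wd t).prod • Z • o) = dist o (P • (wd t).prod • Z • o) := by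
      rw [← smul_dist' hiso P, smul_inv_smul]
    have hf' : IsGeodesicSegment (fun τ => P⁻¹ • f τ) (P⁻¹ • o) ((wd t).prod • Z • o) := by
      unfold IsGeodesicSegment
      rw [hd]
      refine ⟨by simp [hf.1], by simp [hf.2.1], ?_⟩
      intro s hs t ht
      simp only [smul_dist' hiso]
      exact hf.2.2 s hs t ht
    obtain ⟨τ, hτ, hlt⟩ := hs (P⁻¹ • o) (Z • o) t hb hb' _ hf'
    rw [hd] at hτ
    refine (Metric.infDist_le_dist_of_mem (Set.mem_image_of_mem f hτ)).trans_lt ?_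
    rw [← smul_dist' hiso P, smul_inv_smul, dist_comm] at hlt
    simpa [hP, mul_smul] using hlt

end fin

/-- Lemma 3.1 (conditioned closeness to the geodesic): with probability
`≥ 1 − K e^{−k/K}` some intermediate point of the random path is `K`-close to
every geodesic from `o` to the endpoint. -/
theorem conditioned_dist_estimate
    {G X : Type*} [Group G] [Countable G] [MetricSpace X] [MulAction G X]
    (o : X) (hgeo : IsGeodesicSpace X)
    (hiso : ∀ g : G, Isometry fun x : X => g • x)
    (hind : HasIndepContracting G o)
    (μ : G → ℝ) (hμ : IsProbMeasure μ) (hne : NonElementary o μ) :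
    ∃ K : ℝ, 0 < K ∧ ∃ ε : ℝ, 0 < ε ∧
      ∀ k : ℕ, 2 < k → ∀ j : ℕ, 1 < j → j < k → ∀ a b c : G,
        ∀ ν : ℕ → G → ℝ,
          (∀ i : ℕ, 2 ≤ i → i ≤ k - 1 → i ≠ j →
            IsProbMeasure (ν i) ∧ (∑' g : G, |ν i g - μ g|) < ε) →
          1 - K * Real.exp (-(k : ℝ) / K) ≤
            ∑' x : {x : Fin k → G // CloseEvent o K x}, tupleWeight k j a b c ν x.1 := by
  classical
  obtain ⟨g, h, hg, hh, hi⟩ := hne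
  obtain ⟨lg, hlg, hgF, hgp⟩ := closure_list hg
  obtain ⟨lh, hlh, hhF, hhp⟩ := closure_list hh
  obtain ⟨m, n, N, K0, b, b', hN, hmn, hb, hb', hs⟩ := schottky hgeo hiso hi lg.length lh.length hlg hlh
  let wd : Fin 16 → List G := fun t => wpow (m t) lh ++ wpow (n t) lg ++ wpow (m t) lh
  have hwdp : ∀ t, (wd t).prod = h ^ m t * g ^ n t * h ^ m t := by
    intro t; simp [wd, wpow_prod, hgp, hhp, mul_assoc]
  have hwd : ∀ t, (wd t).length = N := by
    intro t; rw [← hmn t]; simp [wd, wpow_length, add_assoc]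
  have hF : ∀ t, ∀ s ∈ wd t, s ∈ {a | a ∈ lg ++ lh} := by
    intro t s hs
    simp only [wd, List.mem_append] at hs
    simp only [Set.mem_setOf_eq, List.mem_append]
    rcases hs with (hs | hs) | hs
    · exact Or.inr (wpow_mem hs)
    · exact Or.inl (wpow_mem hs)
    · exact Or.inr (wpow_mem hs)
  obtain ⟨d, hd, hdμ⟩ := exists_delta μ (lg ++ lh) (by
    intro a ha
    rcases List.mem_append.mp ha with h | h
    exacts [hgF a h, hhF a h])
  set β := d ^ N / 2 with hβ
  have hβpos : 0 < β := by positivity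
  have hNr : (0 : ℝ) < N := by exact_mod_cast hN
  set C := 2 * Real.exp (3 * β / (2 * N) + β) with hC
  set K := max (max K0 C) (2 * N / β) + 1 with hK
  have hCpos : 0 < C := by positivity
  have hK0 : K0 ≤ K := by linarith [le_max_left K0 C, le_max_left (max K0 C) (2 * N / β)]
  have hKC : C ≤ K := by linarith [le_max_right K0 C, le_max_left (max K0 C) (2 * N / β)]
  have hKN : 2 * N / β ≤ K := by linarith [le_max_right (max K0 C) (2 * N / β)]
  have hKpos : 0 < K := by linarith
  refine ⟨K, hKpos, d, hd, ?_⟩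
  intro k hk j hj1 hjk a b0 c ν hν
  -- the laws
  let fac : Fin k → G → ℝ := fun i y =>
    if (i : ℕ) + 1 = 1 then (if y = a then (1 : ℝ) else 0)
    else if (i : ℕ) + 1 = j then (if y = b0 then (1 : ℝ) else 0)
    else if (i : ℕ) + 1 = k then (if y = c then (1 : ℝ) else 0)
    else ν ((i : ℕ) + 1) y
  have htw : ∀ x, tupleWeight k j a b0 c ν x = ∏ i, fac i (x i) := fun x => rfl
  have hpt : ∀ e : G, ∑' y, ENNReal.ofReal (if y = e then (1 : ℝ) else 0) = 1 := by
    intro e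
    rw [tsum_eq_single e]
    · simp
    · intro y hy; simp [hy]
  have hνp : ∀ i : Fin k, (i : ℕ) + 1 ≠ 1 → (i : ℕ) + 1 ≠ j → (i : ℕ) + 1 ≠ k →
      IsProbMeasure (ν ((i : ℕ) + 1)) ∧ (∑' g : G, |ν ((i : ℕ) + 1) g - μ g|) < d := by
    intro i h1 h2 h3
    exact hν _ (by omega) (by have := i.2; omega) h2
  have hfac0 : ∀ i y, 0 ≤ fac i y := by
    intro i y
    simp only [fac]
    by_cases h1 : (i : ℕ) + 1 = 1
    · rw [if_pos h1]; split_ifs <;> norm_num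
    rw [if_neg h1]
    by_cases h2 : (i : ℕ) + 1 = j
    · rw [if_pos h2]; split_ifs <;> norm_num
    rw [if_neg h2]
    by_cases h3 : (i : ℕ) + 1 = k
    · rw [if_pos h3]; split_ifs <;> norm_num
    rw [if_neg h3]
    exact (hνp i h1 h2 h3).1.1 y
  let law : Fin k → G → ENNReal := fun i y => ENNReal.ofReal (fac i y)
  have hmass : ∀ i, ∑' y, law i y = 1 := by
    intro i
    simp only [law, fac]
    by_cases h1 : (i : ℕ) + 1 = 1
    · simp only [if_pos h1]; exact hpt a
    simp only [if_neg h1]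
    by_cases h2 : (i : ℕ) + 1 = j
    · simp only [if_pos h2]; exact hpt b0
    simp only [if_neg h2]
    by_cases h3 : (i : ℕ) + 1 = k
    · simp only [if_pos h3]; exact hpt c
    simp only [if_neg h3]
    obtain ⟨p1, p2, p3⟩ := (hνp i h1 h2 h3).1
    rw [← ENNReal.ofReal_tsum_of_nonneg p1 p2, p3, ENNReal.ofReal_one]
  have hlow : ∀ i : Fin k, (i : ℕ) + 1 ≠ 1 → (i : ℕ) + 1 ≠ j → (i : ℕ) + 1 ≠ k →
      ∀ s ∈ {a | a ∈ lg ++ lh}, ENNReal.ofReal d ≤ law i s := by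
    intro i h1 h2 h3 s hs
    obtain ⟨⟨p1, p2, p3⟩, p4⟩ := hνp i h1 h2 h3
    apply ENNReal.ofReal_le_ofReal
    simp only [fac, if_neg h1, if_neg h2, if_neg h3]
    have e1 : |ν ((i : ℕ) + 1) s - μ s| ≤ ∑' g : G, |ν ((i : ℕ) + 1) g - μ g| :=
      (p2.sub hμ.2.1).abs.le_tsum s fun _ _ => abs_nonneg _
    have e2 := hdμ s hs
    have e3 := neg_abs_le (ν ((i : ℕ) + 1) s - μ s)
    linarith
  -- the long side
  obtain ⟨st, ns, hst, hstk, hside, hns⟩ : ∃ st ns : ℕ, 1 ≤ st ∧ st + ns ≤ k - 1 ∧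
      (∀ i, st ≤ i → i < st + ns → i + 1 ≠ 1 ∧ i + 1 ≠ j ∧ i + 1 ≠ k) ∧ k - 3 ≤ 2 * ns := by
    by_cases hc : k - 1 - j ≤ j - 2
    · exact ⟨1, j - 2, le_rfl, by omega, by intro i _ _; omega, by omega⟩
    · exact ⟨j, k - 1 - j, by omega, by omega, by intro i _ _; omega, by omega⟩
  set M := ns / N with hM
  have hMN : M * N ≤ ns := Nat.div_mul_le_self _ _
  set LL := List.ofFn law with hLL
  have hLLlen : LL.length = k := by simp [hLL]
  have hLLmass : ∀ ρ ∈ LL, ∑' y, ρ y = 1 := by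
    intro ρ hρ
    obtain ⟨i, rfl⟩ := (List.mem_ofFn' _ _).mp hρ
    exact hmass i
  let L1 := LL.take st
  let L := (LL.drop st).take (M * N)
  let L2 := (LL.drop st).drop (M * N)
  have hsplit : LL = L1 ++ (L ++ L2) := by
    simp only [L1, L, L2, List.take_append_drop]
  have hL1len : L1.length = st := by
    simp only [L1, List.length_take, hLLlen]; omega
  have hLlen : L.length = M * N := by
    simp only [L, List.length_take, List.length_drop, hLLlen]; omega
  have hL2len : L2.length = k - st - M * N := by
    simp only [L2, List.length_drop, hLLlen]
  let F : List G → ENNReal := fun l => if l.length = k ∧ ¬ CloseL o K0 k l then 1 else 0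
  have hmain : Ex LL F ≤ 2 * (1 - 8 * (ENNReal.ofReal d ^ N / 16)) ^ M := by
    rw [hsplit]
    refine main_prob N {a | a ∈ lg ++ lh} (ENNReal.ofReal d) ENNReal.ofReal_ne_top wd hwd hF M
      (fun p => b (p⁻¹ • o)) (fun z => b' (z • o)) (fun _ => hb _) (fun _ => hb' _) L1 L L2
      ?_ ?_ ?_ ?_ hLlen F ?_ ?_
    · exact fun ρ hρ => hLLmass ρ (List.mem_of_mem_take hρ)
    · exact fun ρ hρ => hLLmass ρ (List.mem_of_mem_drop (List.mem_of_mem_take hρ))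
    · exact fun ρ hρ => hLLmass ρ (List.mem_of_mem_drop (List.mem_of_mem_drop hρ))
    · intro ρ hρ
      obtain ⟨i, hi, rfl⟩ := List.mem_iff_getElem.mp hρ
      have hi' : i < M * N := by rwa [hLlen] at hi
      have hlt : st + i < k := by omega
      have e : L[i] = law ⟨st + i, hlt⟩ := by
        simp [L, hLL]
      rw [e]
      obtain ⟨q1, q2, q3⟩ := hside (st + i) (by omega) (by omega)
      exact hlow ⟨st + i, hlt⟩ q1 q2 q3
    · intro l; simp only [F]; split_ifs <;> simp
    · intro l1 as l2 e1 e2 hne0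
      simp only [F] at hne0
      have hcond := (ite_ne_right_iff.mp hne0).1
      refine bad_of_not_close hiso o K0 k N hN wd hwd b b' ?_ l1 l2 as (by omega) (by omega)
        hcond.1 hcond.2
      intro x z t hx hz f hf
      rw [hwdp] at hf ⊢
      exact hs x z t hx hz f hf
  -- conversion of the bound
  have hbound : 2 * (1 - 8 * (ENNReal.ofReal d ^ N / 16)) ^ M ≤
      ENNReal.ofReal (K * Real.exp (-(k : ℝ) / K)) := by
    have e1 : (8 : ENNReal) * (ENNReal.ofReal d ^ N / 16) = ENNReal.ofReal β := by
      rw [← ENNReal.ofReal_pow hd.le, show (16 : ENNReal) = ENNReal.ofReal 16 by norm_num,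
        ← ENNReal.ofReal_div_of_pos (by norm_num), show (8 : ENNReal) = ENNReal.ofReal 8 by norm_num,
        ← ENNReal.ofReal_mul (by norm_num)]
      congr 1; rw [hβ]; ring
    have e2 : (1 : ENNReal) - ENNReal.ofReal β ≤ ENNReal.ofReal (Real.exp (-β)) := by
      rw [← ENNReal.ofReal_one, ← ENNReal.ofReal_sub _ hβpos.le]
      apply ENNReal.ofReal_le_ofReal
      linarith [Real.add_one_le_exp (-β)]
    rw [e1]
    calc (2 : ENNReal) * (1 - ENNReal.ofReal β) ^ M
        ≤ ENNReal.ofReal 2 * (ENNReal.ofReal (Real.exp (-β))) ^ M := by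
          rw [show (2 : ENNReal) = ENNReal.ofReal 2 by norm_num]
          gcongr
      _ = ENNReal.ofReal (2 * Real.exp (-β) ^ M) := by
          rw [← ENNReal.ofReal_pow (Real.exp_pos _).le, ← ENNReal.ofReal_mul (by norm_num)]
      _ ≤ _ := by
          apply ENNReal.ofReal_le_ofReal
          rw [← Real.exp_nat_mul]
          have f1 : (k : ℝ) - 3 ≤ 2 * (N * (M + 1)) := by
            have g1 : ns < N * (M + 1) := by
              rw [hM]; exact Nat.lt_mul_div_succ ns hN
            have g2 : k ≤ 2 * (N * (M + 1)) + 3 := by omega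
            have : (k : ℝ) ≤ 2 * (N * (M + 1)) + 3 := by exact_mod_cast g2
            linarith
          have f2 : (M : ℝ) * -β ≤ (3 * β / (2 * N) + β) + -(k : ℝ) * (β / (2 * N)) := by
            have : (3 * β / (2 * N) + β) + -(k : ℝ) * (β / (2 * N)) - (M : ℝ) * -β
              = (β / (2 * N)) * (2 * (N * (M + 1)) - ((k : ℝ) - 3)) := by
              field_simp; ring
            have h3 : 0 ≤ (β / (2 * N)) * (2 * (N * (M + 1)) - ((k : ℝ) - 3)) :=
              mul_nonneg (by positivity) (by linarith)
            linarith
          have f3 : -(k : ℝ) * (β / (2 * N)) ≤ -(k : ℝ) / K := by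
            have : 1 / K ≤ β / (2 * N) := by
              rw [div_le_div_iff₀ hKpos (by positivity)]
              rw [div_le_iff₀ hβpos] at hKN
              linarith
            have hk0 : (0 : ℝ) ≤ k := by positivity
            rw [neg_div, neg_mul, neg_le_neg_iff]
            calc (k : ℝ) / K = k * (1 / K) := by ring
              _ ≤ _ := by gcongr
          calc 2 * Real.exp ((M : ℝ) * -β)
              ≤ 2 * Real.exp ((3 * β / (2 * N) + β) + -(k : ℝ) / K) := by
                gcongr; linarith
            _ = C * Real.exp (-(k : ℝ) / K) := by rw [Real.exp_add, hC]; ring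
            _ ≤ _ := by gcongr
  -- total mass
  let W : (Fin k → G) → ENNReal := fun x => ∏ i, law i (x i)
  have hW : ∀ x, ENNReal.ofReal (tupleWeight k j a b0 c ν x) = W x := by
    intro x
    rw [htw, ENNReal.ofReal_prod_of_nonneg fun i _ => hfac0 i _]
  have hW0 : ∀ x, 0 ≤ tupleWeight k j a b0 c ν x := by
    intro x; rw [htw]; exact Finset.prod_nonneg fun i _ => hfac0 i _
  have htot : ∑' x, W x = 1 := by
    have := Ex_ofFn law (fun _ => 1)
    rw [Ex_const _ hLLmass] at this
    simpa [W] using this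
  have hbad : ∑' x : Fin k → G, W x * F (List.ofFn x) ≤
      ENNReal.ofReal (K * Real.exp (-(k : ℝ) / K)) := by
    rw [Ex_ofFn]; exact hmain.trans hbound
  set S : Set (Fin k → G) := {x | CloseEvent o K x}
  have hone : (1 : ENNReal) ≤ ∑' x : S, W x + ENNReal.ofReal (K * Real.exp (-(k : ℝ) / K)) := by
    rw [← htot]
    refine le_trans ?_ (add_le_add_right hbad _)
    rw [tsum_subtype S W, ← ENNReal.tsum_add]
    refine ENNReal.tsum_le_tsum fun x => ?_
    by_cases hx : x ∈ S
    · rw [Set.indicator_of_mem hx]; exact le_self_add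
    · have : F (List.ofFn x) = 1 := by
        simp only [F]
        rw [if_pos]
        refine ⟨by simp, fun hcl => hx ?_⟩
        obtain ⟨l, q1, q2, q3⟩ := hcl
        exact ⟨l, q1, q2, fun f hf => (q3 f hf).trans_le hK0⟩
      rw [this, mul_one]; exact le_add_self
  have hSfin : ∑' x : S, W x ≠ ⊤ := by
    refine ne_top_of_le_ne_top ENNReal.one_ne_top ?_
    rw [← htot]
    exact ENNReal.tsum_comp_le_tsum_of_injective Subtype.val_injective W
  have hreal : ∑' x : S, tupleWeight k j a b0 c ν x.1 = (∑' x : S, W x).toReal := by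
    rw [ENNReal.tsum_toReal_eq]
    · refine tsum_congr fun x => ?_
      rw [← hW, ENNReal.toReal_ofReal (hW0 _)]
    · intro x; rw [← hW]; exact ENNReal.ofReal_ne_top
  change _ ≤ ∑' x : S, tupleWeight k j a b0 c ν x.1
  rw [hreal]
  have hp : 0 ≤ K * Real.exp (-(k : ℝ) / K) := by positivity
  have := ENNReal.toReal_mono (ENNReal.add_ne_top.mpr ⟨hSfin, ENNReal.ofReal_ne_top⟩) hone
  rw [ENNReal.toReal_add hSfin ENNReal.ofReal_ne_top, ENNReal.toReal_ofReal hp,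
    ENNReal.toReal_one] at this
  linarith
end
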